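/- arXiv:math/0503449 — 2 statements merged into one kernel-verified Lean document; each statement's English description precedes it below -/
import Mathlib

section
/- Let n ≥ 2 and let X ⊆ ℂ^n be an open set with a smooth (C^∞) exhaustion function ρ : X → ℝ, and let M ∈ ℝ be such that at each point z of the set {z ∈ X : ρ(z) > M} the Levi form of ρ has at least 2 positive eigenvalues. Let d be a complete metric on X inducing the subspace topology of X. Given ε > 0, 0 < r < 1, and a continuous map f : 𝔻̄ → X which is holomorphic on 𝔻 and satisfies ρ(f(ζ)) > M for all ζ with |ζ| = 1, there exists a holomorphic map g : 𝔻 → X which is proper and satisfies: (i) d(g(ζ), f(ζ)) < ε for all |ζ| < r; (ii) g(0) = f(0); (iii) g′(0) = λ·f′(0) for some λ > 0. (This is the paper's Theorem 2 stated for domains in ℂ^n.) -/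
open Metric

section

variable {E : Type*} [NormedAddCommGroup E] [NormedSpace ℂ E]

theorem exists_taylor_ball {ρ : E → ℝ} {z₀ : E} (h : ContDiffAt ℝ (⊤ : ℕ∞) ρ z₀)
    {ε : ℝ} (hε : 0 < ε) :
    ∃ r₀ > 0, (∀ z ∈ ball z₀ r₀,
        ‖fderiv ℝ ρ z - fderiv ℝ ρ z₀ - fderiv ℝ (fderiv ℝ ρ) z₀ (z - z₀)‖ ≤ ε * ‖z - z₀‖) ∧
      ∀ z ∈ ball z₀ r₀, ∀ y ∈ ball z₀ r₀,
        |ρ y - ρ z - fderiv ℝ ρ z (y - z)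
          - 1 / 2 * fderiv ℝ (fderiv ℝ ρ) z₀ (y - z) (y - z)| ≤ ε * ‖y - z‖ ^ 2 := by
  have hsym := h.isSymmSndFDerivAt (by simpa using WithTop.coe_le_coe.2 (le_top : (2 : ℕ∞) ≤ ⊤))
  have h1 : ContDiffAt ℝ 1 (fderiv ℝ ρ) z₀ :=
    h.fderiv_right (by norm_num; exact WithTop.coe_le_coe.2 (le_top : (2 : ℕ∞) ≤ ⊤))
  have h2 : HasStrictFDerivAt (fderiv ℝ ρ) (fderiv ℝ (fderiv ℝ ρ) z₀) z₀ :=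
    h1.hasStrictFDerivAt (by norm_num)
  set H := fderiv ℝ (fderiv ℝ ρ) z₀ with hH
  have h3 := (hasStrictFDerivAt_iff_isLittleO.1 h2).def hε
  have h4 : ∀ᶠ z in nhds z₀, DifferentiableAt ℝ ρ z := by
    have := (h.of_le (m := 1) (by exact mod_cast le_top)).eventually (by norm_num)
    exact this.mono fun z hz => hz.differentiableAt (by norm_num)
  obtain ⟨r1, hr1, h1'⟩ := Metric.eventually_nhds_iff_ball.1 h4
  rw [nhds_prod_eq] at h3
  obtain ⟨p, hp, q, hq, hpq⟩ := Filter.eventually_prod_iff.1 h3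
  obtain ⟨r2, hr2, h2'⟩ := Metric.eventually_nhds_iff_ball.1 (hp.and hq)
  refine ⟨min r1 r2, lt_min hr1 hr2, fun z hz => ?_, fun z hz y hy => ?_⟩
  · exact hpq (h2' z (ball_subset_ball (min_le_right _ _) hz)).1
      (h2' z₀ (mem_ball_self hr2)).2
  · set s := ball z₀ (min r1 r2) ∩ closedBall z ‖y - z‖ with hs
    have hconv : Convex ℝ s := (convex_ball _ _).inter (convex_closedBall _ _)
    have key := hconv.norm_image_sub_le_of_norm_hasFDerivWithin_le
      (f := fun x => ρ x - fderiv ℝ ρ z (x - z) - 1 / 2 * H (x - z) (x - z))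
      (f' := fun x => fderiv ℝ ρ x - fderiv ℝ ρ z - H (x - z)) (C := ε * ‖y - z‖)
      (x := z) (y := y) ?_ ?_ ⟨hz, by simp⟩ ⟨hy, by simp [dist_eq_norm]⟩
    · simp only [sub_self, map_zero, sub_zero] at key
      rw [Real.norm_eq_abs] at key
      calc _ = |ρ y - (fderiv ℝ ρ z) (y - z) - 1 / 2 * (H (y - z)) (y - z) -
            (ρ z - 1 / 2 * 0)| := by congr 1; ring
        _ ≤ _ := by simpa [pow_two, mul_assoc] using key
    · intro x hx
      have hd := (h1' x (ball_subset_ball (min_le_left _ _) hx.1)).hasFDerivAt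
      have e1 : HasFDerivAt (fun x : E => x - z) (ContinuousLinearMap.id ℝ E) x :=
        (hasFDerivAt_id x).sub_const z
      have e2 := (fderiv ℝ ρ z).hasFDerivAt.comp x e1
      have e3 := H.hasFDerivAt.comp x e1
      have e4 := (e3.clm_apply e1).const_mul (1 / 2 : ℝ)
      refine (((hd.sub e2).sub e4).congr_fderiv ?_).hasFDerivWithinAt
      ext u
      have : H u (x - z) = H (x - z) u := hsym u (x - z)
      simp only [map_sub, sub_apply] at this
      simp
      linarith
    · intro x hx
      have := hpq (h2' x (ball_subset_ball (min_le_right _ _) hx.1)).1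
        (h2' z (ball_subset_ball (min_le_right _ _) hz)).2
      refine this.trans ?_
      gcongr
      simpa [dist_eq_norm] using hx.2
/-- The complex quadratic form whose real part is twice the non-hermitian part of `H`. -/
noncomputable def quadPart (H : E →L[ℝ] E →L[ℝ] ℝ) (v : E) : ℂ :=
  ⟨1 / 2 * (H v v - H (Complex.I • v) (Complex.I • v)), - H v (Complex.I • v)⟩

theorem complex_smul_eq_real_add (y : ℂ) (e : E) :
    y • e = y.re • e + y.im • (Complex.I • e) := by
  conv_lhs => rw [← Complex.re_add_im y]
  rw [add_smul, mul_smul, Complex.coe_smul, Complex.coe_smul]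

theorem hermitian_decomposition (H : E →L[ℝ] E →L[ℝ] ℝ) (hH : ∀ a b, H a b = H b a)
    (v : E) (η : ℂ) :
    1 / 2 * H (η • v) (η • v) =
      (H v v + H (Complex.I • v) (Complex.I • v)) / 4 * ‖η‖ ^ 2
        + 1 / 2 * (η ^ 2 * quadPart H v).re := by
  rw [← Complex.normSq_eq_norm_sq, Complex.normSq_apply, complex_smul_eq_real_add]
  have := hH (Complex.I • v) v
  simp [quadPart, pow_two, this]
  ring

theorem exists_quadPart_eq_zero (H : E →L[ℝ] E →L[ℝ] ℝ) (hH : ∀ a b, H a b = H b a)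
    (e₁ e₂ : E) : ∃ x y : ℂ, (x ≠ 0 ∨ y ≠ 0) ∧ quadPart H (x • e₁ + y • e₂) = 0 := by
  by_cases h2 : quadPart H e₂ = 0
  · exact ⟨0, 1, by simp, by simpa using h2⟩
  · obtain ⟨s, hs⟩ := IsAlgClosed.exists_pow_nat_eq
      (discrim (quadPart H e₂) (⟨H e₁ e₂ - H (Complex.I • e₁) (Complex.I • e₂),
        - H e₁ (Complex.I • e₂) - H (Complex.I • e₁) e₂⟩ : ℂ) (quadPart H e₁))
        (n := 2) (by norm_num)
    obtain ⟨y, hy⟩ := exists_quadratic_eq_zero h2 ⟨s, by rw [← hs, pow_two]⟩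
    refine ⟨1, y, by simp, ?_⟩
    rw [← hy, complex_smul_eq_real_add y, one_smul]
    have h3 := hH e₂ e₁
    have h4 := hH (Complex.I • e₂) e₁
    have h5 := hH e₂ (Complex.I • e₁)
    have h6 := hH (Complex.I • e₂) (Complex.I • e₁)
    have h7 := hH (Complex.I • e₂) e₂
    have h8 : ∀ e : E, Complex.I • (y.im • (Complex.I • e)) = - (y.im • e) := fun e => by
      rw [smul_comm, smul_smul, Complex.I_mul_I]; simp
    have h9 : ∀ e : E, Complex.I • (y.re • e) = y.re • (Complex.I • e) := fun e => smul_comm _ _ _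
    apply Complex.ext <;>
    simp [quadPart, h3, h4, h5, h6, h7, h8, h9] <;> ring

theorem exists_push_vectors (D : E →L[ℝ] ℝ) (H : E →L[ℝ] E →L[ℝ] ℝ)
    (hH : ∀ a b, H a b = H b a) (V : Submodule ℂ E) (hV : Module.finrank ℂ V = 2)
    (hpos : ∀ w ∈ V, w ≠ 0 → 0 < H w w + H (Complex.I • w) (Complex.I • w)) :
    ∃ (v q : E) (c : ℝ), 0 < c ∧ (∀ η : ℂ, D (η • v) = 0) ∧
      ∀ η : ℂ, D (η ^ 2 • q) + 1 / 2 * H (η • v) (η • v) = c * ‖η‖ ^ 2 := by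
  let l : E →ₗ[ℂ] ℂ :=
    { toFun := fun w => ⟨D w, - D (Complex.I • w)⟩
      map_add' := fun a b => by apply Complex.ext <;> simp; ring
      map_smul' := fun y a => by
        have h8 : ∀ e : E, Complex.I • (y.im • (Complex.I • e)) = - (y.im • e) := fun e => by
          rw [smul_comm, smul_smul, Complex.I_mul_I]; simp
        have h9 : Complex.I • (y.re • a) = y.re • (Complex.I • a) := smul_comm _ _ _
        rw [complex_smul_eq_real_add]
        apply Complex.ext <;> simp [h8, h9] <;> ring }
  have hl : ∀ w, D w = (l w).re := fun w => rfl
  suffices h : ∃ v ∈ V, v ≠ 0 ∧ l v = 0 ∧ ∃ q, l q = - quadPart H v / 2 by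
    obtain ⟨v, hv, hv0, hlv, q, hq⟩ := h
    refine ⟨v, q, _, div_pos (hpos v hv hv0) four_pos, fun η => by simp [hl, hlv], fun η => ?_⟩
    rw [hermitian_decomposition H hH, hl, map_smul, hq]
    have : η ^ 2 • (-quadPart H v / 2) = ((-1 / 2 : ℝ) : ℂ) * (η ^ 2 * quadPart H v) := by
      simp; ring
    rw [this, Complex.re_ofReal_mul]
    ring
  have : Module.Finite ℂ V := Module.finite_of_finrank_pos (by omega)
  let b := Module.finBasisOfFinrankEq ℂ V hV
  have hli : ∀ x y : ℂ, x • (b 0 : E) + y • (b 1 : E) = 0 → x = 0 ∧ y = 0 := by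
    intro x y hxy
    refine LinearIndependent.pair_iff.1 (?_ : LinearIndependent ℂ ![b 0, b 1]) x y ?_
    · convert b.linearIndependent using 1
      ext i; fin_cases i <;> rfl
    · exact Subtype.ext (by simpa using hxy)
  have hmem : ∀ x y : ℂ, x • (b 0 : E) + y • (b 1 : E) ∈ V := fun x y =>
    V.add_mem (V.smul_mem _ (b 0).2) (V.smul_mem _ (b 1).2)
  by_cases h0 : l (b 0) = 0 ∧ l (b 1) = 0
  · obtain ⟨x, y, hxy, hq⟩ := exists_quadPart_eq_zero H hH (b 0 : E) (b 1 : E)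
    refine ⟨_, hmem x y, fun h => ?_, by simp [h0.1, h0.2], 0, by simp [hq]⟩
    have := hli x y h
    tauto
  · refine ⟨_, hmem (l (b 1)) (- l (b 0)), fun h => ?_, by simp; ring, ?_⟩
    · have := hli _ _ h
      rw [neg_eq_zero] at this
      tauto
    · have : ∃ u, l u ≠ 0 := by
        by_contra! hc
        exact h0 ⟨hc _, hc _⟩
      obtain ⟨u, hu⟩ := this
      exact ⟨(- quadPart H (l (b 1) • (b 0 : E) + (- l (b 0)) • (b 1 : E)) / 2 / l u) • u, by
        rw [map_smul, smul_eq_mul, div_mul_cancel₀ _ hu]⟩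

end

section

variable {E : Type*} [NormedAddCommGroup E] [NormedSpace ℂ E]

/-- An entire curve `w` through `0` such that, for every `z` near `z₀`, moving from `z` along `w`
raises `ρ` by `κ` (up to the cap `L`) on the unit circle, never lowers it by more than `1 / 2`
on the unit disc, and raises it along suitably chosen radii. -/
structure PushData (ρ : E → ℝ) (X : Set E) (L R κ : ℝ) (z₀ : E) (w : ℂ → E) : Prop where
  diff : Differentiable ℂ w
  zero : w 0 = 0
  lip : ∀ η η' : ℂ, ‖η‖ ≤ 1 → ‖η'‖ ≤ 1 → ‖w η - w η'‖ ≤ ‖η - η'‖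
  mem : ∀ z ∈ X, ‖z - z₀‖ < R → ∀ η : ℂ, ‖η‖ ≤ 1 → z + w η ∈ X
  lower : ∀ z ∈ X, ‖z - z₀‖ < R → ∀ η : ℂ, ‖η‖ ≤ 1 → ρ z - 1 / 2 ≤ ρ (z + w η)
  circle : ∀ z ∈ X, ‖z - z₀‖ < R → ∀ η : ℂ, ‖η‖ = 1 → min (ρ z + κ) L ≤ ρ (z + w η)
  radius : ∀ z ∈ X, ‖z - z₀‖ < R → ∀ z' ∈ X, ‖z' - z₀‖ < R →
    ∀ u u' : ℂ, ‖u‖ = 1 → ‖u'‖ = 1 → ∃ b : ℂ, ‖b‖ = 1 ∧ ∀ s : ℝ, 0 ≤ s → s ≤ 1 →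
      min (ρ z + κ * s ^ 2) L ≤ ρ (z + w (b * u * s)) ∧
      min (ρ z' + κ * s ^ 2) L ≤ ρ (z' + w (b * u' * s))

theorem PushData.mono {ρ : E → ℝ} {X : Set E} {L R κ : ℝ} {z₀ : E} {w : ℂ → E}
    (h : PushData ρ X L R κ z₀ w) {R' κ' : ℝ} {z₁ : E} (hR : ‖z₁ - z₀‖ + R' ≤ R) (hκ : κ' ≤ κ) :
    PushData ρ X L R' κ' z₁ w := by
  have hz : ∀ z, ‖z - z₁‖ < R' → ‖z - z₀‖ < R := fun z hz => by
    have := norm_add_le (z - z₁) (z₁ - z₀)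
    rw [sub_add_sub_cancel] at this
    linarith
  refine ⟨h.diff, h.zero, h.lip, fun z hX hz' => h.mem z hX (hz z hz'),
    fun z hX hz' => h.lower z hX (hz z hz'), fun z hX hz' η hη => ?_,
    fun z hX hz' z' hX' hz'' u u' hu hu' => ?_⟩
  · exact le_trans (by gcongr) (h.circle z hX (hz z hz') η hη)
  · obtain ⟨b, hb, hb'⟩ := h.radius z hX (hz z hz') z' hX' (hz z' hz'') u u' hu hu'
    refine ⟨b, hb, fun s h0 h1 => ⟨le_trans ?_ (hb' s h0 h1).1, le_trans ?_ (hb' s h0 h1).2⟩⟩ <;>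
    gcongr

theorem exists_rotation_re_nonneg (a a' : ℂ) :
    ∃ b : ℂ, ‖b‖ = 1 ∧ 0 ≤ (b * a).re ∧ 0 ≤ (b * a').re := by
  by_cases ha : a = 0
  · rcases le_total 0 a'.re with h | h
    · exact ⟨1, by simp, by simp [ha], by simpa using h⟩
    · exact ⟨-1, by simp, by simp [ha], by simpa using h⟩
  · set b := Complex.I * (starRingEnd ℂ) a / ‖a‖ with hb
    have hn : ‖a‖ ≠ 0 := by simpa using ha
    have hb1 : ‖b‖ = 1 := by simp [hb, hn]
    have hba : (b * a).re = 0 := by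
      have : b * a = Complex.I * ‖a‖ := by
        rw [hb, div_mul_eq_mul_div, mul_assoc, Complex.conj_mul']
        field_simp
      simp [this]
    rcases le_total 0 (b * a').re with h | h
    · exact ⟨b, hb1, hba.ge, h⟩
    · exact ⟨-b, by simpa using hb1, by simp only [neg_mul, Complex.neg_re, hba, neg_zero, le_refl],
        by simpa using h⟩

theorem fderiv_smul_eq_re (D : E →L[ℝ] ℝ) (b : ℂ) (v : E) :
    D (b • v) = (b * ⟨D v, - D (Complex.I • v)⟩).re := by
  rw [complex_smul_eq_real_add]
  simp

set_option maxHeartbeats 1000000 in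
theorem exists_pushData {ρ : E → ℝ} {X : Set E} (hX : IsOpen X) {z₀ : E} (hz₀ : z₀ ∈ X)
    (h : ContDiffAt ℝ (⊤ : ℕ∞) ρ z₀) (V : Submodule ℂ E) (hV : Module.finrank ℂ V = 2)
    (hpos : ∀ w ∈ V, w ≠ 0 → 0 < fderiv ℝ (fderiv ℝ ρ) z₀ w w
      + fderiv ℝ (fderiv ℝ ρ) z₀ (Complex.I • w) (Complex.I • w)) :
    ∃ R > 0, ∃ κ > 0, ∃ w, ∀ L, PushData ρ X L R κ z₀ w := by
  have hsym := h.isSymmSndFDerivAt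
    (by simpa using WithTop.coe_le_coe.2 (le_top : (2 : ℕ∞) ≤ ⊤))
  obtain ⟨v, q, c, hc, hv, hq⟩ := exists_push_vectors (fderiv ℝ ρ z₀)
    (fderiv ℝ (fderiv ℝ ρ) z₀) hsym V hV hpos
  set H := fderiv ℝ (fderiv ℝ ρ) z₀ with hH
  set A := ‖v‖ + 2 * ‖q‖ + 1 with hA
  have hv0 := norm_nonneg v
  have hq0 := norm_nonneg q
  have hA1 : 1 ≤ A := by linarith
  have hA0 : 0 < A := by linarith
  set ε := c / (8 * A ^ 2) with hε
  have hε0 : 0 < ε := by positivity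
  have hεA : ε * A ^ 2 = c / 8 := by rw [hε]; field_simp
  obtain ⟨r₁, hr₁, hD, hT⟩ := exists_taylor_ball h hε0
  obtain ⟨r₂, hr₂, hXr⟩ := Metric.isOpen_iff.1 hX z₀ hz₀
  set r₀ := min r₁ r₂ with hr₀
  have hr₀0 : 0 < r₀ := lt_min hr₁ hr₂
  obtain ⟨t, ht0, ht1, htA, htr, htH, htc⟩ : ∃ t : ℝ, 0 < t ∧ t ≤ 1 ∧ t * A ≤ 1 ∧ t * A ≤ r₀ / 2 ∧
      t * ((‖H‖ + 1) * A ^ 2) ≤ c / 8 ∧ t * c ≤ 1 := by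
    refine ⟨min 1 (min (1 / A) (min (r₀ / 2 / A) (min (c / 8 / ((‖H‖ + 1) * A ^ 2)) (1 / c)))),
      by positivity, min_le_left _ _, ?_, ?_, ?_, ?_⟩
    all_goals rw [← le_div_iff₀ (by positivity)]
    all_goals simp
  obtain ⟨R, hR0, hRr, hRD⟩ : ∃ R : ℝ, 0 < R ∧ R ≤ r₀ / 2 ∧ R * ((‖H‖ + ε) * A) ≤ t * c / 4 := by
    refine ⟨min (r₀ / 2) (t * c / 4 / ((‖H‖ + ε) * A)), by positivity, min_le_left _ _, ?_⟩
    rw [← le_div_iff₀ (by positivity)]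
    simp
  set w : ℂ → E := fun η => (t * η) • v + ((t : ℂ) ^ 2 * η ^ 2) • q with hw
  have hlip : ∀ η η' : ℂ, ‖η‖ ≤ 1 → ‖η'‖ ≤ 1 → ‖w η - w η'‖ ≤ t * A * ‖η - η'‖ := by
    intro η η' h1 h2
    have e : w η - w η' = ((t : ℂ) * (η - η')) • v
        + ((t : ℂ) ^ 2 * ((η + η') * (η - η'))) • q := by
      simp only [hw]
      module
    rw [e]
    refine (norm_add_le _ _).trans ?_
    simp only [norm_smul, norm_mul, norm_pow, Complex.norm_real, Real.norm_eq_abs, abs_of_pos ht0]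
    have h3 : ‖η + η'‖ ≤ 2 := (norm_add_le _ _).trans (by linarith)
    calc t * ‖η - η'‖ * ‖v‖ + t ^ 2 * (‖η + η'‖ * ‖η - η'‖) * ‖q‖
        ≤ t * ‖η - η'‖ * ‖v‖ + (t * 1) * (2 * ‖η - η'‖) * ‖q‖ := by rw [pow_two]; gcongr
      _ ≤ t * A * ‖η - η'‖ := by
        rw [hA]
        have : 0 ≤ t * ‖η - η'‖ := by positivity
        linarith
  have hw0 : w 0 = 0 := by simp [hw]
  have hwn : ∀ η : ℂ, ‖η‖ ≤ 1 → ‖w η‖ ≤ t * A * ‖η‖ := fun η hη => by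
    simpa [hw0] using hlip η 0 hη (by simp)
  have hball : ∀ z, ‖z - z₀‖ < R → ∀ η : ℂ, ‖η‖ ≤ 1 → z + w η ∈ ball z₀ r₀ := by
    intro z hz η hη
    rw [mem_ball_iff_norm]
    calc ‖z + w η - z₀‖ = ‖(z - z₀) + w η‖ := by congr 1; abel
      _ ≤ ‖z - z₀‖ + ‖w η‖ := norm_add_le _ _
      _ ≤ ‖z - z₀‖ + t * A * 1 := by
        gcongr
        exact (hwn η hη).trans (by gcongr)
      _ < r₀ := by linarith
  have hDz : ∀ z, ‖z - z₀‖ < R → ‖fderiv ℝ ρ z - fderiv ℝ ρ z₀‖ * A ≤ t * c / 4 := by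
    intro z hz
    have hz1 : z ∈ ball z₀ r₁ := by
      rw [mem_ball_iff_norm]
      have := min_le_left r₁ r₂
      linarith
    have h1 := hD z hz1
    have h2 := norm_add_le (fderiv ℝ ρ z - fderiv ℝ ρ z₀ - H (z - z₀)) (H (z - z₀))
    rw [sub_add_cancel] at h2
    have h3 := H.le_opNorm (z - z₀)
    have h4 : ‖fderiv ℝ ρ z - fderiv ℝ ρ z₀‖ ≤ R * (‖H‖ + ε) := by
      have : (‖H‖ + ε) * ‖z - z₀‖ ≤ (‖H‖ + ε) * R := by gcongr
      linarith
    calc _ ≤ R * (‖H‖ + ε) * A := by gcongr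
      _ ≤ _ := by linarith
  have hmain : ∀ z, ‖z - z₀‖ < R → ∀ η : ℂ, ‖η‖ ≤ 1 →
      ρ z + t * fderiv ℝ ρ z (η • v) + t ^ 2 * ‖η‖ ^ 2 * (c / 2) ≤ ρ (z + w η) := by
    intro z hz η hη
    have hz1 : z ∈ ball z₀ r₁ := by
      rw [mem_ball_iff_norm]
      have := min_le_left r₁ r₂
      linarith
    have h1 := (abs_le.1 (hT z hz1 (z + w η)
      (ball_subset_ball (min_le_left _ _) (hball z hz η hη)))).1
    rw [add_sub_cancel_left] at h1
    have ew : w η = t • (η • v) + t ^ 2 • (η ^ 2 • q) := by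
      simp only [hw, mul_smul, Complex.coe_smul]
      congr 1
      rw [← Complex.ofReal_pow, Complex.coe_smul]
    set a := η • v with ha
    set b := η ^ 2 • q with hb
    have e1 : fderiv ℝ ρ z (w η) = t * fderiv ℝ ρ z a + t ^ 2 * fderiv ℝ ρ z b := by
      rw [ew]; simp
    have e2 : H (w η) (w η) = t ^ 2 * H a a + t ^ 3 * (2 * H a b) + t ^ 4 * H b b := by
      have : H b a = H a b := hsym b a
      rw [ew]
      simp [this]
      ring
    have h2 := hq η
    have hη0 := norm_nonneg η
    have na : ‖a‖ ≤ ‖η‖ * A := by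
      rw [ha, norm_smul]
      gcongr
      linarith
    have nb : ‖b‖ ≤ ‖η‖ ^ 2 * A := by
      rw [hb, norm_smul, norm_pow]
      gcongr
      linarith
    have nb' : ‖b‖ ≤ ‖η‖ * (A / 2) := by
      rw [hb, norm_smul, norm_pow]
      have : ‖η‖ ^ 2 ≤ ‖η‖ := pow_le_of_le_one hη0 hη two_ne_zero
      gcongr
      linarith
    have na' : ‖a‖ ≤ ‖η‖ * A := by
      rw [ha, norm_smul]
      gcongr
      linarith
    have h3 : fderiv ℝ ρ z₀ b - ‖η‖ ^ 2 * (t * c / 4) ≤ fderiv ℝ ρ z b := by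
      have := (fderiv ℝ ρ z - fderiv ℝ ρ z₀).le_opNorm b
      rw [Real.norm_eq_abs, sub_apply] at this
      have h5 := (abs_le.1 this).1
      have : ‖fderiv ℝ ρ z - fderiv ℝ ρ z₀‖ * ‖b‖ ≤ ‖η‖ ^ 2 * (t * c / 4) := by
        calc _ ≤ ‖fderiv ℝ ρ z - fderiv ℝ ρ z₀‖ * (‖η‖ ^ 2 * A) := by gcongr
          _ = ‖η‖ ^ 2 * (‖fderiv ℝ ρ z - fderiv ℝ ρ z₀‖ * A) := by ring
          _ ≤ _ := by gcongr; exact hDz z hz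
      linarith
    have h4 : |H a b| ≤ ‖H‖ * A ^ 2 / 2 * ‖η‖ ^ 2 := by
      calc |H a b| ≤ ‖H‖ * ‖a‖ * ‖b‖ := H.le_opNorm₂ a b
        _ ≤ ‖H‖ * (‖η‖ * A) * (‖η‖ * (A / 2)) := by gcongr
        _ = _ := by ring
    have h5 : |H b b| ≤ ‖H‖ * A ^ 2 / 2 * ‖η‖ ^ 2 := by
      calc |H b b| ≤ ‖H‖ * ‖b‖ * ‖b‖ := H.le_opNorm₂ b b
        _ ≤ ‖H‖ * (‖η‖ * (A / 2)) * (‖η‖ * (A / 2)) := by gcongr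
        _ = ‖H‖ * A ^ 2 / 4 * ‖η‖ ^ 2 := by ring
        _ ≤ _ := by gcongr; norm_num
    have h6 : ‖w η‖ ^ 2 ≤ t ^ 2 * A ^ 2 * ‖η‖ ^ 2 := by
      have := pow_le_pow_left₀ (norm_nonneg _) (hwn η hη) 2
      rwa [mul_pow, mul_pow] at this
    have h7 : ε * ‖w η‖ ^ 2 ≤ t ^ 2 * ‖η‖ ^ 2 * (c / 8) := by
      calc _ ≤ ε * (t ^ 2 * A ^ 2 * ‖η‖ ^ 2) := by gcongr
        _ = t ^ 2 * ‖η‖ ^ 2 * (ε * A ^ 2) := by ring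
        _ = _ := by rw [hεA]
    have h8 : |t ^ 3 * (2 * H a b) + t ^ 4 * H b b| ≤ t ^ 2 * ‖η‖ ^ 2 * (c / 4) := by
      have h81 : t * (‖H‖ * A ^ 2) ≤ c / 8 := by
        refine le_trans ?_ htH
        gcongr
        linarith
      calc _ ≤ |t ^ 3 * (2 * H a b)| + |t ^ 4 * H b b| := abs_add_le _ _
        _ = t ^ 3 * (2 * |H a b|) + t ^ 3 * (t * |H b b|) := by
          rw [abs_mul, abs_mul, abs_mul, abs_of_pos (pow_pos ht0 3), abs_of_pos (pow_pos ht0 4),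
            abs_of_pos (two_pos : (0 : ℝ) < 2)]
          ring
        _ ≤ t ^ 3 * (2 * (‖H‖ * A ^ 2 / 2 * ‖η‖ ^ 2)) +
            t ^ 3 * (1 * (‖H‖ * A ^ 2 / 2 * ‖η‖ ^ 2)) := by
          gcongr
        _ = t ^ 2 * ‖η‖ ^ 2 * (3 / 2 * (t * (‖H‖ * A ^ 2))) := by ring
        _ ≤ t ^ 2 * ‖η‖ ^ 2 * (3 / 2 * (c / 8)) := by gcongr
        _ ≤ _ := by gcongr; linarith
    have h9 := (abs_le.1 h8).1
    have h10 : t ^ 2 * (fderiv ℝ ρ z₀ b - ‖η‖ ^ 2 * (t * c / 4)) ≤ t ^ 2 * fderiv ℝ ρ z b := by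
      gcongr
    have h11 : t ^ 2 * (‖η‖ ^ 2 * (t * c / 4)) ≤ t ^ 2 * ‖η‖ ^ 2 * (c / 4) := by
      rw [← mul_assoc]
      gcongr
      exact mul_le_of_le_one_left hc.le ht1
    have h12 : t ^ 2 * (fderiv ℝ ρ z₀ b + 1 / 2 * H a a) = t ^ 2 * (c * ‖η‖ ^ 2) := by rw [h2]
    rw [mul_sub] at h10
    rw [e1, e2] at h1
    generalize ‖η‖ ^ 2 = N at *
    rw [mul_add] at h12
    linarith
  have hlin : ∀ z, ‖z - z₀‖ < R → ∀ η : ℂ, ‖η‖ ≤ 1 → - (t * c / 4) ≤ fderiv ℝ ρ z (η • v) := by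
    intro z hz η hη
    have h1 := (fderiv ℝ ρ z - fderiv ℝ ρ z₀).le_opNorm (η • v)
    rw [Real.norm_eq_abs, sub_apply, hv, sub_zero, norm_smul] at h1
    have h2 : ‖fderiv ℝ ρ z - fderiv ℝ ρ z₀‖ * (‖η‖ * ‖v‖) ≤ t * c / 4 := by
      refine le_trans ?_ (hDz z hz)
      gcongr
      calc ‖η‖ * ‖v‖ ≤ 1 * ‖v‖ := by gcongr
        _ ≤ A := by linarith
    linarith [(abs_le.1 h1).1]
  refine ⟨R, hR0, t ^ 2 * c / 4, by positivity, w, fun L => ⟨?_, hw0, ?_, ?_, ?_, ?_, ?_⟩⟩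
  · fun_prop
  · intro η η' h1 h2
    refine (hlip η η' h1 h2).trans ?_
    exact mul_le_of_le_one_left (norm_nonneg _) htA
  · intro z _ hz η hη
    exact hXr (ball_subset_ball (min_le_right _ _) (hball z hz η hη))
  · intro z _ hz η hη
    have h1 := hmain z hz η hη
    have h2 := mul_le_mul_of_nonneg_left (hlin z hz η hη) ht0.le
    have h3 : 0 ≤ t ^ 2 * ‖η‖ ^ 2 * (c / 2) := by positivity
    nlinarith
  · intro z _ hz η hη
    have h1 := hmain z hz η hη.le
    have h2 := mul_le_mul_of_nonneg_left (hlin z hz η hη.le) ht0.le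
    rw [hη] at h1
    refine (min_le_left _ _).trans ?_
    linarith
  · intro z _ hz z' _ hz' u u' hu hu'
    obtain ⟨b, hb, h1, h2⟩ := exists_rotation_re_nonneg
      (⟨fderiv ℝ ρ z (u • v), - fderiv ℝ ρ z (Complex.I • u • v)⟩ : ℂ)
      (⟨fderiv ℝ ρ z' (u' • v), - fderiv ℝ ρ z' (Complex.I • u' • v)⟩ : ℂ)
    rw [← fderiv_smul_eq_re] at h1 h2
    have key : ∀ y, ‖y - z₀‖ < R → ∀ u : ℂ, ‖u‖ = 1 → 0 ≤ fderiv ℝ ρ y (b • u • v) →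
        ∀ s : ℝ, 0 ≤ s → s ≤ 1 → min (ρ y + t ^ 2 * c / 4 * s ^ 2) L ≤ ρ (y + w (b * u * s)) := by
      intro y hy u hu hbu s hs0 hs1
      have hn : ‖b * u * s‖ = s := by simp [hb, hu, abs_of_nonneg hs0]
      have h3 := hmain y hy (b * u * s) (by rw [hn]; exact hs1)
      have h4 : (b * u * (s : ℂ)) • v = s • (b • u • v) := by
        rw [mul_comm, mul_smul, mul_smul, Complex.coe_smul]
      rw [hn, h4, map_smul, smul_eq_mul] at h3
      refine (min_le_left _ _).trans (le_trans ?_ h3)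
      have h5 : 0 ≤ t * (s * fderiv ℝ ρ y (b • u • v)) := by positivity
      have h6 : 0 ≤ t ^ 2 * c * s ^ 2 := by positivity
      linarith
    exact ⟨b, hb, fun s hs0 hs1 => ⟨key z hz u hu h1 s hs0 hs1, key z' hz' u' hu' h2 s hs0 hs1⟩⟩

end

section

variable {E : Type*} [NormedAddCommGroup E] [NormedSpace ℂ E]

theorem exists_uniform_nhds_of_compact {E : Type*} [NormedAddCommGroup E] {X K : Set E}
    (hX : IsOpen X) (hK : IsCompact K) (hKX : K ⊆ X) {ρ : E → ℝ}
    (hρ : ContinuousOn ρ X) {τ : ℝ} (hτ : 0 < τ) :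
    ∃ ε > 0, ∀ x ∈ K, ∀ y, ‖y - x‖ < ε → y ∈ X ∧ |ρ y - ρ x| < τ := by
  have h := hK.eventually_forall_of_forall_eventually (x₀ := (0 : E))
    (P := fun v x => x + v ∈ X ∧ |ρ (x + v) - ρ x| < τ) ?_
  · obtain ⟨ε, hε, h'⟩ := Metric.eventually_nhds_iff_ball.1 h
    refine ⟨ε, hε, fun x hx y hy => ?_⟩
    have := h' (y - x) (by simpa using hy) x hx
    simpa using this
  · intro x hx
    have h1 : Filter.Tendsto (fun p : E × E => p.2 + p.1) (nhds (0, x)) (nhds x) := by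
      have : Continuous (fun p : E × E => p.2 + p.1) := by fun_prop
      simpa using this.tendsto (0, x)
    have h2 : Filter.Tendsto (fun p : E × E => p.2) (nhds (0, x)) (nhds x) :=
      continuous_snd.tendsto (0, x)
    have hc := hρ.continuousAt (hX.mem_nhds (hKX hx))
    have h3 := ((hc.tendsto.comp h1).sub (hc.tendsto.comp h2)).abs
    rw [sub_self, abs_zero] at h3
    exact (h1.eventually (hX.mem_nhds (hKX hx))).and (h3.eventually (gt_mem_nhds hτ))

theorem exists_uniform_pushData {X : Set E} (hX : IsOpen X) {ρ : E → ℝ}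
    (hρ : ContDiffOn ℝ (⊤ : ℕ∞) ρ X) (hexh : ∀ c : ℝ, IsCompact {z ∈ X | ρ z ≤ c}) {M : ℝ}
    (hLevi : ∀ z ∈ X, M < ρ z → ∃ V : Submodule ℂ E, Module.finrank ℂ V = 2 ∧
      ∀ w ∈ V, w ≠ 0 → 0 < fderiv ℝ (fderiv ℝ ρ) z w w
        + fderiv ℝ (fderiv ℝ ρ) z (Complex.I • w) (Complex.I • w))
    {m : ℝ} (hm : M < m) (L : ℝ) :
    ∃ R > 0, ∃ κ > 0, ∀ z₀ ∈ X, m ≤ ρ z₀ → ∃ w, PushData ρ X L R κ z₀ w := by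
  obtain ⟨R₁, hR₁, κ, hκ, h⟩ : ∃ R > 0, ∃ κ > 0, ∀ z₀ ∈ {z ∈ X | ρ z ≤ L + 1}, m ≤ ρ z₀ →
      ∃ w, PushData ρ X L R κ z₀ w := by
    refine (hexh (L + 1)).induction_on (p := fun s => ∃ R > 0, ∃ κ > 0, ∀ z₀ ∈ s, m ≤ ρ z₀ →
      ∃ w, PushData ρ X L R κ z₀ w) ⟨1, one_pos, 1, one_pos, by simp⟩ ?_ ?_ ?_
    · rintro s t hst ⟨R, hR, κ, hκ, h⟩
      exact ⟨R, hR, κ, hκ, fun z hz => h z (hst hz)⟩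
    · rintro s t ⟨R, hR, κ, hκ, h⟩ ⟨R', hR', κ', hκ', h'⟩
      refine ⟨min R R', lt_min hR hR', min κ κ', lt_min hκ hκ', ?_⟩
      rintro z (hz | hz) hmz
      · obtain ⟨w, hw⟩ := h z hz hmz
        exact ⟨w, hw.mono (by simp) (min_le_left _ _)⟩
      · obtain ⟨w, hw⟩ := h' z hz hmz
        exact ⟨w, hw.mono (by simp) (min_le_right _ _)⟩
    · rintro z ⟨hz, -⟩
      have hc : ContDiffAt ℝ (⊤ : ℕ∞) ρ z := hρ.contDiffAt (hX.mem_nhds hz)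
      by_cases hMz : M < ρ z
      · obtain ⟨V, hV, hpos⟩ := hLevi z hz hMz
        obtain ⟨R, hR, κ, hκ, w, hw⟩ := exists_pushData hX hz hc V hV hpos
        refine ⟨ball z (R / 2), mem_nhdsWithin_of_mem_nhds (ball_mem_nhds _ (half_pos hR)),
          R / 2, half_pos hR, κ, hκ, fun z' hz' _ => ⟨w, (hw L).mono ?_ le_rfl⟩⟩
        rw [mem_ball_iff_norm] at hz'
        linarith
      · refine ⟨{z' | ρ z' < m}, mem_nhdsWithin_of_mem_nhds
          (hc.continuousAt.eventually (gt_mem_nhds (by linarith))),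
          1, one_pos, 1, one_pos, fun z' hz' hm' => absurd hm' (not_le.2 hz')⟩
  obtain ⟨R₂, hR₂, h₂⟩ := exists_uniform_nhds_of_compact hX (hexh L) (fun z hz => hz.1)
    hρ.continuousOn one_pos
  refine ⟨min R₁ R₂, lt_min hR₁ hR₂, κ, hκ, fun z₀ hz₀ hmz => ?_⟩
  by_cases hL : ρ z₀ ≤ L + 1
  · obtain ⟨w, hw⟩ := h z₀ ⟨hz₀, hL⟩ hmz
    exact ⟨w, hw.mono (by simp) le_rfl⟩
  · have key : ∀ z ∈ X, ‖z - z₀‖ < min R₁ R₂ → L ≤ ρ z := by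
      intro z hz hzz
      by_contra! hlt
      have := h₂ z ⟨hz, hlt.le⟩ z₀ (by
        rw [norm_sub_rev]
        exact hzz.trans_le (min_le_right _ _))
      linarith [(abs_lt.1 this.2).2]
    refine ⟨fun _ => 0, by fun_prop, rfl, by simp, fun z hz _ η _ => by simpa using hz, ?_, ?_, ?_⟩
    · intro z _ _ η _
      simp
    · intro z hz hzz η _
      simpa using Or.inr (key z hz hzz)
    · intro z hz hzz z' hz' hzz' u u' _ _
      exact ⟨1, by simp, fun s _ _ => ⟨by simpa using Or.inr (key z hz hzz),
        by simpa using Or.inr (key z' hz' hzz')⟩⟩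

end

section

variable {E : Type*} [NormedAddCommGroup E] [NormedSpace ℂ E]

/-- A closed disc in `X`, holomorphic inside and continuous up to the boundary. -/
structure IsDisc (X : Set E) (f : ℂ → E) : Prop where
  cont : ContinuousOn f (closedBall 0 1)
  diff : DifferentiableOn ℂ f (ball 0 1)
  mem : ∀ ζ ∈ closedBall (0 : ℂ) 1, f ζ ∈ X

/-- A multiplier on the closed disc: bounded by one and holomorphic inside. -/
structure IsMultiplier (k : ℂ → ℂ) : Prop where
  cont : ContinuousOn k (closedBall 0 1)
  diff : DifferentiableOn ℂ k (ball 0 1)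
  le_one : ∀ ζ ∈ closedBall (0 : ℂ) 1, ‖k ζ‖ ≤ 1

/-- The disc `f` pushed along the curves `w j`, with parameters `c j * (ζ ^ 2 * k j ζ)`. -/
def pushDisc (f : ℂ → E) {J : ℕ} (w : Fin J → ℂ → E) (c : Fin J → ℂ) (k : Fin J → ℂ → ℂ)
    (ζ : ℂ) : E :=
  f ζ + ∑ j, w j (c j * (ζ ^ 2 * k j ζ))

variable {f : ℂ → E} {J : ℕ} {w : Fin J → ℂ → E} {c : Fin J → ℂ} {k : Fin J → ℂ → ℂ}

theorem norm_push_parameter_le (hc : ∀ j, ‖c j‖ = 1) (j : Fin J) {ζ : ℂ} (hζ : ‖ζ‖ ≤ 1) :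
    ‖c j * (ζ ^ 2 * k j ζ)‖ ≤ ‖k j ζ‖ := by
  rw [norm_mul, norm_mul, norm_pow, hc, one_mul]
  exact mul_le_of_le_one_left (norm_nonneg _) (pow_le_one₀ (norm_nonneg _) hζ)

theorem continuousOn_pushDisc (hf : ContinuousOn f (closedBall 0 1))
    (hw : ∀ j, Differentiable ℂ (w j)) (hk : ∀ j, IsMultiplier (k j)) :
    ContinuousOn (pushDisc f w c k) (closedBall 0 1) := by
  unfold pushDisc
  refine hf.add (continuousOn_finsetSum _ fun j _ => ?_)
  exact (hw j).continuous.comp_continuousOn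
    (continuousOn_const.mul ((continuousOn_id.pow 2).mul (hk j).cont))

theorem differentiableOn_pushDisc (hf : DifferentiableOn ℂ f (ball 0 1))
    (hw : ∀ j, Differentiable ℂ (w j)) (hk : ∀ j, IsMultiplier (k j)) :
    DifferentiableOn ℂ (pushDisc f w c k) (ball 0 1) := by
  unfold pushDisc
  refine hf.add (DifferentiableOn.fun_sum fun j _ => ?_)
  exact (hw j).comp_differentiableOn
    (((differentiableOn_id.pow 2).mul (hk j).diff).const_mul _)

theorem pushDisc_zero {E : Type*} [NormedAddCommGroup E] {f : ℂ → E} {w : Fin J → ℂ → E}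
    (hw0 : ∀ j, w j 0 = 0) : pushDisc f w c k 0 = f 0 := by
  simp [pushDisc, hw0]

theorem deriv_pushDisc (hf : DifferentiableOn ℂ f (ball 0 1))
    (hw : ∀ j, Differentiable ℂ (w j)) (hk : ∀ j, IsMultiplier (k j)) :
    deriv (pushDisc f w c k) 0 = deriv f 0 := by
  have h0 : ball (0 : ℂ) 1 ∈ nhds 0 := ball_mem_nhds _ one_pos
  have h1 : HasDerivAt f (deriv f 0) 0 := (hf.differentiableAt h0).hasDerivAt
  have h2 : ∀ j, HasDerivAt (fun ζ => w j (c j * (ζ ^ 2 * k j ζ))) 0 0 := by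
    intro j
    have h3 := ((hk j).diff.differentiableAt h0).hasDerivAt
    have h4 : HasDerivAt (fun ζ : ℂ => c j * (ζ ^ 2 * k j ζ)) 0 0 := by
      have := (((hasDerivAt_id (0 : ℂ)).pow 2).mul h3).const_mul (c j)
      simpa using this
    have h5 := ((hw j) (c j * (0 ^ 2 * k j 0))).hasDerivAt.scomp (0 : ℂ) h4
    rw [zero_smul] at h5
    exact h5
  have := h1.add (HasDerivAt.fun_sum fun j (_ : j ∈ Finset.univ) => h2 j)
  simp only [Finset.sum_const_zero, add_zero] at this
  exact this.deriv

theorem norm_push_le {E : Type*} [NormedAddCommGroup E] {w : Fin J → ℂ → E}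
    (hw0 : ∀ j, w j 0 = 0)
    (hlip : ∀ j η η', ‖η‖ ≤ 1 → ‖η'‖ ≤ 1 → ‖w j η - w j η'‖ ≤ ‖η - η'‖)
    (hc : ∀ j, ‖c j‖ = 1) (hk : ∀ j, IsMultiplier (k j)) (j : Fin J) {ζ : ℂ} (hζ : ‖ζ‖ ≤ 1) :
    ‖w j (c j * (ζ ^ 2 * k j ζ))‖ ≤ ‖k j ζ‖ := by
  have h1 := norm_push_parameter_le (k := k) hc j hζ
  have h2 := hlip j (c j * (ζ ^ 2 * k j ζ)) 0
    (h1.trans ((hk j).le_one ζ (by simpa using hζ))) (by simp)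
  rw [hw0, sub_zero, sub_zero] at h2
  exact h2.trans h1

theorem norm_pushDisc_sub_le {E : Type*} [NormedAddCommGroup E] {f : ℂ → E}
    {w : Fin J → ℂ → E} (hw0 : ∀ j, w j 0 = 0)
    (hlip : ∀ j η η', ‖η‖ ≤ 1 → ‖η'‖ ≤ 1 → ‖w j η - w j η'‖ ≤ ‖η - η'‖)
    (hc : ∀ j, ‖c j‖ = 1) (hk : ∀ j, IsMultiplier (k j)) {ζ : ℂ} (hζ : ‖ζ‖ ≤ 1) {ε : ℝ}
    (h : ∀ j, ‖k j ζ‖ ≤ ε) : ‖pushDisc f w c k ζ - f ζ‖ ≤ J * ε := by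
  rw [pushDisc, add_sub_cancel_left]
  refine (norm_sum_le_of_le _ fun j _ => (norm_push_le hw0 hlip hc hk j hζ).trans (h j)).trans ?_
  simp

theorem norm_pushDisc_sub_single_le {E : Type*} [NormedAddCommGroup E] {f : ℂ → E}
    {w : Fin J → ℂ → E} (hw0 : ∀ j, w j 0 = 0)
    (hlip : ∀ j η η', ‖η‖ ≤ 1 → ‖η'‖ ≤ 1 → ‖w j η - w j η'‖ ≤ ‖η - η'‖)
    (hc : ∀ j, ‖c j‖ = 1) (hk : ∀ j, IsMultiplier (k j)) {ζ : ℂ} (hζ : ‖ζ‖ ≤ 1) {ε : ℝ}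
    (hε : 0 ≤ ε) (j : Fin J) (h : ∀ i, i ≠ j → ‖k i ζ‖ ≤ ε) :
    ‖pushDisc f w c k ζ - (f ζ + w j (c j * (ζ ^ 2 * k j ζ)))‖ ≤ J * ε := by
  rw [pushDisc, ← Finset.add_sum_erase _ _ (Finset.mem_univ j), add_sub_add_left_eq_sub,
    add_sub_cancel_left]
  refine (norm_sum_le_of_le _ fun i hi => (norm_push_le hw0 hlip hc hk i hζ).trans
    (h i (Finset.ne_of_mem_erase hi))).trans ?_
  rw [Finset.sum_const, nsmul_eq_mul]
  gcongr
  simp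

end

theorem exists_spike {s ε β x₀ : ℝ} (hs : 0 < s) (hs1 : s < 1) (hε : 0 < ε) (hβ : 0 < β)
    (hx₀ : 0 < x₀) : ∃ d₀ > 0, ∀ d, 0 < d → d < d₀ → ∃ S : ℂ → ℂ, IsMultiplier S ∧
      ∀ ζ : ℂ, ‖ζ‖ ≤ 1 → ‖S ζ - ‖S ζ‖‖ ≤ β ∧ (‖1 - ζ‖ ≤ d → s ≤ ‖S ζ‖) ∧
        (d ≤ ‖1 - ζ‖ → ‖S ζ‖ ≤ 2 * s) ∧ (x₀ ≤ ‖1 - ζ‖ → ‖S ζ‖ ≤ ε) := by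
  set α := min 1 (β / 4) with hα
  have hα0 : 0 < α := by positivity
  have hα1 : α ≤ 1 := min_le_left _ _
  have hαβ : α * 4 ≤ β := by
    have := min_le_right 1 (β / 4)
    linarith
  set C := s ^ (-1 / α) - 1 with hC
  have hC1 : (1 + C) ^ (-α) = s := by
    rw [hC, add_sub_cancel, ← Real.rpow_mul hs.le]
    have : -1 / α * -α = 1 := by field_simp
    rw [this, Real.rpow_one]
  have hC0 : 0 < C := by
    have : 1 < s ^ (-1 / α) := Real.one_lt_rpow_of_pos_of_lt_one_of_neg hs hs1
      (div_neg_of_neg_of_pos (by norm_num) hα0)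
    linarith
  refine ⟨C * x₀ * ε ^ (1 / α), by positivity, fun d hd hdd => ?_⟩
  set A := C / d with hA
  have hA0 : 0 < A := by positivity
  have hAd : A * d = C := by rw [hA]; field_simp
  have hre : ∀ ζ : ℂ, ‖ζ‖ ≤ 1 → 1 ≤ (1 + (A : ℂ) * (1 - ζ)).re := by
    intro ζ hζ
    have h1 := Complex.re_le_norm ζ
    simp
    nlinarith
  have hslit : ∀ ζ : ℂ, ‖ζ‖ ≤ 1 → (1 + (A : ℂ) * (1 - ζ)) ∈ Complex.slitPlane := fun ζ hζ =>
    Or.inl (one_pos.trans_le (hre ζ hζ))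
  have hnorm : ∀ ζ : ℂ, ‖(1 + (A : ℂ) * (1 - ζ)) ^ ((-α : ℝ) : ℂ)‖ =
      ‖1 + (A : ℂ) * (1 - ζ)‖ ^ (-α) := fun ζ => Complex.norm_cpow_real _ _
  have h1W : ∀ ζ : ℂ, ‖ζ‖ ≤ 1 → 1 ≤ ‖1 + (A : ℂ) * (1 - ζ)‖ := fun ζ hζ =>
    (hre ζ hζ).trans (Complex.re_le_norm _)
  have hAW : ∀ ζ : ℂ, ‖ζ‖ ≤ 1 → A * ‖1 - ζ‖ ≤ ‖1 + (A : ℂ) * (1 - ζ)‖ := by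
    intro ζ hζ
    have h0 : A * ‖1 - ζ‖ = ‖(A : ℂ) * (1 - ζ)‖ := by
      rw [norm_mul, Complex.norm_real, Real.norm_of_nonneg hA0.le]
    rw [h0]
    refine abs_le_of_sq_le_sq' ?_ (norm_nonneg _) |>.2
    rw [← Complex.normSq_eq_norm_sq, ← Complex.normSq_eq_norm_sq, Complex.normSq_apply,
      Complex.normSq_apply]
    have h1 := hre ζ hζ
    simp only [Complex.add_re, Complex.add_im, Complex.one_re, Complex.one_im, zero_add] at *
    nlinarith
  refine ⟨fun ζ => (1 + (A : ℂ) * (1 - ζ)) ^ ((-α : ℝ) : ℂ), ⟨?_, ?_, ?_⟩, fun ζ hζ =>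
    ⟨?_, ?_, ?_, ?_⟩⟩
  · refine ContinuousOn.cpow (by fun_prop) continuousOn_const fun ζ hζ =>
      hslit ζ (by simpa using hζ)
  · refine DifferentiableOn.cpow (by fun_prop) (differentiableOn_const _) fun ζ hζ =>
      hslit ζ (by simpa using (ball_subset_closedBall hζ))
  · intro ζ hζ
    rw [hnorm]
    exact Real.rpow_le_one_of_one_le_of_nonpos (h1W ζ (by simpa using hζ)) (by linarith)
  · dsimp only
    set W := 1 + (A : ℂ) * (1 - ζ) with hW
    have hW0 : W ≠ 0 := Complex.slitPlane_ne_zero (hslit ζ hζ)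
    have e1 : W ^ ((-α : ℝ) : ℂ) = ‖W ^ ((-α : ℝ) : ℂ)‖ *
        Complex.exp (Complex.I * ((-α * W.arg : ℝ) : ℂ)) := by
      rw [Complex.cpow_def_of_ne_zero hW0, Complex.norm_exp, Complex.ofReal_exp, ← Complex.exp_add]
      congr 1
      apply Complex.ext <;> simp [Complex.log_re, Complex.log_im]
      ring
    have e2 : W ^ ((-α : ℝ) : ℂ) - ‖W ^ ((-α : ℝ) : ℂ)‖ = ‖W ^ ((-α : ℝ) : ℂ)‖ *
        (Complex.exp (Complex.I * ((-α * W.arg : ℝ) : ℂ)) - 1) := by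
      conv_lhs => rw [e1]
      simp [Complex.norm_exp]
      ring
    rw [e2, norm_mul, Complex.norm_real, norm_norm]
    have h1 : ‖W ^ ((-α : ℝ) : ℂ)‖ ≤ 1 := by
      rw [Complex.norm_cpow_real]
      exact Real.rpow_le_one_of_one_le_of_nonpos (h1W ζ hζ) (by linarith)
    have h2 := Real.norm_exp_I_mul_ofReal_sub_one_le (x := -α * W.arg)
    have h3 := Complex.abs_arg_le_pi W
    have h4 := Real.pi_le_four
    calc _ ≤ 1 * (α * 4) := by
          gcongr
          refine h2.trans ?_
          rw [norm_mul, norm_neg, Real.norm_of_nonneg hα0.le, Real.norm_eq_abs]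
          gcongr
          linarith
      _ ≤ β := by linarith
  · intro hle
    dsimp only
    rw [hnorm, ← hC1]
    refine Real.rpow_le_rpow_of_nonpos (one_pos.trans_le (h1W ζ hζ)) ?_ (by linarith)
    refine (norm_add_le _ _).trans ?_
    rw [norm_one, norm_mul, Complex.norm_real, Real.norm_of_nonneg hA0.le, ← hAd]
    gcongr
  · intro hle
    dsimp only
    rw [hnorm]
    have h1 : (1 + C) / 2 ≤ ‖1 + (A : ℂ) * (1 - ζ)‖ := by
      have h2 := h1W ζ hζ
      have h3 := hAW ζ hζ
      have : C ≤ A * ‖1 - ζ‖ := by rw [← hAd]; gcongr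
      linarith
    calc _ ≤ ((1 + C) / 2) ^ (-α) :=
          Real.rpow_le_rpow_of_nonpos (by positivity) h1 (by linarith)
      _ = 2 ^ α * s := by
        rw [Real.div_rpow (by positivity) (by norm_num), hC1, Real.rpow_neg (by norm_num)]
        field_simp
      _ ≤ 2 ^ (1 : ℝ) * s := by gcongr; norm_num
      _ = 2 * s := by rw [Real.rpow_one]
  · intro hle
    dsimp only
    rw [hnorm]
    have h1 : ε ^ (-1 / α) ≤ ‖1 + (A : ℂ) * (1 - ζ)‖ := by
      refine le_trans ?_ (hAW ζ hζ)
      have h2 : ε ^ (-1 / α) ≤ A * x₀ := by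
        rw [hA, neg_div, Real.rpow_neg hε.le, inv_le_iff_one_le_mul₀ (by positivity)]
        rw [div_mul_eq_mul_div, div_mul_eq_mul_div, one_le_div hd]
        exact hdd.le
      exact h2.trans (by gcongr)
    calc _ ≤ (ε ^ (-1 / α)) ^ (-α) :=
          Real.rpow_le_rpow_of_nonpos (by positivity) h1 (by linarith)
      _ = ε := by
        rw [← Real.rpow_mul hε.le]
        have : -1 / α * -α = 1 := by field_simp
        rw [this, Real.rpow_one]

theorem re_mul_conj_nonneg_of_sq_re_nonneg {a b : ℂ} (ha : 0 ≤ a.re) (hb : 0 ≤ b.re)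
    (ha2 : 0 ≤ (a ^ 2).re) (hb2 : 0 ≤ (b ^ 2).re) : 0 ≤ (a * (starRingEnd ℂ) b).re := by
  simp only [pow_two, Complex.mul_re, Complex.conj_re, Complex.conj_im] at *
  have h1 : |a.im| ≤ a.re := abs_le_of_sq_le_sq (by linarith) ha
  have h2 : |b.im| ≤ b.re := abs_le_of_sq_le_sq (by linarith) hb
  have h3 : |a.im * b.im| ≤ a.re * b.re := by rw [abs_mul]; gcongr
  linarith [(abs_le.1 h3).1]

/-- For `T ^ 2` in the closed lower half plane and `T` in a rotated half plane, `T` lies in the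
right half plane. -/
theorem re_nonneg_of_sq_im_nonpos {c s : ℝ} (hc : 0 < c) (hs : 0 < s) {T : ℂ}
    (h1 : 0 ≤ ((⟨c, s⟩ : ℂ) * T).re) (h2 : (T ^ 2).im ≤ 0) : 0 ≤ T.re := by
  simp only [pow_two, Complex.mul_re, Complex.mul_im] at h1 h2
  by_contra! h
  have h3 : 0 ≤ T.im := by nlinarith
  nlinarith [mul_pos hc (neg_pos.2 h), mul_nonneg hs.le h3]

theorem normSq_add_eq (a b : ℂ) : ‖a + b‖ ^ 2 =
    ‖a ^ 2‖ + ‖b ^ 2‖ + 2 * (a * (starRingEnd ℂ) b).re := by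
  rw [norm_pow, norm_pow, ← Complex.normSq_eq_norm_sq, ← Complex.normSq_eq_norm_sq,
    ← Complex.normSq_eq_norm_sq, Complex.normSq_add]

theorem normSq_sub_eq (a b : ℂ) : ‖a - b‖ ^ 2 =
    ‖a ^ 2‖ + ‖b ^ 2‖ - 2 * (a * (starRingEnd ℂ) b).re := by
  rw [norm_pow, norm_pow, ← Complex.normSq_eq_norm_sq, ← Complex.normSq_eq_norm_sq,
    ← Complex.normSq_eq_norm_sq, Complex.normSq_sub]

theorem cayley_im_eq_zero {a b : ℂ} (h : (a * (starRingEnd ℂ) b).im = 0) :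
    ((a - b) / (a + b)).im = 0 := by
  simp only [Complex.mul_im, Complex.conj_re, Complex.conj_im] at h
  rw [Complex.div_im]
  simp only [Complex.sub_im, Complex.add_re, Complex.sub_re, Complex.add_im]
  rw [← sub_div]
  have : (a.im - b.im) * (a.re + b.re) - (a.re - b.re) * (a.im + b.im) = 0 := by linarith
  rw [this, zero_div]

theorem exists_cap {φ : ℝ} (hφ0 : 0 < φ) (hφ1 : φ < Real.pi) :
    ∃ H : ℂ → ℂ, IsMultiplier H ∧ ∀ ζ : ℂ, ‖ζ‖ ≤ 1 →
      (‖H ζ‖ = 1 → ‖ζ‖ = 1 ∧ Real.cos φ ≤ ζ.re) ∧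
      (‖ζ‖ = 1 → Real.cos φ ≤ ζ.re → ‖H ζ‖ = 1) ∧
      (‖ζ‖ = 1 → ζ.re ≤ Real.cos φ → (H ζ).im = 0) := by
  obtain ⟨c, s, hc, hs, hcs, hC⟩ : ∃ c s : ℝ, 0 < c ∧ 0 < s ∧ c ^ 2 + s ^ 2 = 1 ∧
      Real.cos φ = c ^ 2 - s ^ 2 := by
    refine ⟨Real.cos (φ / 2), Real.sin (φ / 2), Real.cos_pos_of_mem_Ioo ⟨by linarith, by linarith⟩,
      Real.sin_pos_of_pos_of_lt_pi (by linarith) (by linarith), Real.cos_sq_add_sin_sq _, ?_⟩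
    have := Real.cos_two_mul' (φ / 2)
    rwa [mul_div_cancel₀ _ (two_ne_zero' ℝ)] at this
  rw [hC]
  set κ : ℂ := ⟨c, s⟩ with hκ
  set κ' : ℂ := ⟨c, -s⟩ with hκ'
  have hκκ : κ * κ' = 1 := by apply Complex.ext <;> simp [hκ, hκ'] <;> nlinarith
  have hconj : (starRingEnd ℂ) κ = κ' := by apply Complex.ext <;> simp [hκ, hκ']
  have hconj' : (starRingEnd ℂ) κ' = κ := by rw [← hconj, Complex.conj_conj]
  have hκn : ‖κ‖ = 1 := by
    rw [← sq_eq_sq₀ (norm_nonneg _) zero_le_one, ← Complex.normSq_eq_norm_sq, Complex.normSq_apply,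
      hκ]
    nlinarith
  have hκn' : ‖κ'‖ = 1 := by rw [← hconj, Complex.norm_conj, hκn]
  set A : ℂ → ℂ := fun ζ => 1 - ζ * κ ^ 2 with hA
  set B : ℂ → ℂ := fun ζ => 1 - ζ * κ' ^ 2 with hB
  have hre : ∀ q : ℂ, ‖q‖ = 1 → ∀ ζ : ℂ, (ζ * q ^ 2).re ≤ ‖ζ‖ := fun q hq ζ =>
    (Complex.re_le_norm _).trans (by simp [hq])
  have hAre : ∀ ζ : ℂ, 1 - ‖ζ‖ ≤ (A ζ).re := fun ζ => by
    simp only [hA, Complex.sub_re, Complex.one_re]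
    linarith [hre κ hκn ζ]
  have hBre : ∀ ζ : ℂ, 1 - ‖ζ‖ ≤ (B ζ).re := fun ζ => by
    simp only [hB, Complex.sub_re, Complex.one_re]
    linarith [hre κ' hκn' ζ]
  set a : ℂ → ℂ := fun ζ => A ζ ^ (2⁻¹ : ℂ) with ha
  set b₀ : ℂ → ℂ := fun ζ => B ζ ^ (2⁻¹ : ℂ) with hb₀
  have hsq : ∀ z : ℂ, (z ^ (2⁻¹ : ℂ)) ^ 2 = z := fun z => by
    exact Complex.cpow_nat_inv_pow z two_ne_zero
  have hsre : ∀ z : ℂ, 0 ≤ (z ^ (2⁻¹ : ℂ)).re := fun z => by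
    rw [Complex.cpow_inv_two_re]; positivity
  have ha2 : ∀ ζ, a ζ ^ 2 = A ζ := fun ζ => hsq _
  have hb2 : ∀ ζ, b₀ ζ ^ 2 = B ζ := fun ζ => hsq _
  set T : ℂ → ℂ := fun ζ => a ζ * (starRingEnd ℂ) (κ * b₀ ζ) with hT
  have hT1 : ∀ ζ : ℂ, ‖ζ‖ ≤ 1 → 0 ≤ (κ * T ζ).re := by
    intro ζ hζ
    have : κ * T ζ = a ζ * (starRingEnd ℂ) (b₀ ζ) := by
      simp only [hT, map_mul, hconj]
      linear_combination (a ζ * (starRingEnd ℂ) (b₀ ζ)) * hκκ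
    rw [this]
    apply re_mul_conj_nonneg_of_sq_re_nonneg (hsre _) (hsre _)
    · rw [ha2]; linarith [hAre ζ]
    · rw [hb2]; linarith [hBre ζ]
  have hT2 : ∀ ζ : ℂ, T ζ ^ 2 = κ' ^ 2 + κ ^ 2 * (‖ζ‖ ^ 2 : ℝ) - (2 * ζ.re : ℝ) := by
    intro ζ
    have e1 : T ζ ^ 2 = A ζ * (starRingEnd ℂ) (B ζ) * κ' ^ 2 := by
      simp only [hT, map_mul, hconj]
      rw [mul_pow, mul_pow, ← map_pow, ha2, hb2]
      ring
    have e2 : ((‖ζ‖ ^ 2 : ℝ) : ℂ) = ζ * (starRingEnd ℂ) ζ := by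
      rw [Complex.mul_conj']; norm_cast
    have e3 : ((2 * ζ.re : ℝ) : ℂ) = ζ + (starRingEnd ℂ) ζ := (Complex.add_conj ζ).symm
    rw [e1, e2, e3]
    simp only [hA, hB, map_sub, map_mul, map_pow, map_one, hconj']
    linear_combination (-ζ - (starRingEnd ℂ) ζ + ζ * (starRingEnd ℂ) ζ * κ ^ 2) *
      (κ * κ' + 1) * hκκ
  have hT2re : ∀ ζ : ℂ, ‖ζ‖ = 1 → (T ζ ^ 2).re = 2 * (c ^ 2 - s ^ 2) - 2 * ζ.re := by
    intro ζ hζ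
    rw [hT2, hζ]
    simp [hκ, hκ', pow_two]
    ring
  have hT2im : ∀ ζ : ℂ, (T ζ ^ 2).im = (‖ζ‖ ^ 2 - 1) * (2 * c * s) := by
    intro ζ
    rw [hT2]
    simp only [Complex.sub_im, Complex.add_im, Complex.ofReal_im, Complex.im_mul_ofReal]
    simp [hκ, hκ', pow_two]
    ring
  have hTre : ∀ ζ : ℂ, ‖ζ‖ ≤ 1 → 0 ≤ (T ζ).re := by
    intro ζ hζ
    refine re_nonneg_of_sq_im_nonpos hc hs (hT1 ζ hζ) ?_
    rw [hT2im]
    have : ‖ζ‖ ^ 2 ≤ 1 := pow_le_one₀ (norm_nonneg _) hζ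
    have h2 : 0 < 2 * c * s := by positivity
    nlinarith
  have hAB : ∀ ζ, 0 < ‖a ζ ^ 2‖ + ‖(κ * b₀ ζ) ^ 2‖ := by
    intro ζ
    rw [mul_pow, ha2, hb2, norm_mul, norm_pow, hκn, one_pow, one_mul]
    by_contra! h
    have h1 : A ζ = 0 := norm_le_zero_iff.1 (by linarith [norm_nonneg (B ζ)])
    have h2 : B ζ = 0 := norm_le_zero_iff.1 (by linarith [norm_nonneg (A ζ)])
    have h3 : κ ^ 2 = κ' ^ 2 := by
      have e1 : ζ * κ ^ 2 = 1 := (sub_eq_zero.1 h1).symm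
      have e2 : ζ * κ' ^ 2 = 1 := (sub_eq_zero.1 h2).symm
      have hζ : ζ ≠ 0 := by rintro rfl; simp at e1
      exact mul_left_cancel₀ hζ (e1.trans e2.symm)
    have h4 := congrArg Complex.im h3
    simp [hκ, hκ', pow_two] at h4
    nlinarith [mul_pos hc hs]
  have hadd := fun ζ => normSq_add_eq (a ζ) (κ * b₀ ζ)
  have hsub := fun ζ => normSq_sub_eq (a ζ) (κ * b₀ ζ)
  have hne : ∀ ζ : ℂ, ‖ζ‖ ≤ 1 → a ζ + κ * b₀ ζ ≠ 0 := by
    intro ζ hζ h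
    have h1 := hadd ζ
    rw [h, norm_zero] at h1
    have h2 := hTre ζ hζ
    have h3 := hAB ζ
    simp only [hT] at h2
    rw [zero_pow two_ne_zero] at h1
    linarith
  have hle : ∀ ζ : ℂ, ‖ζ‖ ≤ 1 → ‖a ζ - κ * b₀ ζ‖ ≤ ‖a ζ + κ * b₀ ζ‖ := by
    intro ζ hζ
    refine le_of_sq_le_sq ?_ (norm_nonneg _)
    rw [hadd, hsub]
    linarith [hTre ζ hζ]
  have heq : ∀ ζ : ℂ, ‖ζ‖ ≤ 1 →
      (‖(a ζ - κ * b₀ ζ) / (a ζ + κ * b₀ ζ)‖ = 1 ↔ (T ζ).re = 0) := by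
    intro ζ hζ
    rw [norm_div, div_eq_one_iff_eq (norm_ne_zero_iff.2 (hne ζ hζ)),
      ← sq_eq_sq₀ (norm_nonneg _) (norm_nonneg _), hadd, hsub]
    constructor
    · intro h
      change (a ζ * (starRingEnd ℂ) (κ * b₀ ζ)).re = 0
      linarith
    · intro h
      change (a ζ * (starRingEnd ℂ) (κ * b₀ ζ)).re = 0 at h
      rw [h]
      ring
  have hTre2 : ∀ ζ, (T ζ ^ 2).re = (T ζ).re ^ 2 - (T ζ).im ^ 2 := fun ζ => by
    simp [pow_two]
  have hTim2 : ∀ ζ, (T ζ ^ 2).im = 2 * ((T ζ).re * (T ζ).im) := fun ζ => by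
    simp [pow_two]; ring
  have hcpow : ∀ z : ℂ, 0 ≤ z.re → ContinuousAt (fun x : ℂ => x ^ (2⁻¹ : ℂ)) z := fun z hz =>
    Complex.continuousAt_cpow_const_of_re_pos (Or.inl hz) (by norm_num)
  refine ⟨fun ζ => (a ζ - κ * b₀ ζ) / (a ζ + κ * b₀ ζ), ⟨?_, ?_, ?_⟩, fun ζ hζ =>
    ⟨fun h => ?_, fun h1 h2 => ?_, fun h1 h2 => ?_⟩⟩
  · have h1 : ContinuousOn a (closedBall 0 1) := fun ζ hζ =>
      ((hcpow (A ζ) (by have := hAre ζ; simp at hζ; linarith)).comp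
        (by fun_prop : ContinuousAt A ζ)).continuousWithinAt
    have h2 : ContinuousOn b₀ (closedBall 0 1) := fun ζ hζ =>
      ((hcpow (B ζ) (by have := hBre ζ; simp at hζ; linarith)).comp
        (by fun_prop : ContinuousAt B ζ)).continuousWithinAt
    exact (h1.sub (continuousOn_const.mul h2)).div (h1.add (continuousOn_const.mul h2))
      fun ζ hζ => hne ζ (by simpa using hζ)
  · have h1 : DifferentiableOn ℂ a (ball 0 1) :=
      DifferentiableOn.cpow (by fun_prop) (differentiableOn_const _) fun ζ hζ =>
        Or.inl (by have := hAre ζ; simp at hζ; linarith)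
    have h2 : DifferentiableOn ℂ b₀ (ball 0 1) :=
      DifferentiableOn.cpow (by fun_prop) (differentiableOn_const _) fun ζ hζ =>
        Or.inl (by have := hBre ζ; simp at hζ; linarith)
    exact (h1.sub (h2.const_mul _)).div (h1.add (h2.const_mul _))
      fun ζ hζ => hne ζ (by simpa using (ball_subset_closedBall hζ))
  · intro ζ hζ
    rw [norm_div]
    exact div_le_one_of_le₀ (hle ζ (by simpa using hζ)) (norm_nonneg _)
  · rw [heq ζ hζ] at h
    have h3 := hT2im ζ
    rw [hTim2, h, zero_mul, mul_zero, eq_comm, mul_eq_zero] at h3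
    have h4 : ‖ζ‖ = 1 := by
      rcases h3 with h3 | h3
      · have : ‖ζ‖ ^ 2 = 1 ^ 2 := by linarith
        exact (sq_eq_sq₀ (norm_nonneg _) zero_le_one).1 this
      · exact absurd h3 (by positivity)
    refine ⟨h4, ?_⟩
    have h5 := hT2re ζ h4
    rw [hTre2, h] at h5
    nlinarith
  · rw [heq ζ hζ]
    have h3 := hT2im ζ
    rw [h1, hTim2] at h3
    have h4 := hT2re ζ h1
    rw [hTre2] at h4
    have h5 : (T ζ).re * (T ζ).im = 0 := by linarith
    rcases mul_eq_zero.1 h5 with h6 | h6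
    · exact h6
    · rw [h6] at h4
      nlinarith [sq_nonneg (T ζ).re]
  · apply cayley_im_eq_zero
    have h3 := hT2im ζ
    rw [h1, hTim2] at h3
    have h4 := hT2re ζ h1
    rw [hTre2] at h4
    have h5 : (T ζ).re * (T ζ).im = 0 := by linarith
    change (T ζ).im = 0
    rcases mul_eq_zero.1 h5 with h6 | h6
    · rw [h6] at h4
      nlinarith [sq_nonneg (T ζ).im]
    · exact h6

theorem exists_pos_le_of_finite {ι : Type*} [Finite ι] {F : ι → ℝ} (h : ∀ i, 0 < F i) :
    ∃ c > 0, ∀ i, c ≤ F i := by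
  have h1 : ∀ᶠ c in nhdsWithin (0 : ℝ) (Set.Ioi 0), ∀ i, c < F i :=
    Filter.eventually_all.2 fun i => nhdsWithin_le_nhds (gt_mem_nhds (h i))
  obtain ⟨c, hc, hc0⟩ := (h1.and self_mem_nhdsWithin).exists
  exact ⟨c, hc0, fun i => (hc i).le⟩

theorem norm_one_sub_mul_conj {e : ℂ} (he : ‖e‖ = 1) (ζ : ℂ) :
    ‖1 - ζ * (starRingEnd ℂ) e‖ = ‖ζ - e‖ := by
  have h1 : e * (starRingEnd ℂ) e = 1 := by rw [Complex.mul_conj', he]; norm_num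
  have h2 : 1 - ζ * (starRingEnd ℂ) e = (e - ζ) * (starRingEnd ℂ) e := by rw [sub_mul, h1]
  rw [h2, norm_mul, Complex.norm_conj, he, mul_one, norm_sub_rev]

theorem IsMultiplier.comp_mul {k : ℂ → ℂ} (hk : IsMultiplier k) {a : ℂ} (ha : ‖a‖ = 1) :
    IsMultiplier fun ζ => k (ζ * a) :=
  ⟨hk.cont.comp (by fun_prop) fun ζ hζ => by simpa [ha] using hζ,
    hk.diff.comp (by fun_prop) fun ζ hζ => by simpa [ha] using hζ,
    fun ζ hζ => hk.le_one _ (by simpa [ha] using hζ)⟩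

theorem IsMultiplier.pow {k : ℂ → ℂ} (hk : IsMultiplier k) (N : ℕ) :
    IsMultiplier fun ζ => k ζ ^ N :=
  ⟨hk.cont.pow N, hk.diff.pow N, fun ζ hζ => by
    rw [norm_pow]; exact pow_le_one₀ (norm_nonneg _) (hk.le_one ζ hζ)⟩

section

variable {E : Type*} [NormedAddCommGroup E] [NormedSpace ℂ E]

set_option maxHeartbeats 600000 in
theorem exists_spiked_disc {X : Set E} (hX : IsOpen X) {ρ : E → ℝ} (hρ : ContinuousOn ρ X)
    {f : ℂ → E} (hf : IsDisc X f) {m L R κ : ℝ} (hmL : m < L) (hR : 0 < R) (hκ : 0 < κ)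
    (hfm : ∀ ζ : ℂ, ‖ζ‖ = 1 → m < ρ (f ζ))
    {J : ℕ} {e : Fin J → ℂ} (he : ∀ j, ‖e j‖ = 1) (hinj : Function.Injective e)
    {w : Fin J → ℂ → E} (hw : ∀ j, PushData ρ X L R κ (f (e j)) (w j))
    {s : ℝ} (hs : 0 < s) (hs1 : s < 1) (hsR : s ≤ R / 16)
    {τ δ r : ℝ} (hτ : 0 < τ) (hδ : 0 < δ) (hr : r < 1) :
    ∃ d₀ > 0, ∀ d, 0 < d → d < d₀ → ∃ g : ℂ → E, IsDisc X g ∧ g 0 = f 0 ∧ deriv g 0 = deriv f 0 ∧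
      (∀ ζ : ℂ, ‖ζ‖ ≤ r → ‖g ζ - f ζ‖ < δ) ∧
      (∀ ζ : ℂ, ‖ζ‖ ≤ 1 → min (ρ (f ζ)) m - τ < ρ (g ζ)) ∧
      (∀ ζ : ℂ, ‖ζ‖ ≤ 1 → (∃ i, ‖ζ - e i‖ ≤ d) → min (m + κ * s ^ 2) L - τ < ρ (g ζ)) ∧
      (∀ ζ : ℂ, ‖ζ‖ ≤ 1 → (∀ i, d ≤ ‖ζ - e i‖) → ‖g ζ - f ζ‖ < R / 4) := by
  have heb : ∀ j, e j ∈ closedBall (0 : ℂ) 1 := fun j => by simp [he]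
  have hfX : ∀ j, f (e j) ∈ X := fun j => hf.mem _ (heb j)
  have hself : ∀ j, ‖f (e j) - f (e j)‖ < R := fun j => by simpa using hR
  set K : Set E := f '' closedBall 0 1 ∪
    ⋃ j, (fun η => f (e j) + w j η) '' closedBall (0 : ℂ) 1 with hK
  have hKc : IsCompact K := by
    refine ((isCompact_closedBall _ _).image_of_continuousOn hf.cont).union
      (isCompact_iUnion fun j => (isCompact_closedBall _ _).image ?_)
    have := (hw j).diff.continuous
    fun_prop
  have hKX : K ⊆ X := by
    rintro x (⟨ζ, hζ, rfl⟩ | hx)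
    · exact hf.mem ζ hζ
    · obtain ⟨j, η, hη, rfl⟩ := Set.mem_iUnion.1 hx
      exact (hw j).mem _ (hfX j) (hself j) η (by simpa using hη)
  obtain ⟨ε₁, hε₁, hnear⟩ := exists_uniform_nhds_of_compact hX hKc hKX hρ hτ
  obtain ⟨ε₀, hε₀, hε₀₁, hε₀δ, hε₀R⟩ : ∃ ε₀ > 0, ε₀ ≤ ε₁ ∧ ε₀ ≤ δ ∧ ε₀ ≤ R / 16 :=
    ⟨min ε₁ (min δ (R / 16)), by positivity, min_le_left _ _,
      (min_le_right _ _).trans (min_le_left _ _), (min_le_right _ _).trans (min_le_right _ _)⟩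
  obtain ⟨x₁, hx₁, hsep⟩ := exists_pos_le_of_finite
    (F := fun p : {p : Fin J × Fin J // p.1 ≠ p.2} => ‖e p.1.1 - e p.1.2‖)
    fun p => norm_pos_iff.2 (sub_ne_zero.2 fun h => p.2 (hinj h))
  obtain ⟨x₂, hx₂, hunif⟩ := Metric.uniformContinuousOn_iff.1
    ((isCompact_closedBall _ _).uniformContinuousOn_of_continuous hf.cont) (ε₀ / 4) (by positivity)
  obtain ⟨x₀, hx₀, hx₀₁, hx₀₂, hx₀r, hx₀ε⟩ : ∃ x₀ > 0, x₀ ≤ x₁ / 2 ∧ x₀ ≤ x₂ ∧ x₀ ≤ 1 - r ∧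
      x₀ ≤ ε₀ / 8 :=
    ⟨min (x₁ / 2) (min x₂ (min (1 - r) (ε₀ / 8))),
      lt_min (by positivity) (lt_min hx₂ (lt_min (by linarith) (by positivity))), min_le_left _ _,
      (min_le_right _ _).trans (min_le_left _ _),
      (min_le_right _ _).trans ((min_le_right _ _).trans (min_le_left _ _)),
      (min_le_right _ _).trans ((min_le_right _ _).trans (min_le_right _ _))⟩
  set ε : ℝ := ε₀ / 8 / (J + 1) with hε
  have hε0 : 0 < ε := by positivity
  have hJε : J * ε < ε₀ / 4 := by
    have : (J + 1) * ε = ε₀ / 8 := by rw [hε]; field_simp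
    linarith
  obtain ⟨d₀, hd₀, hS⟩ := exists_spike hs hs1 hε0 (show 0 < ε₀ / 4 by positivity) hx₀
  refine ⟨min d₀ x₀, lt_min hd₀ hx₀, fun d hd hdd => ?_⟩
  obtain ⟨S, hSm, hS⟩ := hS d hd (hdd.trans_le (min_le_left _ _))
  have hdx : d < x₀ := hdd.trans_le (min_le_right _ _)
  set k : Fin J → ℂ → ℂ := fun j ζ => S (ζ * (starRingEnd ℂ) (e j)) with hk
  have hkm : ∀ j, IsMultiplier (k j) := fun j => hSm.comp_mul (by simpa using he j)
  have hkS : ∀ j, ∀ ζ : ℂ, ‖ζ‖ ≤ 1 → ‖k j ζ - ‖k j ζ‖‖ ≤ ε₀ / 4 ∧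
      (‖ζ - e j‖ ≤ d → s ≤ ‖k j ζ‖) ∧ (d ≤ ‖ζ - e j‖ → ‖k j ζ‖ ≤ 2 * s) ∧
      (x₀ ≤ ‖ζ - e j‖ → ‖k j ζ‖ ≤ ε) := by
    intro j ζ hζ
    rw [← norm_one_sub_mul_conj (he j)]
    exact hS _ (by simpa [he j] using hζ)
  choose c hc hcr using fun j => (hw j).radius _ (hfX j) (hself j) _ (hfX j) (hself j)
    (e j ^ 2) (e j ^ 2) (by simp [he]) (by simp [he])
  have hw0 : ∀ j, w j 0 = 0 := fun j => (hw j).zero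
  have hlip := fun j => (hw j).lip
  have hfar : ∀ ζ : ℂ, ‖ζ‖ ≤ 1 → ∀ i, ‖ζ - e i‖ < x₀ → ∀ j, j ≠ i → ‖k j ζ‖ ≤ ε := by
    intro ζ hζ i hi j hj
    refine (hkS j ζ hζ).2.2.2 ?_
    have h1 : x₁ ≤ ‖e j - e i‖ := hsep ⟨(j, i), hj⟩
    have h2 := norm_sub_le_norm_sub_add_norm_sub (e j) ζ (e i)
    rw [norm_sub_rev (e j) ζ] at h2
    linarith
  have hin : ∀ ζ : ℂ, ‖ζ‖ ≤ 1 → ∀ i, ‖ζ - e i‖ < x₀ →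
      pushDisc f w c k ζ ∈ X ∧ min (m + κ * ‖k i ζ‖ ^ 2) L - τ < ρ (pushDisc f w c k ζ) := by
    intro ζ hζ i hi
    have hk1 : ‖k i ζ‖ ≤ 1 := (hkm i).le_one ζ (by simpa using hζ)
    have h1 := norm_pushDisc_sub_single_le (f := f) hw0 hlip hc hkm hζ hε0.le i
      (hfar ζ hζ i hi)
    have h2 : ‖f ζ - f (e i)‖ < ε₀ / 4 := by
      rw [← dist_eq_norm]
      exact hunif ζ (by simpa using hζ) _ (heb i)
        (by rw [dist_eq_norm]; exact hi.trans_le hx₀₂)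
    have h3 : ‖w i (c i * (ζ ^ 2 * k i ζ)) - w i (c i * e i ^ 2 * ‖k i ζ‖)‖ ≤ ε₀ / 2 := by
      refine (hlip i _ _ ((norm_push_parameter_le hc i hζ).trans hk1)
        (by simpa [hc, he] using hk1)).trans ?_
      have e1 : c i * (ζ ^ 2 * k i ζ) - c i * e i ^ 2 * ‖k i ζ‖ =
          c i * ((ζ + e i) * (ζ - e i) * k i ζ + e i ^ 2 * (k i ζ - ‖k i ζ‖)) := by ring
      rw [e1, norm_mul, hc, one_mul]
      refine (norm_add_le _ _).trans ?_
      rw [norm_mul, norm_mul, norm_mul, norm_pow, he, one_pow, one_mul]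
      have h4 : ‖ζ + e i‖ ≤ 2 := (norm_add_le _ _).trans (by rw [he]; linarith)
      calc _ ≤ 2 * (ε₀ / 8) * 1 + ε₀ / 4 := by
            gcongr
            · exact hi.le.trans hx₀ε
            · exact (hkS i ζ hζ).1
        _ = _ := by ring
    have h4 : ‖pushDisc f w c k ζ - (f (e i) + w i (c i * e i ^ 2 * ‖k i ζ‖))‖ < ε₁ := by
      have e1 : pushDisc f w c k ζ - (f (e i) + w i (c i * e i ^ 2 * ‖k i ζ‖)) =
        (pushDisc f w c k ζ - (f ζ + w i (c i * (ζ ^ 2 * k i ζ)))) + (f ζ - f (e i)) +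
          (w i (c i * (ζ ^ 2 * k i ζ)) - w i (c i * e i ^ 2 * ‖k i ζ‖)) := by abel
      rw [e1]
      refine (norm_add₃_le).trans_lt ?_
      linarith
    have h5 := hnear _ (Or.inr (Set.mem_iUnion.2 ⟨i, c i * e i ^ 2 * ‖k i ζ‖,
      by simpa [hc, he] using hk1, rfl⟩)) _ h4
    have h6 := (hcr i ‖k i ζ‖ (norm_nonneg _) hk1).1
    refine ⟨h5.1, ?_⟩
    have h7 := (abs_lt.1 h5.2).1
    have h8 : min (m + κ * ‖k i ζ‖ ^ 2) L ≤ min (ρ (f (e i)) + κ * ‖k i ζ‖ ^ 2) L := by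
      have := hfm (e i) (he i)
      gcongr
    dsimp only at h7
    linarith
  have hout : ∀ ζ : ℂ, ‖ζ‖ ≤ 1 → (∀ i, x₀ ≤ ‖ζ - e i‖) →
      pushDisc f w c k ζ ∈ X ∧ ρ (f ζ) - τ < ρ (pushDisc f w c k ζ) ∧
      ‖pushDisc f w c k ζ - f ζ‖ < ε₀ / 4 := by
    intro ζ hζ hi
    have h1 := norm_pushDisc_sub_le (f := f) hw0 hlip hc hkm hζ
      (fun j => (hkS j ζ hζ).2.2.2 (hi j))
    have h2 := hnear _ (Or.inl ⟨ζ, by simpa using hζ, rfl⟩) (pushDisc f w c k ζ) (by linarith)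
    exact ⟨h2.1, by linarith [(abs_lt.1 h2.2).1], by linarith⟩
  refine ⟨pushDisc f w c k, ⟨continuousOn_pushDisc hf.cont (fun j => (hw j).diff) hkm,
    differentiableOn_pushDisc hf.diff (fun j => (hw j).diff) hkm, fun ζ hζ => ?_⟩,
    pushDisc_zero hw0, deriv_pushDisc hf.diff (fun j => (hw j).diff) hkm, ?_, ?_, ?_, ?_⟩
  · rw [mem_closedBall_zero_iff] at hζ
    by_cases h : ∃ i, ‖ζ - e i‖ < x₀
    · obtain ⟨i, hi⟩ := h
      exact (hin ζ hζ i hi).1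
    · push Not at h
      exact (hout ζ hζ h).1
  · intro ζ hζ
    refine (hout ζ (hζ.trans hr.le) fun i => ?_).2.2.trans_le (by linarith)
    have := norm_sub_norm_le (e i) ζ
    rw [he, norm_sub_rev] at this
    linarith
  · intro ζ hζ
    by_cases h : ∃ i, ‖ζ - e i‖ < x₀
    · obtain ⟨i, hi⟩ := h
      refine lt_of_le_of_lt ?_ (hin ζ hζ i hi).2
      have h1 : m ≤ min (m + κ * ‖k i ζ‖ ^ 2) L := le_min (by
        have : 0 ≤ κ * ‖k i ζ‖ ^ 2 := by positivity
        linarith) hmL.le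
      linarith [min_le_right (ρ (f ζ)) m]
    · push Not at h
      linarith [(hout ζ hζ h).2.1, min_le_left (ρ (f ζ)) m]
  · rintro ζ hζ ⟨i, hi⟩
    refine lt_of_le_of_lt ?_ (hin ζ hζ i (hi.trans_lt hdx)).2
    have := (hkS i ζ hζ).2.1 hi
    gcongr
  · intro ζ hζ hd
    by_cases h : ∃ i, ‖ζ - e i‖ < x₀
    · obtain ⟨i, hi⟩ := h
      have h1 := norm_pushDisc_sub_single_le (f := f) hw0 hlip hc hkm hζ hε0.le i
        (hfar ζ hζ i hi)
      have h2 := norm_push_le hw0 hlip hc hkm i hζ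
      have h3 := (hkS i ζ hζ).2.2.1 (hd i)
      have e1 : pushDisc f w c k ζ - f ζ = (pushDisc f w c k ζ -
          (f ζ + w i (c i * (ζ ^ 2 * k i ζ)))) + w i (c i * (ζ ^ 2 * k i ζ)) := by abel
      rw [e1]
      refine (norm_add_le _ _).trans_lt ?_
      linarith
    · push Not at h
      linarith [(hout ζ hζ h).2.2]

end

theorem eventually_pow_le_of_compact {S : Set ℂ} (hS : IsCompact S) {F : ℂ → ℝ}
    (hF : ContinuousOn F S) (h0 : ∀ ζ ∈ S, 0 ≤ F ζ) (h1 : ∀ ζ ∈ S, F ζ < 1) {ε : ℝ} (hε : 0 < ε) :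
    ∀ᶠ N : ℕ in Filter.atTop, ∀ ζ ∈ S, F ζ ^ (2 * N) ≤ ε := by
  rcases S.eq_empty_or_nonempty with rfl | hne
  · simp
  · obtain ⟨ζ₀, hζ₀, hmax⟩ := hS.exists_isMaxOn hne hF
    have ht := tendsto_pow_atTop_nhds_zero_of_lt_one (h0 _ hζ₀) (h1 _ hζ₀)
    have ht2 := ht.comp (Filter.tendsto_id.const_mul_atTop' (two_pos : 0 < 2))
    filter_upwards [ht2.eventually (ge_mem_nhds hε)] with N hN ζ hζ
    exact (pow_le_pow_left₀ (h0 ζ hζ) (hmax hζ) _).trans hN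

theorem ofReal_norm_pow_of_im_eq_zero {z : ℂ} (hz : z.im = 0) (N : ℕ) :
    z ^ (2 * N) = ‖z ^ (2 * N)‖ := by
  have h1 : z = (z.re : ℂ) := Complex.ext rfl (by simpa using hz)
  rw [h1, ← Complex.ofReal_pow, Complex.norm_real, Real.norm_of_nonneg]
  rw [pow_mul]
  positivity

theorem eq_of_re_mul_conj_eq_cos {c ζ : ℂ} (hc : ‖c‖ = 1) (hζ : ‖ζ‖ = 1) {φ : ℝ}
    (h : (ζ * (starRingEnd ℂ) c).re = Real.cos φ) :
    ζ = c * Complex.exp (φ * Complex.I) ∨ ζ = c * Complex.exp (-φ * Complex.I) := by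
  set q := ζ * (starRingEnd ℂ) c with hq
  have h1 : (starRingEnd ℂ) c * c = 1 := by rw [Complex.conj_mul', hc]; norm_num
  have hζq : ζ = c * q := by rw [hq]; linear_combination (-ζ) * h1
  have hq1 : q.re * q.re + q.im * q.im = 1 := by
    rw [← Complex.normSq_apply, Complex.normSq_eq_norm_sq, hq]
    simp [hζ, hc]
  have h2 := Real.cos_sq_add_sin_sq φ
  have h3 : (q.im - Real.sin φ) * (q.im + Real.sin φ) = 0 := by rw [h] at hq1; linarith
  have key : ∀ x : ℝ, Real.cos φ = Real.cos x → q.im = Real.sin x →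
      q = Complex.exp (x * Complex.I) := by
    intro x h4 h5
    apply Complex.ext
    · rw [h, h4, Complex.exp_ofReal_mul_I_re]
    · rw [h5, Complex.exp_ofReal_mul_I_im]
  rcases mul_eq_zero.1 h3 with h4 | h4
  · left
    rw [hζq, ← key φ rfl (by linarith)]
  · right
    rw [hζq]
    congr 1
    simpa using key (-φ) (by simp) (by rw [Real.sin_neg]; linarith)

theorem norm_mul_exp_and_re {c : ℂ} (hc : ‖c‖ = 1) (x : ℝ) :
    ‖c * Complex.exp (x * Complex.I)‖ = 1 ∧
      (c * Complex.exp (x * Complex.I) * (starRingEnd ℂ) c).re = Real.cos x := by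
  have h1 : c * (starRingEnd ℂ) c = 1 := by rw [Complex.mul_conj', hc]; norm_num
  refine ⟨by rw [norm_mul, hc, Complex.norm_exp_ofReal_mul_I, one_mul], ?_⟩
  rw [mul_right_comm, h1, one_mul, Complex.exp_ofReal_mul_I_re]

section

variable {E : Type*} [NormedAddCommGroup E] [NormedSpace ℂ E]

set_option maxHeartbeats 1000000 in
theorem exists_capped_disc {X : Set E} (hX : IsOpen X) {ρ : E → ℝ} (hρ : ContinuousOn ρ X)
    {f : ℂ → E} (hf : IsDisc X f) {m l L R κ : ℝ} (hR : 0 < R) (hκ : 0 < κ)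
    {φ : ℝ} (hφ0 : 0 < φ) (hφ1 : φ < Real.pi) {J : ℕ} {c : Fin J → ℂ} (hc : ∀ j, ‖c j‖ = 1)
    {z : Fin J → E} {w : Fin J → ℂ → E} (hw : ∀ j, PushData ρ X L R κ (z j) (w j))
    (hl : ∀ ζ : ℂ, ‖ζ‖ = 1 → (∀ j, (ζ * (starRingEnd ℂ) (c j)).re ≤ Real.cos φ) → l < ρ (f ζ))
    (hdisj : ∀ ζ : ℂ, ‖ζ‖ = 1 → ∀ i j, Real.cos φ ≤ (ζ * (starRingEnd ℂ) (c i)).re →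
      Real.cos φ ≤ (ζ * (starRingEnd ℂ) (c j)).re → i = j)
    (hclose : ∀ ζ : ℂ, ‖ζ‖ = 1 → ∀ j, Real.cos φ ≤ (ζ * (starRingEnd ℂ) (c j)).re →
      ‖f ζ - z j‖ < R / 2)
    (hm : ∀ ζ : ℂ, ‖ζ‖ = 1 → m < ρ (f ζ))
    {τ δ r : ℝ} (hτ : 0 < τ) (hδ : 0 < δ) (hr : r < 1) :
    ∃ g : ℂ → E, IsDisc X g ∧ g 0 = f 0 ∧ deriv g 0 = deriv f 0 ∧
      (∀ ζ : ℂ, ‖ζ‖ ≤ r → ‖g ζ - f ζ‖ < δ) ∧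
      (∀ ζ : ℂ, ‖ζ‖ ≤ 1 → min (ρ (f ζ)) (m - 1 / 2) - τ < ρ (g ζ)) ∧
      (∀ ζ : ℂ, ‖ζ‖ = 1 → min (min (m + κ) l) L - τ < ρ (g ζ)) := by
  have hfX : ∀ ζ : ℂ, ‖ζ‖ ≤ 1 → f ζ ∈ X := fun ζ hζ => hf.mem ζ (by simpa using hζ)
  set U : Fin J → Set ℂ := fun j => {ζ | ζ ∈ closedBall (0 : ℂ) 1 ∧ ‖f ζ - z j‖ ≤ 3 * R / 4}
    with hU
  have hcontU : ∀ j, ContinuousOn (fun ζ => ‖f ζ - z j‖) (closedBall 0 1) := fun j =>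
    (hf.cont.sub continuousOn_const).norm
  have hUc : ∀ j, IsCompact (U j) := fun j =>
    (isCompact_closedBall (0 : ℂ) 1).of_isClosed_subset
      ((hcontU j).preimage_isClosed_of_isClosed isClosed_closedBall isClosed_Iic)
      fun ζ hζ => hζ.1
  set K : Set E := f '' closedBall 0 1 ∪
    ⋃ j, (fun p : ℂ × ℂ => f p.1 + w j p.2) '' (U j ×ˢ closedBall (0 : ℂ) 1) with hK
  have hKc : IsCompact K := by
    refine ((isCompact_closedBall _ _).image_of_continuousOn hf.cont).union
      (isCompact_iUnion fun j => ((hUc j).prod (isCompact_closedBall _ _)).image_of_continuousOn ?_)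
    exact (hf.cont.comp continuousOn_fst fun p hp => hp.1.1).add
      ((hw j).diff.continuous.comp_continuousOn continuousOn_snd)
  have hKX : K ⊆ X := by
    rintro x (⟨ζ, hζ, rfl⟩ | hx)
    · exact hf.mem ζ hζ
    · obtain ⟨j, ⟨ζ, η⟩, ⟨hζ, hη⟩, rfl⟩ := Set.mem_iUnion.1 hx
      exact (hw j).mem _ (hf.mem _ hζ.1) (hζ.2.trans_lt (by linarith)) η (by simpa using hη)
  obtain ⟨ε₁, hε₁, hnear⟩ := exists_uniform_nhds_of_compact hX hKc hKX hρ hτ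
  obtain ⟨ε₀, hε₀, hε₀₁, hε₀δ, hε₀2⟩ : ∃ ε₀ > 0, ε₀ ≤ ε₁ ∧ ε₀ ≤ δ ∧ ε₀ ≤ 1 :=
    ⟨min ε₁ (min δ 1), by positivity, min_le_left _ _,
      (min_le_right _ _).trans (min_le_left _ _), (min_le_right _ _).trans (min_le_right _ _)⟩
  obtain ⟨x₂, hx₂, hunif⟩ := Metric.uniformContinuousOn_iff.1
    ((isCompact_closedBall _ _).uniformContinuousOn_of_continuous hf.cont) (ε₀ / 4) (by positivity)
  obtain ⟨x₀, hx₀, hx₀₂, hx₀ε⟩ : ∃ x₀ > 0, x₀ ≤ x₂ ∧ x₀ ≤ ε₀ / 8 :=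
    ⟨min x₂ (ε₀ / 8), by positivity, min_le_left _ _, min_le_right _ _⟩
  set ε : ℝ := ε₀ / 8 / (J + 1) with hε
  have hε0 : 0 < ε := by positivity
  have hJε' : (J + 1) * ε = ε₀ / 8 := by rw [hε]; field_simp
  have hJε : J * ε < ε₀ / 4 := by linarith
  have hε1 : ε < 1 := by
    have : 0 ≤ J * ε := by positivity
    linarith
  obtain ⟨H, hH, hHp⟩ := exists_cap hφ0 hφ1
  set p : Fin J → ℂ := fun j => c j * Complex.exp (φ * Complex.I) with hp
  set q : Fin J → ℂ := fun j => c j * Complex.exp (((-φ : ℝ) : ℂ) * Complex.I) with hq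
  have hpn : ∀ j, ‖p j‖ = 1 := fun j => (norm_mul_exp_and_re (hc j) φ).1
  have hqn : ∀ j, ‖q j‖ = 1 := fun j => (norm_mul_exp_and_re (hc j) (-φ)).1
  have hpre : ∀ j, (p j * (starRingEnd ℂ) (c j)).re = Real.cos φ := fun j =>
    (norm_mul_exp_and_re (hc j) φ).2
  have hqre : ∀ j, (q j * (starRingEnd ℂ) (c j)).re = Real.cos φ := fun j => by
    rw [(norm_mul_exp_and_re (hc j) (-φ)).2, Real.cos_neg]
  set h : Fin J → ℂ → ℂ := fun j ζ => H (ζ * (starRingEnd ℂ) (c j)) with hh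
  have hhm : ∀ j, IsMultiplier (h j) := fun j => hH.comp_mul (by simpa using hc j)
  have hhp : ∀ j, ∀ ζ : ℂ, ‖ζ‖ ≤ 1 →
      (‖h j ζ‖ = 1 → ‖ζ‖ = 1 ∧ Real.cos φ ≤ (ζ * (starRingEnd ℂ) (c j)).re) ∧
      (‖ζ‖ = 1 → Real.cos φ ≤ (ζ * (starRingEnd ℂ) (c j)).re → ‖h j ζ‖ = 1) ∧
      (‖ζ‖ = 1 → (ζ * (starRingEnd ℂ) (c j)).re ≤ Real.cos φ → (h j ζ).im = 0) := by
    intro j ζ hζ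
    have hn : ‖ζ * (starRingEnd ℂ) (c j)‖ = ‖ζ‖ := by simp [hc]
    have := hHp (ζ * (starRingEnd ℂ) (c j)) (by rwa [hn])
    rwa [hn] at this
  have hlt : ∀ j, ∀ ζ : ℂ, ‖ζ‖ ≤ 1 → (‖h j ζ‖ = 1 → False) → ‖h j ζ‖ < 1 := fun j ζ hζ hne =>
    lt_of_le_of_ne ((hhm j).le_one ζ (by simpa using hζ)) hne
  set A : Fin J → Set ℂ := fun j => {ζ | ‖ζ‖ = 1 ∧ (ζ * (starRingEnd ℂ) (c j)).re ≤ Real.cos φ ∧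
    x₀ ≤ ‖ζ - p j‖ ∧ x₀ ≤ ‖ζ - q j‖} with hA
  have hAs : ∀ j, A j ⊆ closedBall 0 1 := fun j ζ hζ => by simpa using hζ.1.le
  have hAc : ∀ j, IsCompact (A j) := by
    intro j
    have h1 : Continuous fun ζ : ℂ => (ζ * (starRingEnd ℂ) (c j)).re := by fun_prop
    have h2 : ∀ a : ℂ, IsClosed {ζ : ℂ | x₀ ≤ ‖ζ - a‖} := fun a =>
      isClosed_le continuous_const (by fun_prop : Continuous fun ζ : ℂ => ‖ζ - a‖)
    exact (isCompact_closedBall (0 : ℂ) 1).of_isClosed_subset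
      ((isClosed_eq continuous_norm continuous_const).inter
        ((isClosed_le h1 continuous_const).inter ((h2 _).inter (h2 _)))) (hAs j)
  set V : Fin J → Set ℂ := fun j =>
    {ζ | ζ ∈ closedBall (0 : ℂ) 1 ∧ 3 * R / 4 ≤ ‖f ζ - z j‖} ∪
      {ζ | ζ ∈ closedBall (0 : ℂ) 1 ∧ ρ (f ζ) ≤ m} with hV
  have hVs : ∀ j, V j ⊆ closedBall 0 1 := fun j ζ hζ => hζ.elim And.left And.left
  have hVc : ∀ j, IsCompact (V j) := fun j =>
    (isCompact_closedBall (0 : ℂ) 1).of_isClosed_subset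
      (((hcontU j).preimage_isClosed_of_isClosed isClosed_closedBall isClosed_Ici).union
        ((hρ.comp hf.cont hf.mem).preimage_isClosed_of_isClosed isClosed_closedBall isClosed_Iic))
      (hVs j)
  have ev1 : ∀ᶠ N : ℕ in Filter.atTop, ∀ j, ∀ ζ ∈ closedBall (0 : ℂ) r, ‖h j ζ‖ ^ (2 * N) ≤ ε := by
    refine Filter.eventually_all.2 fun j => eventually_pow_le_of_compact (isCompact_closedBall _ _)
      ((hhm j).cont.norm.mono (closedBall_subset_closedBall hr.le)) (fun _ _ => norm_nonneg _)
      (fun ζ hζ => ?_) hε0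
    rw [mem_closedBall_zero_iff] at hζ
    refine hlt j ζ (hζ.trans hr.le) fun h1 => ?_
    linarith [((hhp j ζ (hζ.trans hr.le)).1 h1).1]
  have ev2 : ∀ᶠ N : ℕ in Filter.atTop, ∀ j, ∀ ζ ∈ V j, ‖h j ζ‖ ^ (2 * N) ≤ ε := by
    refine Filter.eventually_all.2 fun j => eventually_pow_le_of_compact (hVc j)
      ((hhm j).cont.norm.mono (hVs j)) (fun _ _ => norm_nonneg _)
      (fun ζ hζ => ?_) hε0
    have hζ1 : ‖ζ‖ ≤ 1 := by simpa using hVs j hζ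
    refine hlt j ζ hζ1 fun h1 => ?_
    obtain ⟨h2, h3⟩ := (hhp j ζ hζ1).1 h1
    rcases hζ with hζ | hζ
    · linarith [hclose ζ h2 j h3, hζ.2]
    · linarith [hm ζ h2, hζ.2]
  have ev3 : ∀ᶠ N : ℕ in Filter.atTop, ∀ j, ∀ ζ ∈ A j, ‖h j ζ‖ ^ (2 * N) ≤ ε := by
    refine Filter.eventually_all.2 fun j => eventually_pow_le_of_compact (hAc j)
      ((hhm j).cont.norm.mono (hAs j)) (fun _ _ => norm_nonneg _)
      (fun ζ hζ => ?_) hε0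
    refine hlt j ζ hζ.1.le fun h1 => ?_
    obtain ⟨h2, h3⟩ := (hhp j ζ hζ.1.le).1 h1
    obtain ⟨-, h4, h5, h6⟩ := hζ
    rcases eq_of_re_mul_conj_eq_cos (hc j) h2 (le_antisymm h4 h3) with h7 | h7
    · rw [show p j = ζ from h7.symm, sub_self, norm_zero] at h5
      linarith
    · rw [show q j = ζ by rw [h7, hq]; simp, sub_self, norm_zero] at h6
      linarith
  have ev4 : ∀ᶠ N : ℕ in Filter.atTop, ∀ i j, i ≠ j → ∀ ζ ∈ closedBall (0 : ℂ) 1,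
      min ‖h i ζ‖ ‖h j ζ‖ ^ (2 * N) ≤ ε := by
    refine Filter.eventually_all.2 fun i => Filter.eventually_all.2 fun j => ?_
    by_cases hij : i = j
    · exact Filter.Eventually.of_forall fun N h => absurd hij h
    refine (eventually_pow_le_of_compact (isCompact_closedBall _ _)
      ((hhm i).cont.norm.inf (hhm j).cont.norm) (fun _ _ => le_min (norm_nonneg _) (norm_nonneg _))
      (fun ζ hζ => ?_) hε0).mono fun N hN _ => hN
    have hζ1 : ‖ζ‖ ≤ 1 := by simpa using hζ
    by_contra! hge
    have h1 : ‖h i ζ‖ = 1 := le_antisymm ((hhm i).le_one ζ hζ) (hge.trans (min_le_left _ _))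
    have h2 : ‖h j ζ‖ = 1 := le_antisymm ((hhm j).le_one ζ hζ) (hge.trans (min_le_right _ _))
    exact hij (hdisj ζ ((hhp i ζ hζ1).1 h1).1 i j ((hhp i ζ hζ1).1 h1).2 ((hhp j ζ hζ1).1 h2).2)
  obtain ⟨N, hN1, hN2, hN3, hN4⟩ := (ev1.and (ev2.and (ev3.and ev4))).exists
  set k : Fin J → ℂ → ℂ := fun j ζ => h j ζ ^ (2 * N) with hk
  have hkm : ∀ j, IsMultiplier (k j) := fun j => (hhm j).pow _
  have hkn : ∀ j ζ, ‖k j ζ‖ = ‖h j ζ‖ ^ (2 * N) := fun j ζ => norm_pow _ _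
  have hpclose : ∀ j, ‖f (p j) - z j‖ < R := fun j => by
    linarith [hclose (p j) (hpn j) j (hpre j).ge]
  have hqclose : ∀ j, ‖f (q j) - z j‖ < R := fun j => by
    linarith [hclose (q j) (hqn j) j (hqre j).ge]
  choose b hb hbr using fun j => (hw j).radius _ (hfX _ (hpn j).le) (hpclose j) _
    (hfX _ (hqn j).le) (hqclose j) (p j ^ 2) (q j ^ 2) (by simp [hpn]) (by simp [hqn])
  have hend : ∀ ζ : ℂ, ‖ζ‖ = 1 → ∀ j, (ζ * (starRingEnd ℂ) (c j)).re = Real.cos φ →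
      l < ρ (f ζ) := by
    intro ζ hζ j hj
    refine hl ζ hζ fun i => ?_
    by_contra! hi
    have := hdisj ζ hζ i j hi.le hj.ge
    rw [this] at hi
    linarith
  have hw0 : ∀ j, w j 0 = 0 := fun j => (hw j).zero
  have hlip := fun j => (hw j).lip
  have hsmall : ∀ ζ : ℂ, ‖ζ‖ ≤ 1 → (∀ j, ‖k j ζ‖ ≤ ε) →
      pushDisc f w b k ζ ∈ X ∧ ρ (f ζ) - τ < ρ (pushDisc f w b k ζ) ∧
      ‖pushDisc f w b k ζ - f ζ‖ < ε₀ / 4 := by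
    intro ζ hζ hi
    have h1 := norm_pushDisc_sub_le (f := f) hw0 hlip hb hkm hζ hi
    have h2 := hnear _ (Or.inl ⟨ζ, by simpa using hζ, rfl⟩) (pushDisc f w b k ζ) (by linarith)
    exact ⟨h2.1, by linarith [(abs_lt.1 h2.2).1], by linarith⟩
  have hothers : ∀ ζ : ℂ, ‖ζ‖ ≤ 1 → ∀ j, ε < ‖k j ζ‖ → ∀ i, i ≠ j → ‖k i ζ‖ ≤ ε := by
    intro ζ hζ j hj i hij
    have h1 := hN4 i j hij ζ (by simpa using hζ)
    rcases min_choice ‖h i ζ‖ ‖h j ζ‖ with h2 | h2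
    · rw [h2] at h1
      rwa [hkn]
    · rw [h2, ← hkn] at h1
      linarith
  have hbig : ∀ ζ : ℂ, ‖ζ‖ ≤ 1 → ∀ j, ε < ‖k j ζ‖ → ‖f ζ - z j‖ < 3 * R / 4 := by
    intro ζ hζ j hj
    by_contra! hge
    have := hN2 j ζ (Or.inl ⟨by simpa using hζ, hge⟩)
    rw [← hkn] at this
    linarith
  have hhigh : ∀ ζ : ℂ, ‖ζ‖ ≤ 1 → ∀ j, ε < ‖k j ζ‖ → m < ρ (f ζ) := by
    intro ζ hζ j hj
    by_contra! hge
    have := hN2 j ζ (Or.inr ⟨by simpa using hζ, hge⟩)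
    rw [← hkn] at this
    linarith
  have hnorm : ∀ ζ : ℂ, ‖ζ‖ ≤ 1 → ∀ j, ‖b j * (ζ ^ 2 * k j ζ)‖ ≤ 1 := fun ζ hζ j =>
    (norm_push_parameter_le hb j hζ).trans ((hkm j).le_one ζ (by simpa using hζ))
  have hsingle : ∀ ζ : ℂ, ‖ζ‖ ≤ 1 → ∀ j, ε < ‖k j ζ‖ → pushDisc f w b k ζ ∈ X ∧
      ρ (f ζ + w j (b j * (ζ ^ 2 * k j ζ))) - τ < ρ (pushDisc f w b k ζ) := by
    intro ζ hζ j hj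
    have h1 := norm_pushDisc_sub_single_le (f := f) hw0 hlip hb hkm hζ hε0.le j
      (hothers ζ hζ j hj)
    have h2 := hnear _ (Or.inr (Set.mem_iUnion.2 ⟨j, (ζ, b j * (ζ ^ 2 * k j ζ)),
      ⟨⟨by simpa using hζ, (hbig ζ hζ j hj).le⟩, by simpa using hnorm ζ hζ j⟩, rfl⟩))
      (pushDisc f w b k ζ) (by dsimp only; linarith)
    exact ⟨h2.1, by linarith [(abs_lt.1 h2.2).1]⟩
  have hnearEnd : ∀ ζ : ℂ, ‖ζ‖ = 1 → ∀ j, ε < ‖k j ζ‖ → k j ζ = ‖k j ζ‖ → ∀ y : ℂ, ‖y‖ = 1 →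
      ‖f y - z j‖ < R / 2 → l < ρ (f y) → (∀ s : ℝ, 0 ≤ s → s ≤ 1 →
        min (ρ (f y) + κ * s ^ 2) L ≤ ρ (f y + w j (b j * y ^ 2 * s))) → ‖ζ - y‖ < x₀ →
      min l L - τ < ρ (pushDisc f w b k ζ) := by
    intro ζ hζ j hj hreal y hy hyz hly hrad hζy
    have hk1 : ‖k j ζ‖ ≤ 1 := (hkm j).le_one ζ (by simpa using hζ.le)
    have hy1 : ‖b j * y ^ 2 * (‖k j ζ‖ : ℂ)‖ ≤ 1 := by simpa [hb, hy] using hk1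
    have h1 := norm_pushDisc_sub_single_le (f := f) hw0 hlip hb hkm hζ.le hε0.le j
      (hothers ζ hζ.le j hj)
    have h2 : ‖f ζ - f y‖ < ε₀ / 4 := by
      rw [← dist_eq_norm]
      exact hunif ζ (by simpa using hζ.le) _ (by simpa using hy.le)
        (by rw [dist_eq_norm]; exact hζy.trans_le hx₀₂)
    have h3 : ‖w j (b j * (ζ ^ 2 * k j ζ)) - w j (b j * y ^ 2 * ‖k j ζ‖)‖ ≤ ε₀ / 4 := by
      refine (hlip j _ _ (hnorm ζ hζ.le j) hy1).trans ?_
      have e1 : b j * (ζ ^ 2 * k j ζ) - b j * y ^ 2 * ‖k j ζ‖ =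
          b j * ((ζ + y) * (ζ - y) * k j ζ) := by rw [← hreal]; ring
      rw [e1, norm_mul, hb, one_mul, norm_mul, norm_mul]
      have h4 : ‖ζ + y‖ ≤ 2 := (norm_add_le _ _).trans (by rw [hζ, hy]; norm_num)
      calc _ ≤ 2 * (ε₀ / 8) * 1 := by
            gcongr
            exact hζy.le.trans hx₀ε
        _ = _ := by ring
    have h4 : ‖pushDisc f w b k ζ - (f y + w j (b j * y ^ 2 * ‖k j ζ‖))‖ < ε₁ := by
      have e1 : pushDisc f w b k ζ - (f y + w j (b j * y ^ 2 * ‖k j ζ‖)) =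
        (pushDisc f w b k ζ - (f ζ + w j (b j * (ζ ^ 2 * k j ζ)))) + (f ζ - f y) +
          (w j (b j * (ζ ^ 2 * k j ζ)) - w j (b j * y ^ 2 * ‖k j ζ‖)) := by abel
      rw [e1]
      refine (norm_add₃_le).trans_lt ?_
      linarith
    have h5 := hnear _ (Or.inr (Set.mem_iUnion.2 ⟨j, (y, b j * y ^ 2 * ‖k j ζ‖),
      ⟨⟨by simpa using hy.le, by dsimp only; linarith⟩, by simpa using hy1⟩, rfl⟩)) _ h4
    have h6 := hrad ‖k j ζ‖ (norm_nonneg _) hk1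
    have h7 := (abs_lt.1 h5.2).1
    have h8 : min l L ≤ min (ρ (f y) + κ * ‖k j ζ‖ ^ 2) L := by
      have : 0 ≤ κ * ‖k j ζ‖ ^ 2 := by positivity
      exact min_le_min_right _ (by linarith)
    dsimp only at h7
    linarith
  refine ⟨pushDisc f w b k, ⟨continuousOn_pushDisc hf.cont (fun j => (hw j).diff) hkm,
    differentiableOn_pushDisc hf.diff (fun j => (hw j).diff) hkm, fun ζ hζ => ?_⟩,
    pushDisc_zero hw0, deriv_pushDisc hf.diff (fun j => (hw j).diff) hkm, ?_, ?_, ?_⟩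
  · rw [mem_closedBall_zero_iff] at hζ
    by_cases hex : ∃ j, ε < ‖k j ζ‖
    · obtain ⟨j, hj⟩ := hex
      exact (hsingle ζ hζ j hj).1
    · push Not at hex
      exact (hsmall ζ hζ hex).1
  · intro ζ hζ
    refine (hsmall ζ (hζ.trans hr.le) fun j => ?_).2.2.trans_le (by linarith)
    rw [hkn]
    exact hN1 j ζ (by simpa using hζ)
  · intro ζ hζ
    by_cases hex : ∃ j, ε < ‖k j ζ‖
    · obtain ⟨j, hj⟩ := hex
      have h1 := (hw j).lower _ (hfX ζ hζ) ((hbig ζ hζ j hj).trans (by linarith)) _ (hnorm ζ hζ j)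
      linarith [(hsingle ζ hζ j hj).2, hhigh ζ hζ j hj, min_le_right (ρ (f ζ)) (m - 1 / 2)]
    · push Not at hex
      linarith [(hsmall ζ hζ hex).2.1, min_le_left (ρ (f ζ)) (m - 1 / 2)]
  · intro ζ hζ
    by_cases hex : ∃ j, ε < ‖k j ζ‖
    · obtain ⟨j, hj⟩ := hex
      rcases le_total (Real.cos φ) (ζ * (starRingEnd ℂ) (c j)).re with hcap | hcap
      · have h1 : ‖k j ζ‖ = 1 := by rw [hkn, (hhp j ζ hζ.le).2.1 hζ hcap, one_pow]
        have h2 := (hw j).circle _ (hfX ζ hζ.le) ((hbig ζ hζ.le j hj).trans (by linarith))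
          (b j * (ζ ^ 2 * k j ζ)) (by simp [hb, hζ, h1])
        refine lt_of_le_of_lt ?_ (hsingle ζ hζ.le j hj).2
        have h3 : min (min (m + κ) l) L ≤ min (ρ (f ζ) + κ) L :=
          min_le_min_right _ ((min_le_left _ _).trans (by linarith [hm ζ hζ]))
        linarith
      · have hreal : k j ζ = ‖k j ζ‖ :=
          ofReal_norm_pow_of_im_eq_zero ((hhp j ζ hζ.le).2.2 hζ hcap) N
        have hmin : min (min (m + κ) l) L ≤ min l L := min_le_min_right _ (min_le_right _ _)
        have hpq : ‖ζ - p j‖ < x₀ ∨ ‖ζ - q j‖ < x₀ := by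
          by_contra! hge
          have := hN3 j ζ ⟨hζ, hcap, hge.1, hge.2⟩
          rw [← hkn] at this
          linarith
        rcases hpq with hlt | hlt
        · have := hnearEnd ζ hζ j hj hreal (p j) (hpn j) (hclose (p j) (hpn j) j (hpre j).ge)
            (hend _ (hpn j) j (hpre j)) (fun s h0 h1 => (hbr j s h0 h1).1) hlt
          linarith
        · have := hnearEnd ζ hζ j hj hreal (q j) (hqn j) (hclose (q j) (hqn j) j (hqre j).ge)
            (hend _ (hqn j) j (hqre j)) (fun s h0 h1 => (hbr j s h0 h1).2) hlt
          linarith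
    · push Not at hex
      have h1 : l < ρ (f ζ) := by
        refine hl ζ hζ fun j => ?_
        by_contra! hcap
        have h2 := hex j
        rw [hkn, (hhp j ζ hζ.le).2.1 hζ hcap.le, one_pow] at h2
        linarith
      have h2 := (hsmall ζ hζ.le hex).2.1
      have h3 : min (min (m + κ) l) L ≤ l := (min_le_left _ _).trans (min_le_right _ _)
      linarith

end

theorem exists_int_abs_sub_le_pi (x : ℝ) :
    ∃ k : ℤ, |x - 2 * Real.pi * k| ≤ Real.pi ∧ Real.cos |x - 2 * Real.pi * k| = Real.cos x := by
  refine ⟨round (x / (2 * Real.pi)), ?_, ?_⟩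
  · have h := abs_sub_round (x / (2 * Real.pi))
    have hp := Real.pi_pos
    have e : x - 2 * Real.pi * round (x / (2 * Real.pi)) =
        2 * Real.pi * (x / (2 * Real.pi) - round (x / (2 * Real.pi))) := by field_simp
    rw [e, abs_mul, abs_of_pos (by positivity)]
    nlinarith
  · rw [Real.cos_abs, mul_comm, Real.cos_sub_int_mul_two_pi]

theorem exists_int_abs_sub_le_of_cos_le {x y : ℝ} (hy : 0 ≤ y) (hyp : y ≤ Real.pi)
    (h : Real.cos y ≤ Real.cos x) : ∃ k : ℤ, |x - 2 * Real.pi * k| ≤ y := by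
  obtain ⟨k, hk, hc⟩ := exists_int_abs_sub_le_pi x
  refine ⟨k, ?_⟩
  rw [← hc] at h
  exact (Real.strictAntiOn_cos.le_iff_ge ⟨hy, hyp⟩ ⟨abs_nonneg _, hk⟩).1 h

theorem exists_int_abs_sub_lt_of_cos_lt {x y : ℝ} (hy : 0 ≤ y) (hyp : y ≤ Real.pi)
    (h : Real.cos y < Real.cos x) : ∃ k : ℤ, |x - 2 * Real.pi * k| < y := by
  obtain ⟨k, hk, hc⟩ := exists_int_abs_sub_le_pi x
  refine ⟨k, ?_⟩
  rw [← hc] at h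
  exact (Real.strictAntiOn_cos.lt_iff_gt ⟨hy, hyp⟩ ⟨abs_nonneg _, hk⟩).1 h

theorem norm_sub_sq_of_norm_eq_one {a b : ℂ} (ha : ‖a‖ = 1) (hb : ‖b‖ = 1) :
    ‖a - b‖ ^ 2 = 2 - 2 * (a * (starRingEnd ℂ) b).re := by
  rw [← Complex.normSq_eq_norm_sq, Complex.normSq_sub, Complex.normSq_eq_norm_sq,
    Complex.normSq_eq_norm_sq, ha, hb]
  ring

/-- The `J`-periodic parametrisation of the unit circle. -/
noncomputable def circlePoint (J : ℕ) (t : ℝ) : ℂ :=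
  Complex.exp ((2 * Real.pi / J * t : ℝ) * Complex.I)

theorem norm_circlePoint (J : ℕ) (t : ℝ) : ‖circlePoint J t‖ = 1 :=
  Complex.norm_exp_ofReal_mul_I _

theorem circlePoint_mul_conj_re (J : ℕ) (t s : ℝ) :
    (circlePoint J t * (starRingEnd ℂ) (circlePoint J s)).re =
      Real.cos (2 * Real.pi / J * (t - s)) := by
  rw [circlePoint, circlePoint, ← Complex.exp_conj, ← Complex.exp_add,
    ← Complex.exp_ofReal_mul_I_re]
  congr 2
  rw [map_mul, Complex.conj_I, Complex.conj_ofReal]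
  push_cast
  ring

theorem exists_eq_circlePoint {J : ℕ} (hJ : 0 < J) {ζ : ℂ} (hζ : ‖ζ‖ = 1) :
    ∃ t, ζ = circlePoint J t := by
  have : (J : ℝ) ≠ 0 := by positivity
  refine ⟨ζ.arg * J / (2 * Real.pi), ?_⟩
  have h := Complex.norm_mul_exp_arg_mul_I ζ
  rw [hζ, Complex.ofReal_one, one_mul] at h
  rw [circlePoint, show 2 * Real.pi / J * (ζ.arg * J / (2 * Real.pi)) = ζ.arg by field_simp]
  exact h.symm

theorem norm_circlePoint_sub_le (J : ℕ) (t s : ℝ) :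
    ‖circlePoint J t - circlePoint J s‖ ≤ 2 * Real.pi / J * |t - s| := by
  have h := norm_sub_sq_of_norm_eq_one (norm_circlePoint J t) (norm_circlePoint J s)
  rw [circlePoint_mul_conj_re] at h
  have h2 := Real.one_sub_sq_div_two_le_cos (x := 2 * Real.pi / J * (t - s))
  have h3 : 0 ≤ 2 * Real.pi / J := by positivity
  refine abs_le_of_sq_le_sq' ?_ (by positivity) |>.2
  rw [h, mul_pow, sq_abs]
  nlinarith

theorem circlePoint_add_mul {J : ℕ} (hJ : 0 < J) (t : ℝ) (k : ℤ) :
    circlePoint J (t + k * J) = circlePoint J t := by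
  have : (J : ℝ) ≠ 0 := by positivity
  rw [circlePoint, circlePoint, Complex.exp_eq_exp_iff_exists_int]
  refine ⟨k, ?_⟩
  have : (J : ℂ) ≠ 0 := by exact_mod_cast hJ.ne'
  push_cast
  field_simp

theorem exists_circlePoint_int_eq {J : ℕ} (hJ : 0 < J) (N : ℤ) :
    ∃ j : Fin J, ∃ k : ℤ, N = j + k * J := by
  have h1 : 0 ≤ N % J := Int.emod_nonneg _ (by omega)
  have h2 : N % J < J := Int.emod_lt_of_pos _ (by omega)
  refine ⟨⟨(N % J).toNat, by omega⟩, N / J, ?_⟩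
  have := Int.emod_add_mul_ediv N J
  simp only [Int.toNat_of_nonneg h1]
  linarith

theorem fin_eq_of_add_mul_eq {J : ℕ} {i j : Fin J} {k l : ℤ}
    (h : (i : ℤ) + k * J = j + l * J) : i = j := by
  have h1 := congrArg (· % (J : ℤ)) h
  simp only [Int.add_mul_emod_self_right] at h1
  rw [Int.emod_eq_of_lt (by omega) (by omega), Int.emod_eq_of_lt (by omega) (by omega)] at h1
  exact Fin.ext (by omega)

theorem exists_int_of_cos_le {J : ℕ} (hJ : 0 < J) {t b : ℝ} (hb : 0 ≤ b) (hb1 : b ≤ 1 / 2)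
    (h : Real.cos (2 * Real.pi / J * b) ≤ Real.cos (2 * Real.pi / J * t)) :
    ∃ k : ℤ, |t - k * J| ≤ b := by
  have hJ' : (1 : ℝ) ≤ J := by exact_mod_cast hJ
  have hp := Real.pi_pos
  have hθ : 0 < 2 * Real.pi / J := by positivity
  obtain ⟨k, hk⟩ := exists_int_abs_sub_le_of_cos_le (by positivity) (by
    have : 2 * Real.pi / J ≤ 2 * Real.pi := div_le_self (by positivity) hJ'
    nlinarith) h
  refine ⟨k, ?_⟩
  have e : 2 * Real.pi / J * t - 2 * Real.pi * k = 2 * Real.pi / J * (t - k * J) := by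
    field_simp
  rw [e, abs_mul, abs_of_pos hθ] at hk
  exact le_of_mul_le_mul_left hk hθ

theorem exists_int_of_cos_lt {J : ℕ} (hJ : 0 < J) {t b : ℝ} (hb : 0 ≤ b) (hb1 : b ≤ 1 / 2)
    (h : Real.cos (2 * Real.pi / J * b) < Real.cos (2 * Real.pi / J * t)) :
    ∃ k : ℤ, |t - k * J| < b := by
  have hJ' : (1 : ℝ) ≤ J := by exact_mod_cast hJ
  have hp := Real.pi_pos
  have hθ : 0 < 2 * Real.pi / J := by positivity
  obtain ⟨k, hk⟩ := exists_int_abs_sub_lt_of_cos_lt (by positivity) (by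
    have : 2 * Real.pi / J ≤ 2 * Real.pi := div_le_self (by positivity) hJ'
    nlinarith) h
  refine ⟨k, ?_⟩
  have e : 2 * Real.pi / J * t - 2 * Real.pi * k = 2 * Real.pi / J * (t - k * J) := by
    field_simp
  rw [e, abs_mul, abs_of_pos hθ] at hk
  exact lt_of_mul_lt_mul_left hk hθ.le

/-- The unit circle can be cut into finitely many short arcs with endpoints `e j`; arbitrarily
small neighbourhoods of the endpoints leave disjoint closed caps with centres `c j`. -/
theorem exists_circle_subdivision {x : ℝ} (hx : 0 < x) :
    ∃ (J : ℕ) (e c : Fin J → ℂ), (∀ j, ‖e j‖ = 1) ∧ (∀ j, ‖c j‖ = 1) ∧ Function.Injective e ∧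
      ∀ d₀ > 0, ∃ d φ : ℝ, 0 < d ∧ d < d₀ ∧ 0 < φ ∧ φ < Real.pi ∧
        (∀ ζ : ℂ, ‖ζ‖ = 1 → (∀ j, (ζ * (starRingEnd ℂ) (c j)).re ≤ Real.cos φ) →
          ∃ i, ‖ζ - e i‖ ≤ d) ∧
        (∀ ζ : ℂ, ‖ζ‖ = 1 → ∀ i j, Real.cos φ ≤ (ζ * (starRingEnd ℂ) (c i)).re →
          Real.cos φ ≤ (ζ * (starRingEnd ℂ) (c j)).re → i = j) ∧
        (∀ ζ : ℂ, ‖ζ‖ = 1 → ∀ j, Real.cos φ ≤ (ζ * (starRingEnd ℂ) (c j)).re →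
          ‖ζ - e j‖ < x ∧ ∀ i, d ≤ ‖ζ - e i‖) := by
  have hp := Real.pi_pos
  obtain ⟨J, hJx⟩ := exists_nat_gt (2 * Real.pi / x)
  have hJr : (0 : ℝ) < J := lt_trans (by positivity) hJx
  have hJ : 0 < J := by exact_mod_cast hJr
  have hJ1 : (1 : ℝ) ≤ J := by exact_mod_cast hJ
  set θ := 2 * Real.pi / J with hθ
  have hθ0 : 0 < θ := by positivity
  have hθ1 : θ ≤ 2 * Real.pi := div_le_self (by positivity) hJ1
  have hθx : θ < x := by
    rw [div_lt_iff₀ hx] at hJx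
    rw [hθ, div_lt_iff₀ hJr]
    linarith
  refine ⟨J, fun j => circlePoint J (j : ℕ), fun j => circlePoint J ((j : ℕ) + 1 / 2),
    fun j => norm_circlePoint _ _, fun j => norm_circlePoint _ _, fun i j hij => ?_, ?_⟩
  · have h1 := circlePoint_mul_conj_re J (i : ℕ) (j : ℕ)
    dsimp only at hij
    rw [hij, Complex.mul_conj', norm_circlePoint] at h1
    obtain ⟨k, hk⟩ := exists_int_of_cos_le hJ (t := (i : ℕ) - (j : ℕ)) le_rfl (by norm_num)
      (by rw [← h1]; simp)
    rw [abs_nonpos_iff] at hk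
    refine fin_eq_of_add_mul_eq (k := 0) (l := k) ?_
    have : ((i : ℕ) : ℝ) = (j : ℕ) + k * J := by linarith
    have : ((i : ℕ) : ℤ) = (j : ℕ) + k * J := by exact_mod_cast this
    rw [zero_mul, add_zero, this]
  intro d₀ hd₀
  obtain ⟨a, ha0, ha1, had⟩ : ∃ a > 0, a ≤ 1 / 4 ∧ θ * a < d₀ := by
    refine ⟨min (1 / 4) (d₀ / (2 * θ)), by positivity, min_le_left _ _, ?_⟩
    calc θ * min (1 / 4) (d₀ / (2 * θ)) ≤ θ * (d₀ / (2 * θ)) := by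
          gcongr
          exact min_le_right _ _
      _ = d₀ / 2 := by field_simp
      _ < d₀ := by linarith
  have hθa : θ * a ≤ Real.pi / 2 := by nlinarith
  have hcosa : Real.cos (θ * a) < 1 := by
    rw [← Real.cos_zero]
    exact Real.cos_lt_cos_of_nonneg_of_le_pi le_rfl (by linarith) (by positivity)
  set d := Real.sqrt (2 - 2 * Real.cos (θ * a)) with hd
  have hd2 : d ^ 2 = 2 - 2 * Real.cos (θ * a) := Real.sq_sqrt (by linarith)
  have hd0 : 0 < d := Real.sqrt_pos.2 (by linarith)
  have hfar : ∀ t s : ℝ, ‖circlePoint J t - circlePoint J s‖ < d →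
      ∃ k : ℤ, |t - s - k * J| < a := by
    intro t s h
    have h1 := norm_sub_sq_of_norm_eq_one (norm_circlePoint J t) (norm_circlePoint J s)
    rw [circlePoint_mul_conj_re] at h1
    have h2 : ‖circlePoint J t - circlePoint J s‖ ^ 2 < d ^ 2 := by gcongr
    exact exists_int_of_cos_lt hJ ha0.le (by linarith) (by rw [← hθ] at *; linarith)
  have hnear : ∀ t s : ℝ, |t - s| ≤ a → ‖circlePoint J t - circlePoint J s‖ ≤ d := by
    intro t s h
    have h1 := norm_sub_sq_of_norm_eq_one (norm_circlePoint J t) (norm_circlePoint J s)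
    rw [circlePoint_mul_conj_re] at h1
    refine abs_le_of_sq_le_sq' ?_ hd0.le |>.2
    have h2 : Real.cos (θ * a) ≤ Real.cos (θ * (t - s)) := by
      rw [← Real.cos_abs (θ * (t - s)), abs_mul, abs_of_pos hθ0]
      exact Real.cos_le_cos_of_nonneg_of_le_pi (by positivity) (by linarith) (by gcongr)
    linarith
  have hcap : ∀ (t : ℝ) (j : Fin J), Real.cos (θ * (1 / 2 - a)) ≤
      (circlePoint J t * (starRingEnd ℂ) (circlePoint J ((j : ℕ) + 1 / 2))).re →
      ∃ k : ℤ, |t - (((j : ℕ) + k * J : ℤ) : ℝ) - 1 / 2| ≤ 1 / 2 - a := by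
    intro t j h
    rw [circlePoint_mul_conj_re] at h
    obtain ⟨k, hk⟩ := exists_int_of_cos_le hJ (by linarith) (by linarith) h
    refine ⟨k, ?_⟩
    convert hk using 2
    push_cast
    ring
  refine ⟨d, θ * (1 / 2 - a), hd0, ?_, mul_pos hθ0 (by linarith), by nlinarith, ?_, ?_, ?_⟩
  · refine lt_of_le_of_lt ?_ had
    refine abs_le_of_sq_le_sq' ?_ (by positivity) |>.2
    have := Real.one_sub_sq_div_two_le_cos (x := θ * a)
    linarith
  · intro ζ hζ h
    obtain ⟨t, rfl⟩ := exists_eq_circlePoint hJ hζ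
    have hend : ∀ N : ℤ, |t - N| ≤ a → ∃ i : Fin J,
        ‖circlePoint J t - circlePoint J (i : ℕ)‖ ≤ d := by
      intro N hN
      obtain ⟨i, k, hk⟩ := exists_circlePoint_int_eq hJ N
      refine ⟨i, ?_⟩
      rw [← circlePoint_add_mul hJ ((i : ℕ) : ℝ) k]
      refine hnear _ _ ?_
      rw [hk] at hN
      exact_mod_cast hN
    have h1 := Int.floor_le t
    have h2 := Int.lt_floor_add_one t
    by_cases h3 : t - ⌊t⌋ ≤ a
    · exact hend ⌊t⌋ (abs_le.2 ⟨by linarith, h3⟩)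
    by_cases h4 : 1 - a ≤ t - ⌊t⌋
    · exact hend (⌊t⌋ + 1) (abs_le.2 ⟨by push_cast; linarith, by push_cast; linarith⟩)
    exfalso
    obtain ⟨j, k, hk⟩ := exists_circlePoint_int_eq hJ ⌊t⌋
    have h5 := h j
    dsimp only at h5
    rw [← circlePoint_add_mul hJ ((j : ℕ) + 1 / 2 : ℝ) k, circlePoint_mul_conj_re, ← hθ] at h5
    have hfl : (⌊t⌋ : ℝ) = (j : ℕ) + k * J := by exact_mod_cast congrArg (Int.cast (R := ℝ)) hk
    have h6 : |t - ((j : ℕ) + 1 / 2 + k * J)| < 1 / 2 - a := by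
      rw [abs_lt]
      constructor <;> linarith
    rw [← Real.cos_abs, abs_mul, abs_of_pos hθ0] at h5
    refine absurd h5 (not_le.2 (Real.cos_lt_cos_of_nonneg_of_le_pi (by positivity) ?_ (by gcongr)))
    nlinarith
  · intro ζ hζ i j hi hj
    obtain ⟨t, rfl⟩ := exists_eq_circlePoint hJ hζ
    obtain ⟨k, hk⟩ := hcap t i hi
    obtain ⟨l, hl⟩ := hcap t j hj
    rw [abs_le] at hk hl
    refine fin_eq_of_add_mul_eq (k := k) (l := l) ?_
    have h1 : ⌊t⌋ = (i : ℕ) + k * J := Int.floor_eq_iff.2 ⟨by linarith, by linarith⟩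
    have h2 : ⌊t⌋ = (j : ℕ) + l * J := Int.floor_eq_iff.2 ⟨by linarith, by linarith⟩
    exact h1.symm.trans h2
  · intro ζ hζ j hj
    obtain ⟨t, rfl⟩ := exists_eq_circlePoint hJ hζ
    obtain ⟨k, hk⟩ := hcap t j hj
    constructor
    · dsimp only
      rw [← circlePoint_add_mul hJ ((j : ℕ) : ℝ) k]
      refine (norm_circlePoint_sub_le J _ _).trans_lt (lt_of_le_of_lt ?_ hθx)
      rw [← hθ]
      refine mul_le_of_le_one_right hθ0.le ?_
      push_cast at hk
      rw [abs_le] at hk ⊢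
      constructor <;> linarith
    · intro i
      by_contra! hlt
      obtain ⟨l, hl⟩ := hfar _ _ hlt
      rw [abs_le] at hk
      rw [abs_lt] at hl
      set N : ℤ := (j : ℕ) + k * J with hN
      have e : ((i : ℕ) : ℝ) + l * J = (((i : ℕ) + l * J : ℤ) : ℝ) := by push_cast; ring
      set N' : ℤ := (i : ℕ) + l * J with hN'
      have h1 : (N' : ℝ) < N + 1 := by linarith
      have h2 : (N : ℝ) < N' := by linarith
      have h3 : N' < N + 1 := by exact_mod_cast h1
      have h4 : N < N' := by exact_mod_cast h2
      omega

section

variable {E : Type*} [NormedAddCommGroup E] [NormedSpace ℂ E]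

theorem exists_raised_disc_step {X : Set E} (hX : IsOpen X) {ρ : E → ℝ} (hρ : ContinuousOn ρ X)
    {m L R κ : ℝ} (hmL : m < L) (hR : 0 < R) (hκ : 0 < κ)
    (hpush : ∀ z₀ ∈ X, m ≤ ρ z₀ → ∃ w, PushData ρ X L R κ z₀ w)
    {s : ℝ} (hs : 0 < s) (hs1 : s < 1) (hsR : s ≤ R / 16)
    {f : ℂ → E} (hf : IsDisc X f) (hm : ∀ ζ : ℂ, ‖ζ‖ = 1 → m < ρ (f ζ))
    {τ δ r : ℝ} (hτ : 0 < τ) (hδ : 0 < δ) (hr : r < 1) :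
    ∃ g : ℂ → E, IsDisc X g ∧ g 0 = f 0 ∧ deriv g 0 = deriv f 0 ∧
      (∀ ζ : ℂ, ‖ζ‖ ≤ r → ‖g ζ - f ζ‖ < δ) ∧
      (∀ ζ : ℂ, ‖ζ‖ ≤ 1 → min (ρ (f ζ)) (m - 1 / 2) - τ < ρ (g ζ)) ∧
      (∀ ζ : ℂ, ‖ζ‖ = 1 → min (m + κ * s ^ 2) L - τ < ρ (g ζ)) := by
  obtain ⟨x, hx, hunif⟩ := Metric.uniformContinuousOn_iff.1
    ((isCompact_closedBall _ _).uniformContinuousOn_of_continuous hf.cont) (R / 4) (by positivity)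
  obtain ⟨J, e, c, he, hc, hinj, harcs⟩ := exists_circle_subdivision hx
  choose w hw using fun j => hpush (f (e j)) (hf.mem _ (by simp [he])) (hm _ (he j)).le
  obtain ⟨d₀, hd₀, hspike⟩ := exists_spiked_disc hX hρ hf hmL hR hκ hm he hinj hw hs hs1 hsR
    (half_pos hτ) (half_pos hδ) hr
  obtain ⟨d, φ, hd, hdd₀, hφ0, hφ1, hends, hdisj, hcap⟩ := harcs d₀ hd₀
  obtain ⟨g₁, hg₁, hg₁0, hg₁d, hg₁δ, hg₁ρ, hg₁e, hg₁f⟩ := hspike d hd hdd₀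
  obtain ⟨g, hg, hg0, hgd, hgδ, hgρ, hgc⟩ := exists_capped_disc hX hρ hg₁ (m := m - τ / 2)
    (l := min (m + κ * s ^ 2) L - τ / 2) hR hκ hφ0 hφ1 hc hw
    (fun ζ hζ h => hg₁e ζ hζ.le (hends ζ hζ h)) hdisj
    (fun ζ hζ j h => by
      have h1 := hg₁f ζ hζ.le (hcap ζ hζ j h).2
      have h2 := hunif ζ (by simpa using hζ.le) (e j) (by simp [he])
        (by rw [dist_eq_norm]; exact (hcap ζ hζ j h).1)
      rw [dist_eq_norm] at h2
      calc ‖g₁ ζ - f (e j)‖ ≤ ‖g₁ ζ - f ζ‖ + ‖f ζ - f (e j)‖ := norm_sub_le_norm_sub_add_norm_sub ..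
        _ < R / 2 := by linarith)
    (fun ζ hζ => by
      have := hg₁ρ ζ hζ.le
      rwa [min_eq_right (hm ζ hζ).le] at this)
    (half_pos hτ) (half_pos hδ) hr
  refine ⟨g, hg, hg0.trans hg₁0, hgd.trans hg₁d, fun ζ hζ => ?_, fun ζ hζ => ?_, fun ζ hζ => ?_⟩
  · calc ‖g ζ - f ζ‖ ≤ ‖g ζ - g₁ ζ‖ + ‖g₁ ζ - f ζ‖ := norm_sub_le_norm_sub_add_norm_sub ..
      _ < δ := by linarith [hgδ ζ hζ, hg₁δ ζ hζ]
  · have h1 := hgρ ζ hζ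
    have h2 := hg₁ρ ζ hζ
    have h3 : min (ρ (f ζ)) (m - 1 / 2) - τ / 2 ≤ min (ρ (g₁ ζ)) (m - τ / 2 - 1 / 2) := by
      refine le_min (le_trans ?_ h2.le) ?_
      · gcongr
        linarith
      · linarith [min_le_right (ρ (f ζ)) (m - 1 / 2)]
    linarith
  · have h1 := hgc ζ hζ
    have h2 : min (m + κ * s ^ 2) L - τ / 2 ≤
        min (min (m - τ / 2 + κ) (min (m + κ * s ^ 2) L - τ / 2)) L := by
      have : κ * s ^ 2 ≤ κ := mul_le_of_le_one_right hκ.le (pow_le_one₀ hs.le hs1.le)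
      refine le_min (le_min ?_ le_rfl) ?_
      · linarith [min_le_left (m + κ * s ^ 2) L]
      · linarith [min_le_right (m + κ * s ^ 2) L]
    linarith

theorem exists_raised_disc {X : Set E} (hX : IsOpen X) {ρ : E → ℝ}
    (hρ : ContDiffOn ℝ (⊤ : ℕ∞) ρ X) (hexh : ∀ c : ℝ, IsCompact {z ∈ X | ρ z ≤ c}) {M : ℝ}
    (hLevi : ∀ z ∈ X, M < ρ z → ∃ V : Submodule ℂ E, Module.finrank ℂ V = 2 ∧
      ∀ w ∈ V, w ≠ 0 → 0 < fderiv ℝ (fderiv ℝ ρ) z w w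
        + fderiv ℝ (fderiv ℝ ρ) z (Complex.I • w) (Complex.I • w))
    {m₀ : ℝ} (hm₀ : M < m₀) (L : ℝ) {f : ℂ → E} (hf : IsDisc X f)
    (hm : ∀ ζ : ℂ, ‖ζ‖ = 1 → m₀ < ρ (f ζ)) {δ r : ℝ} (hδ : 0 < δ) (hr : r < 1) :
    ∃ g : ℂ → E, IsDisc X g ∧ g 0 = f 0 ∧ deriv g 0 = deriv f 0 ∧
      (∀ ζ : ℂ, ‖ζ‖ ≤ r → ‖g ζ - f ζ‖ < δ) ∧
      (∀ ζ : ℂ, ‖ζ‖ ≤ 1 → min (ρ (f ζ)) (m₀ - 1 / 2) - δ < ρ (g ζ)) ∧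
      (∀ ζ : ℂ, ‖ζ‖ = 1 → L < ρ (g ζ)) := by
  obtain ⟨R, hR, κ, hκ, hpush⟩ := exists_uniform_pushData hX hρ hexh hLevi hm₀ (L + 1)
  obtain ⟨s, hs, hs1, hsR⟩ : ∃ s > 0, s < 1 ∧ s ≤ R / 16 :=
    ⟨min (1 / 2) (R / 16), by positivity, (min_le_left _ _).trans_lt (by norm_num),
      min_le_right _ _⟩
  set γ := κ * s ^ 2 with hγ
  have hγ0 : 0 < γ := by positivity
  have main : ∀ k : ℕ, ∀ m, m₀ ≤ m → L ≤ m + k * (γ / 2) → ∀ f : ℂ → E, IsDisc X f →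
      (∀ ζ : ℂ, ‖ζ‖ = 1 → m < ρ (f ζ)) → ∀ δ : ℝ, 0 < δ →
      ∃ g : ℂ → E, IsDisc X g ∧ g 0 = f 0 ∧ deriv g 0 = deriv f 0 ∧
      (∀ ζ : ℂ, ‖ζ‖ ≤ r → ‖g ζ - f ζ‖ < δ) ∧
      (∀ ζ : ℂ, ‖ζ‖ ≤ 1 → min (ρ (f ζ)) (m₀ - 1 / 2) - δ < ρ (g ζ)) ∧
      (∀ ζ : ℂ, ‖ζ‖ = 1 → L < ρ (g ζ)) := by
    intro k
    induction k with
    | zero =>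
      intro m _ hL f hf hm δ hδ
      refine ⟨f, hf, rfl, rfl, by simp [hδ], fun ζ _ => ?_, fun ζ hζ => ?_⟩
      · linarith [min_le_left (ρ (f ζ)) (m₀ - 1 / 2)]
      · have := hm ζ hζ
        simp only [Nat.cast_zero, zero_mul, add_zero] at hL
        linarith
    | succ k ih =>
      intro m hm₀m hL f hf hm δ hδ
      rcases le_or_gt L m with hLm | hmL
      · refine ⟨f, hf, rfl, rfl, by simp [hδ], fun ζ _ => ?_, fun ζ hζ => ?_⟩
        · linarith [min_le_left (ρ (f ζ)) (m₀ - 1 / 2)]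
        · linarith [hm ζ hζ]
      obtain ⟨τ, hτ, hτγ, hτ1, hτδ⟩ : ∃ τ > 0, τ ≤ γ / 2 ∧ τ ≤ 1 ∧ τ ≤ δ / 2 :=
        ⟨min (γ / 2) (min 1 (δ / 2)), by positivity, min_le_left _ _,
          (min_le_right _ _).trans (min_le_left _ _), (min_le_right _ _).trans (min_le_right _ _)⟩
      obtain ⟨g₁, hg₁, hg₁0, hg₁d, hg₁δ, hg₁ρ, hg₁c⟩ := exists_raised_disc_step hX hρ.continuousOn
        (by linarith : m < L + 1) hR hκ (fun z hz hmz => hpush z hz (hm₀m.trans hmz)) hs hs1 hsR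
        hf hm hτ (half_pos hδ) hr
      obtain ⟨g, hg, hg0, hgd, hgδ, hgρ, hgc⟩ := ih (min (m + γ / 2) L)
        (le_min (by linarith) (by linarith)) (by
          push_cast at hL
          rw [← min_add_add_right]
          refine le_min (by linarith) (le_add_of_nonneg_right (by positivity))) g₁ hg₁
        (fun ζ hζ => by
          refine lt_of_le_of_lt ?_ (hg₁c ζ hζ)
          rw [← min_sub_sub_right]
          exact min_le_min (by linarith) (by linarith)) (δ / 2) (half_pos hδ)
      refine ⟨g, hg, hg0.trans hg₁0, hgd.trans hg₁d, fun ζ hζ => ?_, fun ζ hζ => ?_, hgc⟩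
      · calc ‖g ζ - f ζ‖ ≤ ‖g ζ - g₁ ζ‖ + ‖g₁ ζ - f ζ‖ := norm_sub_le_norm_sub_add_norm_sub ..
          _ < δ := by linarith [hgδ ζ hζ, hg₁δ ζ hζ]
      · have h1 := hgρ ζ hζ
        have h2 := hg₁ρ ζ hζ
        have h3 : min (ρ (f ζ)) (m₀ - 1 / 2) - δ / 2 ≤ min (ρ (g₁ ζ)) (m₀ - 1 / 2) := by
          refine le_min (le_trans ?_ h2.le) ?_
          · gcongr
          · linarith [min_le_right (ρ (f ζ)) (m₀ - 1 / 2)]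
        linarith
  obtain ⟨k, hk⟩ := exists_nat_ge ((L - m₀) / (γ / 2))
  rw [div_le_iff₀ (by positivity)] at hk
  exact main k m₀ le_rfl (by linarith) f hf hm δ hδ

end

section

variable {E : Type*} [NormedAddCommGroup E] [NormedSpace ℂ E]

theorem exists_dependent_sequence {α : Type*} {Q : ℕ → α → Prop} {S : ℕ → α → α → Prop} {a₀ : α}
    (h₀ : Q 0 a₀) (h : ∀ k a, Q k a → ∃ b, Q (k + 1) b ∧ S k a b) :
    ∃ u : ℕ → α, u 0 = a₀ ∧ (∀ k, Q k (u k)) ∧ ∀ k, S k (u k) (u (k + 1)) := by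
  have : Nonempty α := ⟨a₀⟩
  choose! next hQ hS using h
  have hu : ∀ k, Q k (Nat.rec a₀ next k) := fun k => by
    induction k with
    | zero => exact h₀
    | succ k ih => exact hQ k _ ih
  exact ⟨fun k => Nat.rec a₀ next k, rfl, hu, fun k => hS k _ (hu k)⟩

/-- A sequence of holomorphic maps with geometrically decreasing steps on exhausting discs
converges to a holomorphic map on the open disc. -/
theorem exists_limit_disc [CompleteSpace E] {F : ℕ → ℂ → E} {r δ : ℕ → ℝ} (hr1 : ∀ k, r k < 1)
    (hr : Monotone r) (hrt : Filter.Tendsto r Filter.atTop (nhds 1))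
    (hF : ∀ k, DifferentiableOn ℂ (F k) (ball 0 1)) (hδ : ∀ k, δ (k + 1) ≤ δ k / 2)
    (hFδ : ∀ k, ∀ ζ : ℂ, ‖ζ‖ ≤ r k → ‖F (k + 1) ζ - F k ζ‖ ≤ δ k) :
    ∃ g : ℂ → E, DifferentiableOn ℂ g (ball 0 1) ∧
      (∀ k, ∀ ζ : ℂ, ‖ζ‖ ≤ r k → ‖g ζ - F k ζ‖ ≤ 2 * δ k) ∧
      (∀ ζ : ℂ, ‖ζ‖ < 1 → Filter.Tendsto (fun k => F k ζ) Filter.atTop (nhds (g ζ))) ∧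
      Filter.Tendsto (fun k => deriv (F k) 0) Filter.atTop (nhds (deriv g 0)) := by
  have hδk : ∀ k i, δ (k + i) ≤ δ k / 2 ^ i := by
    intro k i
    induction i with
    | zero => simp
    | succ i ih =>
      calc δ (k + (i + 1)) ≤ δ (k + i) / 2 := hδ _
        _ ≤ δ k / 2 ^ i / 2 := by gcongr
        _ = δ k / 2 ^ (i + 1) := by rw [pow_succ]; ring
  have hstep : ∀ k, ∀ ζ : ℂ, ‖ζ‖ ≤ r k → ∀ i,
      dist (F (k + i) ζ) (F (k + (i + 1)) ζ) ≤ 2 * δ k / 2 / 2 ^ i := by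
    intro k ζ hζ i
    rw [dist_comm, dist_eq_norm, mul_div_cancel_left₀ _ two_ne_zero]
    exact (hFδ _ ζ (hζ.trans (hr (Nat.le_add_right k i)))).trans (hδk k i)
  have hin : ∀ ζ : ℂ, ‖ζ‖ < 1 → ∃ k, ‖ζ‖ < r k := fun ζ hζ =>
    (hrt.eventually (lt_mem_nhds hζ)).exists
  have hconv : ∀ ζ : ℂ, ∃ a, ‖ζ‖ < 1 → Filter.Tendsto (fun k => F k ζ) Filter.atTop (nhds a) := by
    intro ζ
    by_cases hζ : ‖ζ‖ < 1
    · obtain ⟨k, hk⟩ := hin ζ hζ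
      obtain ⟨a, ha⟩ := cauchySeq_tendsto_of_complete
        (cauchySeq_of_le_geometric_two (hstep k ζ hk.le))
      refine ⟨a, fun _ => ?_⟩
      rw [← Filter.tendsto_add_atTop_iff_nat k]
      simpa only [add_comm] using ha
    · exact ⟨0, fun h => absurd h hζ⟩
  choose g hg using hconv
  have hclose : ∀ k, ∀ ζ : ℂ, ‖ζ‖ ≤ r k → ‖g ζ - F k ζ‖ ≤ 2 * δ k := by
    intro k ζ hζ
    have h1 := hg ζ (hζ.trans_lt (hr1 k))
    rw [← Filter.tendsto_add_atTop_iff_nat k] at h1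
    simp only [add_comm _ k] at h1
    have := dist_le_of_le_geometric_two_of_tendsto₀ (hstep k ζ hζ) h1
    rwa [dist_comm, dist_eq_norm] at this
  have hδ0 : Filter.Tendsto (fun k => 2 * δ 0 / 2 ^ k) Filter.atTop (nhds 0) := by
    have := (tendsto_pow_atTop_nhds_zero_of_lt_one (r := (1 / 2 : ℝ)) (by norm_num)
      (by norm_num)).const_mul (2 * δ 0)
    rw [mul_zero] at this
    refine this.congr fun k => ?_
    rw [one_div, inv_pow, div_eq_mul_inv]
  have hunif : TendstoLocallyUniformlyOn F g Filter.atTop (ball 0 1) := by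
    rw [Metric.tendstoLocallyUniformlyOn_iff]
    intro ε hε ζ hζ
    rw [mem_ball_zero_iff] at hζ
    obtain ⟨k, hk⟩ := hin ζ hζ
    refine ⟨ball 0 (r k), mem_nhdsWithin_of_mem_nhds (isOpen_ball.mem_nhds (by simpa using hk)), ?_⟩
    filter_upwards [hδ0.eventually (gt_mem_nhds hε), Filter.eventually_ge_atTop k]
      with N hN hkN y hy
    rw [mem_ball_zero_iff] at hy
    rw [dist_eq_norm]
    refine (hclose N y (hy.le.trans (hr hkN))).trans_lt (lt_of_le_of_lt ?_ hN)
    have := hδk 0 N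
    rw [zero_add] at this
    calc 2 * δ N ≤ 2 * (δ 0 / 2 ^ N) := by gcongr
      _ = _ := by ring
  refine ⟨g, hunif.differentiableOn (Filter.Eventually.of_forall hF) isOpen_ball, hclose, hg,
    ?_⟩
  exact (hunif.deriv (Filter.Eventually.of_forall hF) isOpen_ball).tendsto_at (by simp)

theorem exists_radius_lt_of_sphere {X : Set E} {ρ : E → ℝ} (hρ : ContinuousOn ρ X) {f : ℂ → E}
    (hf : IsDisc X f) {m : ℝ} (hm : ∀ ζ : ℂ, ‖ζ‖ = 1 → m < ρ (f ζ)) {r₁ : ℝ} (hr₁ : r₁ < 1) :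
    ∃ r, r₁ ≤ r ∧ r < 1 ∧ ∀ ζ : ℂ, r ≤ ‖ζ‖ → ‖ζ‖ ≤ 1 → m < ρ (f ζ) := by
  set S : Set ℂ := {ζ | ζ ∈ closedBall (0 : ℂ) 1 ∧ ρ (f ζ) ≤ m} with hS
  have hSc : IsCompact S := (isCompact_closedBall (0 : ℂ) 1).of_isClosed_subset
    ((hρ.comp hf.cont hf.mem).preimage_isClosed_of_isClosed isClosed_closedBall isClosed_Iic)
    fun ζ hζ => hζ.1
  obtain ⟨q, hq, hqS⟩ : ∃ q < 1, ∀ ζ ∈ S, ‖ζ‖ ≤ q := by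
    rcases S.eq_empty_or_nonempty with h | hne
    · exact ⟨0, one_pos, by simp [h]⟩
    · obtain ⟨ζ₀, hζ₀, hmax⟩ := hSc.exists_isMaxOn hne continuous_norm.continuousOn
      refine ⟨‖ζ₀‖, lt_of_le_of_ne (by simpa using hζ₀.1) fun h => ?_, fun ζ hζ => hmax hζ⟩
      exact absurd (hm ζ₀ h) (not_lt.2 hζ₀.2)
  refine ⟨max r₁ ((q + 1) / 2), le_max_left _ _, max_lt hr₁ (by linarith), fun ζ hζ hζ1 => ?_⟩
  by_contra! hle
  have h1 := hqS ζ ⟨by simpa using hζ1, hle⟩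
  have h2 := (le_max_right r₁ ((q + 1) / 2)).trans hζ
  linarith

end

section

theorem exists_uniform_metric_close {E : Type*} [NormedAddCommGroup E] {X K : Set E}
    (hK : IsCompact K) (hKX : K ⊆ X) {d : E → E → ℝ}
    (hd_symm : ∀ x ∈ X, ∀ y ∈ X, d x y = d y x)
    (hd_tri : ∀ x ∈ X, ∀ y ∈ X, ∀ z ∈ X, d x z ≤ d x y + d y z)
    (hd_top : ∀ x ∈ X, ∀ ε > (0 : ℝ), ∃ δ > (0 : ℝ), ∀ y ∈ X, dist x y < δ → d x y < ε)
    {ε : ℝ} (hε : 0 < ε) :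
    ∃ η > 0, ∀ x ∈ K, ∀ y ∈ X, ‖y - x‖ < η → d y x < ε := by
  have h := hK.eventually_forall_of_forall_eventually (x₀ := (0 : E))
    (P := fun v x => x + v ∈ X → x ∈ X → d (x + v) x < ε) ?_
  · obtain ⟨η, hη, h'⟩ := Metric.eventually_nhds_iff_ball.1 h
    refine ⟨η, hη, fun x hx y hyX hy => ?_⟩
    have := h' (y - x) (by simpa using hy) x hx
    simpa [hyX, hKX hx] using this
  · intro x hx
    obtain ⟨δ, hδ, hxδ⟩ := hd_top x (hKX hx) (ε / 2) (half_pos hε)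
    have h1 : Filter.Tendsto (fun p : E × E => p.2 + p.1) (nhds (0, x)) (nhds x) := by
      have : Continuous (fun p : E × E => p.2 + p.1) := by fun_prop
      simpa using this.tendsto (0, x)
    have h2 : Filter.Tendsto (fun p : E × E => p.2) (nhds (0, x)) (nhds x) :=
      continuous_snd.tendsto (0, x)
    filter_upwards [h1.eventually (ball_mem_nhds x hδ), h2.eventually (ball_mem_nhds x hδ)]
      with p hp1 hp2 hX1 hX2
    have h3 := hxδ _ hX1 (by rwa [dist_comm])
    have h4 := hxδ _ hX2 (by rwa [dist_comm])
    have h5 := hd_tri _ hX1 x (hKX hx) _ hX2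
    rw [hd_symm _ hX1 x (hKX hx)] at h5
    linarith

variable {E : Type*} [NormedAddCommGroup E] [NormedSpace ℂ E]

/-- One stage of the construction of a proper disc: a closed disc together with a radius and a
margin of allowed perturbation. -/
structure IsStage (X : Set E) (ρ : E → ℝ) (m r₁ : ℝ) (p : (ℂ → E) × ℝ × ℝ) : Prop where
  disc : IsDisc X p.1
  radius_ge : r₁ ≤ p.2.1
  radius_lt : p.2.1 < 1
  level : ∀ ζ : ℂ, p.2.1 ≤ ‖ζ‖ → ‖ζ‖ ≤ 1 → m < ρ (p.1 ζ)
  margin_pos : 0 < p.2.2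
  margin : ∀ ζ : ℂ, ‖ζ‖ ≤ 1 → ∀ y, ‖y - p.1 ζ‖ < 4 * p.2.2 → y ∈ X ∧ |ρ y - ρ (p.1 ζ)| < 1

theorem exists_isStage {X : Set E} (hX : IsOpen X) {ρ : E → ℝ} (hρ : ContinuousOn ρ X)
    {f : ℂ → E} (hf : IsDisc X f) {m : ℝ} (hm : ∀ ζ : ℂ, ‖ζ‖ = 1 → m < ρ (f ζ))
    {r₁ : ℝ} (hr₁ : r₁ < 1) {δ₁ : ℝ} (hδ₁ : 0 < δ₁) :
    ∃ r δ : ℝ, IsStage X ρ m r₁ (f, r, δ) ∧ δ ≤ δ₁ := by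
  obtain ⟨r, hr₁r, hr1, hlevel⟩ := exists_radius_lt_of_sphere hρ hf hm hr₁
  obtain ⟨e, he, hmargin⟩ := exists_uniform_nhds_of_compact hX
    ((isCompact_closedBall (0 : ℂ) 1).image_of_continuousOn hf.cont)
    (Set.image_subset_iff.2 hf.mem) hρ one_pos
  refine ⟨r, min (e / 4) δ₁, ⟨hf, hr₁r, hr1, hlevel, by positivity, fun ζ hζ y hy => ?_⟩,
    min_le_right _ _⟩
  refine hmargin _ ⟨ζ, by simpa using hζ, rfl⟩ y (hy.trans_le ?_)
  have := min_le_left (e / 4) δ₁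
  dsimp only
  linarith

theorem exists_proper_disc [CompleteSpace E] {X : Set E} (hX : IsOpen X) {ρ : E → ℝ}
    (hρ : ContDiffOn ℝ (⊤ : ℕ∞) ρ X) (hexh : ∀ c : ℝ, IsCompact {z ∈ X | ρ z ≤ c}) {M : ℝ}
    (hLevi : ∀ z ∈ X, M < ρ z → ∃ V : Submodule ℂ E, Module.finrank ℂ V = 2 ∧
      ∀ w ∈ V, w ≠ 0 → 0 < fderiv ℝ (fderiv ℝ ρ) z w w
        + fderiv ℝ (fderiv ℝ ρ) z (Complex.I • w) (Complex.I • w))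
    {f : ℂ → E} (hf : IsDisc X f) (hM : ∀ ζ : ℂ, ‖ζ‖ = 1 → M < ρ (f ζ)) {r₁ η : ℝ}
    (hr₁ : r₁ < 1) (hη : 0 < η) :
    ∃ g : ℂ → E, DifferentiableOn ℂ g (ball 0 1) ∧ (∀ ζ ∈ ball (0 : ℂ) 1, g ζ ∈ X) ∧
      (∀ K ⊆ X, IsCompact K → IsCompact {ζ ∈ ball (0 : ℂ) 1 | g ζ ∈ K}) ∧
      (∀ ζ : ℂ, ‖ζ‖ ≤ r₁ → ‖g ζ - f ζ‖ < η) ∧ g 0 = f 0 ∧ deriv g 0 = deriv f 0 := by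
  have hsph : sphere (0 : ℂ) 1 ⊆ closedBall 0 1 := sphere_subset_closedBall
  obtain ⟨ζ₀, hζ₀, hmin⟩ := (isCompact_sphere (0 : ℂ) 1).exists_isMinOn ⟨1, by simp⟩
    ((hρ.continuousOn.comp hf.cont hf.mem).mono hsph)
  have hMζ₀ := hM ζ₀ (by simpa using hζ₀)
  obtain ⟨m₀, hMm₀, hm₀⟩ := exists_between hMζ₀
  have hm : ∀ ζ : ℂ, ‖ζ‖ = 1 → m₀ < ρ (f ζ) := fun ζ hζ =>
    hm₀.trans_le (hmin (by simpa using hζ : ζ ∈ sphere (0 : ℂ) 1))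
  obtain ⟨R₀, δ₀, hstage₀, hδ₀⟩ := exists_isStage hX hρ.continuousOn hf hm
    (max_lt hr₁ one_pos : max r₁ 0 < 1) (by positivity : 0 < η / 4)
  have hq : ∀ k : ℕ, 1 - 1 / ((k : ℝ) + 1) < 1 := fun k => sub_lt_self _ (by positivity)
  obtain ⟨u, hu₀, hQ, hS⟩ := exists_dependent_sequence (α := (ℂ → E) × ℝ × ℝ)
    (Q := fun k p => IsStage X ρ (m₀ + k) (max 0 (1 - 1 / ((k : ℝ) + 1))) p)
    (S := fun k p q => p.2.1 ≤ q.2.1 ∧ q.2.2 ≤ p.2.2 / 2 ∧ q.1 0 = p.1 0 ∧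
      deriv q.1 0 = deriv p.1 0 ∧ (∀ ζ : ℂ, ‖ζ‖ ≤ p.2.1 → ‖q.1 ζ - p.1 ζ‖ ≤ p.2.2) ∧
      ∀ ζ : ℂ, p.2.1 ≤ ‖ζ‖ → ‖ζ‖ ≤ 1 → m₀ + k - 1 < ρ (q.1 ζ))
    (a₀ := (f, R₀, δ₀))
    ⟨hf, by simpa using (le_max_right r₁ 0).trans hstage₀.radius_ge, hstage₀.radius_lt,
      by simpa using hstage₀.level, hstage₀.margin_pos, hstage₀.margin⟩
    (by
      rintro k ⟨F, r, δ⟩ hF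
      have hFδ : 0 < δ := hF.margin_pos
      have hFr : r < 1 := hF.radius_lt
      have hk0 : (0 : ℝ) ≤ k := k.cast_nonneg
      obtain ⟨G, hG, hG0, hGd, hGδ, hGρ, hGc⟩ := exists_raised_disc hX hρ hexh hLevi
        (by linarith : M < m₀ + k) (m₀ + (k + 1 : ℕ)) hF.disc
        (fun ζ hζ => hF.level ζ (hζ ▸ hFr.le) hζ.le)
        (lt_min hFδ one_half_pos : 0 < min δ (1 / 2)) hFr
      obtain ⟨r', δ', hstage, hδ'⟩ := exists_isStage hX hρ.continuousOn hG hGc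
        (max_lt hFr (max_lt one_pos (hq (k + 1)))) (half_pos hFδ)
      refine ⟨(G, r', δ'), ⟨hG, (le_max_right _ _).trans hstage.radius_ge, hstage.radius_lt,
        hstage.level, hstage.margin_pos, hstage.margin⟩, (le_max_left _ _).trans hstage.radius_ge,
        hδ', hG0, hGd, fun ζ hζ => ((hGδ ζ hζ).trans_le (min_le_left _ _)).le,
        fun ζ hζ hζ1 => ?_⟩
      have h1 := hGρ ζ hζ1
      have h2 : m₀ + k < ρ (F ζ) := hF.level ζ hζ hζ1
      rw [min_eq_right (by dsimp only; linarith)] at h1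
      linarith [min_le_right δ (1 / 2)])
  set F : ℕ → ℂ → E := fun k => (u k).1 with hFdef
  set r : ℕ → ℝ := fun k => (u k).2.1 with hrdef
  set δ : ℕ → ℝ := fun k => (u k).2.2 with hδdef
  have hr1 : ∀ k, r k < 1 := fun k => (hQ k).radius_lt
  have hrmono : Monotone r := monotone_nat_of_le_succ fun k => (hS k).1
  have hrt : Filter.Tendsto r Filter.atTop (nhds 1) := by
    refine tendsto_of_tendsto_of_tendsto_of_le_of_le ?_ tendsto_const_nhds
      (fun k => (le_max_right _ _).trans (hQ k).radius_ge) fun k => (hr1 k).le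
    simpa using (tendsto_one_div_add_atTop_nhds_zero_nat (𝕜 := ℝ)).const_sub 1
  obtain ⟨g, hg, hgF, hgt, hgd⟩ := exists_limit_disc hr1 hrmono hrt (fun k => (hQ k).disc.diff)
    (fun k => (hS k).2.1) fun k => (hS k).2.2.2.2.1
  have hnear : ∀ k, ∀ ζ : ℂ, ‖ζ‖ ≤ r k → g ζ ∈ X ∧ |ρ (g ζ) - ρ (F k ζ)| < 1 := fun k ζ hζ =>
    (hQ k).margin ζ (hζ.trans (hr1 k).le) _
      ((hgF k ζ hζ).trans_lt (by linarith [(hQ k).margin_pos]))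
  have hF0 : ∀ k, F k 0 = f 0 ∧ deriv (F k) 0 = deriv f 0 := by
    intro k
    induction k with
    | zero => simp [hFdef, hu₀]
    | succ k ih => exact ⟨(hS k).2.2.1.trans ih.1, (hS k).2.2.2.1.trans ih.2⟩
  have hr0 : ∀ k, 0 ≤ r k := fun k => (le_max_left _ _).trans (hQ k).radius_ge
  have hin : ∀ ζ : ℂ, ‖ζ‖ < 1 → ∃ k, ‖ζ‖ ≤ r k := fun ζ hζ =>
    ((hrt.eventually (lt_mem_nhds hζ)).exists).imp fun _ h => h.le
  refine ⟨g, hg, fun ζ hζ => ?_, fun K hKX hK => ?_, fun ζ hζ => ?_, ?_, ?_⟩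
  · obtain ⟨k, hk⟩ := hin ζ (by simpa using hζ)
    exact (hnear k ζ hk).1
  · obtain ⟨C, hC⟩ := (hK.image_of_continuousOn (hρ.continuousOn.mono hKX)).bddAbove
    obtain ⟨k, hk⟩ := exists_nat_ge (C - m₀ + 2)
    have hsub : {ζ ∈ ball (0 : ℂ) 1 | g ζ ∈ K} = {ζ ∈ closedBall (0 : ℂ) (r k) | g ζ ∈ K} := by
      ext ζ
      simp only [Set.mem_ofPred_eq, mem_ball_zero_iff, mem_closedBall_zero_iff]
      refine ⟨fun ⟨h1, h2⟩ => ⟨?_, h2⟩, fun ⟨h1, h2⟩ => ⟨h1.trans_lt (hr1 k), h2⟩⟩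
      by_contra! hlt
      obtain ⟨N, hN, hNmin⟩ : ∃ N, ‖ζ‖ ≤ r N ∧ ∀ j < N, r j < ‖ζ‖ := by
        classical
        exact ⟨Nat.find (hin ζ h1), Nat.find_spec (hin ζ h1),
          fun j hj => not_le.1 (Nat.find_min (hin ζ h1) hj)⟩
      have hkN : k < N := by
        by_contra! hle
        exact absurd (hN.trans (hrmono hle)) (not_le.2 hlt)
      obtain ⟨j, rfl⟩ := Nat.exists_eq_succ_of_ne_zero (by omega : N ≠ 0)
      have h3 := (hS j).2.2.2.2.2 ζ (hNmin j (Nat.lt_succ_self j)).le h1.le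
      have h4 := (abs_lt.1 (hnear (j + 1) ζ hN).2).1
      have h5 : (k : ℝ) ≤ j := by exact_mod_cast Nat.lt_succ_iff.1 hkN
      have h6 := hC ⟨g ζ, h2, rfl⟩
      linarith
    rw [hsub]
    refine (isCompact_closedBall (0 : ℂ) (r k)).of_isClosed_subset
      ((hg.continuousOn.mono (closedBall_subset_ball (hr1 k))).preimage_isClosed_of_isClosed
        isClosed_closedBall hK.isClosed) fun ζ hζ => hζ.1
  · have h1 : δ 0 = δ₀ := by simp [hδdef, hu₀]
    have h2 : F 0 = f := by simp [hFdef, hu₀]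
    have h3 : r₁ ≤ r 0 := by
      simpa [hrdef, hu₀] using (le_max_left r₁ 0).trans hstage₀.radius_ge
    have h4 := hgF 0 ζ (hζ.trans h3)
    rw [show (u 0).2.2 = δ₀ from h1, show (u 0).1 = f from h2] at h4
    linarith
  · refine tendsto_nhds_unique (hgt 0 (by simp)) ?_
    exact tendsto_const_nhds.congr fun k => (hF0 k).1.symm
  · refine tendsto_nhds_unique hgd ?_
    exact tendsto_const_nhds.congr fun k => (hF0 k).2.symm

end

/-- Paper's Theorem 2 for domains in `ℂⁿ`: a continuous disc, holomorphic
inside, with boundary above level `M` of the exhaustion function (whose Levi form has at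
least 2 positive eigenvalues on `{ρ > M}`) can be replaced by a proper holomorphic disc,
close to the original on `{|ζ| < r}` with respect to a given complete metric `d` on `X`
inducing the subspace topology, with the same center and proportional derivative there. -/
theorem proper_disc_approximation
    (n : ℕ) (hn : 2 ≤ n)
    (X : Set (EuclideanSpace ℂ (Fin n))) (hX : IsOpen X)
    (ρ : EuclideanSpace ℂ (Fin n) → ℝ)
    (hρ_smooth : ContDiffOn ℝ (⊤ : ℕ∞) ρ X)
    (hρ_exh : ∀ c : ℝ, IsCompact {z ∈ X | ρ z ≤ c})
    (M : ℝ)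
    (hLevi : ∀ z ∈ X, M < ρ z → ∃ V : Submodule ℂ (EuclideanSpace ℂ (Fin n)),
      Module.finrank ℂ V = 2 ∧ ∀ w ∈ V, w ≠ 0 →
        0 < fderiv ℝ (fderiv ℝ ρ) z w w
            + fderiv ℝ (fderiv ℝ ρ) z (Complex.I • w) (Complex.I • w))
    -- `d` is a metric on `X` …
    (d : EuclideanSpace ℂ (Fin n) → EuclideanSpace ℂ (Fin n) → ℝ)
    (hd_symm : ∀ x ∈ X, ∀ y ∈ X, d x y = d y x)
    (hd_eq : ∀ x ∈ X, ∀ y ∈ X, (d x y = 0 ↔ x = y))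
    (hd_tri : ∀ x ∈ X, ∀ y ∈ X, ∀ z ∈ X, d x z ≤ d x y + d y z)
    -- … inducing the subspace topology of `X ⊆ ℂⁿ` …
    (hd_top₁ : ∀ x ∈ X, ∀ ε > (0 : ℝ), ∃ δ > (0 : ℝ),
      ∀ y ∈ X, dist x y < δ → d x y < ε)
    (hd_top₂ : ∀ x ∈ X, ∀ ε > (0 : ℝ), ∃ δ > (0 : ℝ),
      ∀ y ∈ X, d x y < δ → dist x y < ε)
    -- … which is complete.
    (hd_complete : ∀ u : ℕ → EuclideanSpace ℂ (Fin n), (∀ k, u k ∈ X) →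
      (∀ ε > (0 : ℝ), ∃ N : ℕ, ∀ m ≥ N, ∀ k ≥ N, d (u m) (u k) < ε) →
      ∃ x ∈ X, ∀ ε > (0 : ℝ), ∃ N : ℕ, ∀ k ≥ N, d (u k) x < ε)
    (ε r : ℝ) (hε : 0 < ε) (hr0 : 0 < r) (hr1 : r < 1)
    (f : ℂ → EuclideanSpace ℂ (Fin n))
    (hf_cont : ContinuousOn f (closedBall (0 : ℂ) 1))
    (hf_hol : DifferentiableOn ℂ f (ball (0 : ℂ) 1))
    (hf_mem : ∀ ζ ∈ closedBall (0 : ℂ) 1, f ζ ∈ X)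
    (hf_bd : ∀ ζ ∈ sphere (0 : ℂ) 1, M < ρ (f ζ)) :
    ∃ (g : ℂ → EuclideanSpace ℂ (Fin n)) (lam : ℝ),
      0 < lam ∧
      DifferentiableOn ℂ g (ball (0 : ℂ) 1) ∧
      (∀ ζ ∈ ball (0 : ℂ) 1, g ζ ∈ X) ∧
      (∀ K : Set (EuclideanSpace ℂ (Fin n)), K ⊆ X → IsCompact K →
        IsCompact {ζ ∈ ball (0 : ℂ) 1 | g ζ ∈ K}) ∧
      (∀ ζ ∈ ball (0 : ℂ) r, d (g ζ) (f ζ) < ε) ∧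
      g 0 = f 0 ∧ deriv g 0 = lam • deriv f 0 := by
  have hf : IsDisc X f := ⟨hf_cont, hf_hol, hf_mem⟩
  obtain ⟨η, hη, hηd⟩ := exists_uniform_metric_close
    ((isCompact_closedBall (0 : ℂ) 1).image_of_continuousOn hf_cont)
    (Set.image_subset_iff.2 hf_mem) hd_symm hd_tri hd_top₁ hε
  obtain ⟨g, hg, hgX, hproper, hclose, hg0, hgd⟩ := exists_proper_disc hX hρ_smooth hρ_exh hLevi hf
    (fun ζ hζ => hf_bd ζ (by simpa using hζ)) hr1 hη
  refine ⟨g, 1, one_pos, hg, hgX, hproper, fun ζ hζ => ?_, hg0, by rw [one_smul, hgd]⟩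
  have hζ1 : ζ ∈ ball (0 : ℂ) 1 := ball_subset_ball hr1.le hζ
  exact hηd _ ⟨ζ, ball_subset_closedBall hζ1, rfl⟩ _ (hgX ζ hζ1)
    (hclose ζ (mem_ball_zero_iff.1 hζ).le)
end

section
/- Let n ≥ 2 and let X ⊆ ℂ^n be an open set, with d the Euclidean distance on ℂ^n. Let Ω be an open set whose closure is compact and contained in X, and let Ω₀ be an open set whose closure is compact and contained in Ω. Let f be a holomorphic map from an open neighborhood of 𝔻̄ into X. Let K be a compact subset of X and r with 0 < r < 1 be such that K ∩ Ω = ∅ and K ∩ f(𝔻̄ \ r𝔻) = ∅. Assume H : b𝔻 × 𝔻̄ → X is a continuous map such that: (i) for each ζ ∈ b𝔻 the map η ↦ H(ζ, η) is holomorphic on 𝔻; (ii) H(ζ, 0) = f(ζ) for all ζ ∈ b𝔻; (iii) if ζ ∈ b𝔻 and f(ζ) ∉ Ω₀ then H(ζ, η) = f(ζ) for all η ∈ 𝔻̄; (iv) if ζ ∈ b𝔻 and f(ζ) ∈ Ω₀ then H(ζ, η) ∈ Ω for all η ∈ 𝔻̄. Then for every ε > 0 there is a continuous map g : 𝔻̄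 → X, holomorphic on 𝔻, such that: (i') for every ζ ∈ b𝔻 the distance from g(ζ) to the set H({ζ} × b𝔻) is less than ε; (ii') d(g(ζ), f(ζ)) < ε for all |ζ| ≤ r; (iii') g(𝔻̄ \ r𝔻) ∩ K = ∅; (iv') g(0) = f(0); (v') g′(0) = R·f′(0) for some R with r < R < 1. -/
open Metric

/-- Continuous functions on the unit circle are uniformly approximated by quotients
`p ζ / ζ ^ m` with `p` entire, and the exponent `m` can be taken arbitrarily large. -/
lemma exists_entire_div_pow_approx {φ : ℂ → ℂ} (hφ : ContinuousOn φ (sphere (0 : ℂ) 1))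
    {e : ℝ} (he : 0 < e) :
    ∃ m₀ : ℕ, ∀ m ≥ m₀, ∃ p : ℂ → ℂ, Differentiable ℂ p ∧
      ∀ ζ ∈ sphere (0 : ℂ) 1, ‖(ζ ^ m)⁻¹ * p ζ - φ ζ‖ < e := by
  let S := sphere (0 : ℂ) 1
  have hne : ∀ x : S, (x : ℂ) ≠ 0 := fun x => ne_zero_of_mem_unit_sphere x
  let L : C(S, ℂ) → Prop := fun u =>
    ∃ (m : ℕ) (p : ℂ → ℂ), Differentiable ℂ p ∧ ∀ x : S, u x = ((x : ℂ) ^ m)⁻¹ * p x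
  have hL_add : ∀ u v, L u → L v → L (u + v) := by
    rintro u v ⟨m, p, hp, hu⟩ ⟨k, q, hq, hv⟩
    refine ⟨m + k, fun z => z ^ k * p z + z ^ m * q z, by fun_prop, fun x => ?_⟩
    have := hne x
    simp only [ContinuousMap.add_apply, hu, hv, pow_add]
    field_simp
  have hL_mul : ∀ u v, L u → L v → L (u * v) := by
    rintro u v ⟨m, p, hp, hu⟩ ⟨k, q, hq, hv⟩
    refine ⟨m + k, fun z => p z * q z, by fun_prop, fun x => ?_⟩
    have := hne x
    simp only [ContinuousMap.mul_apply, hu, hv, pow_add]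
    field_simp
  have hL_star : ∀ u ∈ (polynomialFunctions S).starClosure, L u ∧ L (star u) := by
    intro u hu
    rw [polynomialFunctions.starClosure_eq_adjoin_X] at hu
    induction hu using StarAlgebra.adjoin_induction with
    | mem u hu =>
      obtain rfl := Set.mem_singleton_iff.1 hu
      refine ⟨⟨0, id, differentiable_id, fun x => by simp⟩, 1, fun _ => 1, by fun_prop, fun x => ?_⟩
      have hx : ‖(x : ℂ)‖ = 1 := by simp
      simp [Complex.inv_eq_conj hx]
    | algebraMap c =>
      exact ⟨⟨0, fun _ => c, by fun_prop, fun x => by simp⟩,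
        0, fun _ => star c, by fun_prop, fun x => by simp⟩
    | add u v _ _ hu hv => exact ⟨hL_add _ _ hu.1 hv.1, star_add u v ▸ hL_add _ _ hu.2 hv.2⟩
    | mul u v _ _ hu hv => exact ⟨hL_mul _ _ hu.1 hv.1, star_mul u v ▸ hL_mul _ _ hv.2 hu.2⟩
    | star u _ hu => exact ⟨hu.2, (star_star u).symm ▸ hu.1⟩
  let φ' : C(S, ℂ) := ⟨S.domRestrict φ, hφ.domRestrict⟩
  have hmem : φ' ∈ closure ((polynomialFunctions S).starClosure : Set C(S, ℂ)) := by
    rw [← StarSubalgebra.topologicalClosure_coe,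
      polynomialFunctions.starClosure_topologicalClosure]
    trivial
  obtain ⟨u, hu, hdist⟩ := Metric.mem_closure_iff.1 hmem e he
  obtain ⟨m₀, p, hp, hup⟩ := (hL_star u hu).1
  refine ⟨m₀, fun m hm => ⟨fun z => z ^ (m - m₀) * p z, by fun_prop, fun ζ hζ => ?_⟩⟩
  have h := (ContinuousMap.dist_apply_le_dist (f := φ') (g := u) ⟨ζ, hζ⟩).trans_lt hdist
  have hζ0 := hne ⟨ζ, hζ⟩
  obtain ⟨k, rfl⟩ := Nat.exists_eq_add_of_le hm
  have hz : (ζ ^ (m₀ + k))⁻¹ * (ζ ^ k * p ζ) = (ζ ^ m₀)⁻¹ * p ζ := by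
    dsimp only at hζ0
    rw [pow_add]
    field_simp
  rw [Nat.add_sub_cancel_left, hz, ← dist_eq_norm, dist_comm]
  rw [hup] at h
  exact h

/-- A finite continuous partition of unity on a compact set of a metric space whose members are
supported in balls of radius `δ` with centers in the set. -/
lemma IsCompact.exists_partition_small {α : Type*} [PseudoMetricSpace α] {S : Set α}
    (hS : IsCompact S) {δ : ℝ} (hδ : 0 < δ) :
    ∃ (t : Finset α) (φ : α → α → ℝ), (∀ a ∈ t, a ∈ S) ∧ (∀ a, ContinuousOn (φ a) S) ∧
      (∀ a x, 0 ≤ φ a x) ∧ (∀ a x, φ a x ≠ 0 → dist x a < δ) ∧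
      ∀ x ∈ S, ∑ a ∈ t, φ a x = 1 := by
  obtain ⟨t, htS, htf, hcov⟩ := hS.finite_cover_balls hδ
  lift t to Finset α using htf
  let T : α → α → ℝ := fun a x => max 0 (δ - dist x a)
  have hT0 : ∀ a x, 0 ≤ T a x := fun a x => le_max_left _ _
  have hsum : ∀ x ∈ S, 0 < ∑ a ∈ t, T a x := fun x hx => by
    obtain ⟨a, ha, hxa⟩ := Set.mem_iUnion₂.1 (hcov hx)
    exact Finset.sum_pos' (fun a _ => hT0 a x)
      ⟨a, ha, lt_max_of_lt_right (sub_pos.2 (mem_ball.1 hxa))⟩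
  refine ⟨t, fun a x => T a x / ∑ b ∈ t, T b x, fun a ha => htS ha, fun a => ?_,
    fun a x => div_nonneg (hT0 a x) (Finset.sum_nonneg fun b _ => hT0 b x), fun a x h => ?_,
    fun x hx => ?_⟩
  · exact ContinuousOn.div (by fun_prop) (by fun_prop) fun x hx => (hsum x hx).ne'
  · by_contra! hle
    exact h (by simp [T, max_eq_left (sub_nonpos.2 hle)])
  · rw [← Finset.sum_div, div_self (hsum x hx).ne']

/-- A continuous family, parametrized by the unit circle, of discs vanishing at the origin is
uniformly approximated by `η • Q (ζ, η) / ζ ^ m` with `Q` holomorphic. -/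
lemma exists_holomorphic_div_pow_approx {E : Type*} [NormedAddCommGroup E] [NormedSpace ℂ E]
    [CompleteSpace E] {h : ℂ → ℂ → E}
    (hc : ContinuousOn (fun p : ℂ × ℂ => h p.1 p.2)
      (sphere (0 : ℂ) 1 ×ˢ closedBall (0 : ℂ) 1))
    (hd : ∀ ζ ∈ sphere (0 : ℂ) 1, DifferentiableOn ℂ (h ζ) (ball (0 : ℂ) 1))
    (h0 : ∀ ζ ∈ sphere (0 : ℂ) 1, h ζ 0 = 0) {δ : ℝ} (hδ : 0 < δ) :
    ∃ (m : ℕ) (Q : ℂ × ℂ → E), ContinuousOn Q (Set.univ ×ˢ closedBall (0 : ℂ) 1) ∧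
      DifferentiableOn ℂ Q (Set.univ ×ˢ ball (0 : ℂ) 1) ∧
      ∀ ζ ∈ sphere (0 : ℂ) 1, ∀ η ∈ closedBall (0 : ℂ) 1,
        ‖(ζ ^ m)⁻¹ • η • Q (ζ, η) - h ζ η‖ < δ := by
  have hcpt := (isCompact_sphere (0 : ℂ) 1).prod (isCompact_closedBall (0 : ℂ) 1)
  obtain ⟨B, hB⟩ := hcpt.exists_bound_of_continuousOn hc
  have hB0 : 0 ≤ B := (norm_nonneg _).trans (hB (1, 0) (by simp))
  obtain ⟨τ, hτ, hunif⟩ := Metric.uniformContinuousOn_iff.1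
    (hcpt.uniformContinuousOn_of_continuous hc) (δ / 2) (half_pos hδ)
  obtain ⟨t, φ, htS, hφc, hφ0, hφs, hφ1⟩ := (isCompact_sphere (0 : ℂ) 1).exists_partition_small hτ
  set e : ℝ := δ / 2 / (t.card * B + 1)
  have hden : 0 < t.card * B + 1 := by positivity
  have he : 0 < e := by positivity
  have happ := fun a => exists_entire_div_pow_approx
    (φ := fun x => (φ a x : ℂ)) (Complex.continuous_ofReal.comp_continuousOn (hφc a)) he
  choose m₀ hm₀ using happ
  let m := t.sup m₀
  have hp : ∀ a ∈ t, ∃ p : ℂ → ℂ, Differentiable ℂ p ∧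
      ∀ ζ ∈ sphere (0 : ℂ) 1, ‖(ζ ^ m)⁻¹ * p ζ - φ a ζ‖ < e :=
    fun a ha => hm₀ a m (Finset.le_sup ha)
  choose! p hpd hpe using hp
  have hball : ball (0 : ℂ) 1 ∈ nhds (0 : ℂ) := ball_mem_nhds _ one_pos
  have hcball : closedBall (0 : ℂ) 1 ∈ nhds (0 : ℂ) := closedBall_mem_nhds _ one_pos
  refine ⟨m, fun z => ∑ a ∈ t, p a z.1 • dslope (h a) 0 z.2, ?_, ?_, fun ζ hζ η hη => ?_⟩
  · refine continuousOn_finsetSum _ fun a ha => ?_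
    have h1 : ContinuousOn (dslope (h a) 0) (closedBall 0 1) :=
      (continuousOn_dslope hcball).2
        ⟨hc.comp (f := fun η => (a, η)) (by fun_prop) fun η hη => ⟨htS a ha, hη⟩,
          (hd a (htS a ha)).differentiableAt hball⟩
    exact ((hpd a ha).continuous.comp continuous_fst).continuousOn.smul
      (h1.comp continuousOn_snd fun z hz => hz.2)
  · refine DifferentiableOn.fun_sum fun a ha => ?_
    have h1 : DifferentiableOn ℂ (dslope (h a) 0) (ball 0 1) :=
      (Complex.differentiableOn_dslope hball).2 (hd a (htS a ha))
    exact ((hpd a ha).comp differentiable_fst).differentiableOn.smul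
      (h1.comp differentiableOn_snd fun z hz => hz.2)
  · have hslope : ∀ a ∈ t, η • dslope (h a) 0 η = h a η := fun a ha => by
      simpa [h0 a (htS a ha)] using sub_smul_dslope (h a) 0 η
    have hφ1' : ∑ a ∈ t, (φ a ζ : ℂ) = 1 := by exact_mod_cast hφ1 ζ hζ
    have hsplit : (ζ ^ m)⁻¹ • η • ∑ a ∈ t, p a ζ • dslope (h a) 0 η - h ζ η =
        ∑ a ∈ t, ((ζ ^ m)⁻¹ * p a ζ - φ a ζ) • h a η +
          ∑ a ∈ t, (φ a ζ : ℂ) • (h a η - h ζ η) := by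
      simp only [sub_smul, smul_sub, Finset.sum_sub_distrib, ← Finset.sum_smul, hφ1', one_smul]
      rw [sub_add_sub_cancel, Finset.smul_sum, Finset.smul_sum]
      congr 1
      refine Finset.sum_congr rfl fun a ha => ?_
      rw [smul_comm η, hslope a ha, smul_smul]
    have h1 : ‖∑ a ∈ t, ((ζ ^ m)⁻¹ * p a ζ - φ a ζ) • h a η‖ < δ / 2 := by
      calc _ ≤ ∑ a ∈ t, e * B := norm_sum_le_of_le _ fun a ha => by
              rw [norm_smul]
              exact mul_le_mul (hpe a ha ζ hζ).le (hB (a, η) ⟨htS a ha, hη⟩) (norm_nonneg _) he.le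
        _ = e * (t.card * B) := by rw [Finset.sum_const, nsmul_eq_mul]; ring
        _ < e * (t.card * B + 1) := by gcongr; linarith
        _ = δ / 2 := div_mul_cancel₀ _ hden.ne'
    have h2 : ‖∑ a ∈ t, (φ a ζ : ℂ) • (h a η - h ζ η)‖ ≤ δ / 2 := by
      calc _ ≤ ∑ a ∈ t, φ a ζ * (δ / 2) := norm_sum_le_of_le _ fun a ha => by
              rw [norm_smul, Complex.norm_real, Real.norm_of_nonneg (hφ0 a ζ)]
              rcases eq_or_ne (φ a ζ) 0 with hz | hz
              · simp [hz]
              · refine mul_le_mul_of_nonneg_left ?_ (hφ0 a ζ)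
                rw [← dist_eq_norm]
                refine (hunif (a, η) ⟨htS a ha, hη⟩ (ζ, η) ⟨hζ, hη⟩ ?_).le
                simpa [Prod.dist_eq, dist_comm a ζ, hτ] using hφs a ζ hz
        _ = δ / 2 := by rw [← Finset.sum_mul, hφ1 ζ hζ, one_mul]
    rw [hsplit]
    exact (norm_add_le _ _).trans_lt (by linarith)

/-- the paper's main Lemma 2.2, for domains `X ⊆ ℂⁿ` with the Euclidean
metric. Given a holomorphic disc `f` in `X` defined near the closed disc and a continuous
family `H` of holomorphic discs attached to the boundary of `f`, nonconstant only over
`Ω₀` and staying in the coordinate neighborhood `Ω`, one can find a new disc `g` whose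
boundary is `ε`-close to the boundaries of the attached discs, which is `ε`-close to `f`
on `{|ζ| ≤ r}`, avoids `K` on `{r ≤ |ζ| ≤ 1}`, and has the same center with proportional
derivative there. -/
theorem main_lemma_lift
    (n : ℕ) (hn : 2 ≤ n)
    (X : Set (EuclideanSpace ℂ (Fin n))) (hX : IsOpen X)
    (Ω : Set (EuclideanSpace ℂ (Fin n))) (hΩ : IsOpen Ω)
    (hΩ_cpt : IsCompact (closure Ω)) (hΩX : closure Ω ⊆ X)
    (Ω₀ : Set (EuclideanSpace ℂ (Fin n))) (hΩ₀ : IsOpen Ω₀)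
    (hΩ₀_cpt : IsCompact (closure Ω₀)) (hΩ₀Ω : closure Ω₀ ⊆ Ω)
    (f : ℂ → EuclideanSpace ℂ (Fin n))
    (W : Set ℂ) (hW : IsOpen W) (hWD : closedBall (0 : ℂ) 1 ⊆ W)
    (hf_hol : DifferentiableOn ℂ f W)
    (hf_mem : ∀ ζ ∈ W, f ζ ∈ X)
    (K : Set (EuclideanSpace ℂ (Fin n))) (hK : IsCompact K) (hKX : K ⊆ X)
    (r : ℝ) (hr0 : 0 < r) (hr1 : r < 1)
    (hKΩ : K ∩ Ω = ∅)
    (hKf : K ∩ f '' (closedBall (0 : ℂ) 1 \ ball (0 : ℂ) r) = ∅)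
    (H : ℂ → ℂ → EuclideanSpace ℂ (Fin n))
    (hH_cont : ContinuousOn (fun p : ℂ × ℂ => H p.1 p.2)
      (sphere (0 : ℂ) 1 ×ˢ closedBall (0 : ℂ) 1))
    (hH_mem : ∀ ζ ∈ sphere (0 : ℂ) 1, ∀ η ∈ closedBall (0 : ℂ) 1, H ζ η ∈ X)
    (hH_hol : ∀ ζ ∈ sphere (0 : ℂ) 1, DifferentiableOn ℂ (H ζ) (ball (0 : ℂ) 1))
    (hH_cen : ∀ ζ ∈ sphere (0 : ℂ) 1, H ζ 0 = f ζ)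
    (hH_out : ∀ ζ ∈ sphere (0 : ℂ) 1, f ζ ∉ Ω₀ →
      ∀ η ∈ closedBall (0 : ℂ) 1, H ζ η = f ζ)
    (hH_in : ∀ ζ ∈ sphere (0 : ℂ) 1, f ζ ∈ Ω₀ →
      ∀ η ∈ closedBall (0 : ℂ) 1, H ζ η ∈ Ω)
    (ε : ℝ) (hε : 0 < ε) :
    ∃ (g : ℂ → EuclideanSpace ℂ (Fin n)) (R : ℝ),
      ContinuousOn g (closedBall (0 : ℂ) 1) ∧
      DifferentiableOn ℂ g (ball (0 : ℂ) 1) ∧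
      (∀ ζ ∈ closedBall (0 : ℂ) 1, g ζ ∈ X) ∧
      (∀ ζ ∈ sphere (0 : ℂ) 1, infDist (g ζ) (H ζ '' sphere (0 : ℂ) 1) < ε) ∧
      (∀ ζ ∈ closedBall (0 : ℂ) r, dist (g ζ) (f ζ) < ε) ∧
      (g '' (closedBall (0 : ℂ) 1 \ ball (0 : ℂ) r)) ∩ K = ∅ ∧
      g 0 = f 0 ∧
      r < R ∧ R < 1 ∧ deriv g 0 = R • deriv f 0 := by
  let D := closedBall (0 : ℂ) 1
  have hfc : ContinuousOn f D := hf_hol.continuousOn.mono hWD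
  have hDcpt : IsCompact D := isCompact_closedBall 0 1
  have hcpt := (isCompact_sphere (0 : ℂ) 1).prod hDcpt
  have hXK : IsOpen (X \ K) := hX.sdiff hK.isClosed
  -- A common radius of the neighborhoods in which `g` may move.
  obtain ⟨δ₁, hδ₁, hthick₁⟩ := (hcpt.image_of_continuousOn hH_cont).exists_thickening_subset_open
    hXK (by
      rintro _ ⟨⟨ζ, η⟩, ⟨hζ, hη⟩, rfl⟩
      refine ⟨hH_mem ζ hζ η hη, fun hKmem => ?_⟩
      dsimp only at hζ hη hKmem
      by_cases hin : f ζ ∈ Ω₀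
      · exact Set.eq_empty_iff_forall_notMem.1 hKΩ _ ⟨hKmem, hH_in ζ hζ hin η hη⟩
      · rw [hH_out ζ hζ hin η hη] at hKmem
        refine Set.eq_empty_iff_forall_notMem.1 hKf _
          ⟨hKmem, ζ, ⟨sphere_subset_closedBall hζ, fun hb => ?_⟩, rfl⟩
        rw [mem_sphere] at hζ
        rw [mem_ball] at hb
        linarith)
  obtain ⟨δ₂, hδ₂, hthick₂⟩ := (hDcpt.image_of_continuousOn hfc).exists_thickening_subset_open hX
    (by rintro _ ⟨ζ, hζ, rfl⟩; exact hf_mem ζ (hWD hζ))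
  obtain ⟨δ₃, hδ₃, hthick₃⟩ := ((hDcpt.diff isOpen_ball).image_of_continuousOn
    (hfc.mono Set.sdiff_subset)).exists_thickening_subset_open hXK (by
      rintro _ ⟨ζ, hζ, rfl⟩
      exact ⟨hf_mem ζ (hWD hζ.1),
        fun hKmem => Set.eq_empty_iff_forall_notMem.1 hKf _ ⟨hKmem, ζ, hζ, rfl⟩⟩)
  obtain ⟨δ, hδ, hδε, hδle₁, hδle₂, hδle₃⟩ :
      ∃ δ > 0, δ ≤ ε ∧ δ ≤ δ₁ ∧ δ ≤ δ₂ ∧ δ ≤ δ₃ :=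
    ⟨min (min ε δ₁) (min δ₂ δ₃), by positivity, by simp, by simp, by simp, by simp⟩
  obtain ⟨τ₁, hτ₁, hunif_f⟩ := Metric.uniformContinuousOn_iff.1
    (hDcpt.uniformContinuousOn_of_continuous hfc) (δ / 4) (by positivity)
  obtain ⟨m, Q, hQc, hQd, hQ⟩ := exists_holomorphic_div_pow_approx
    (h := fun ζ η => H ζ η - f ζ)
    (hH_cont.sub (hfc.comp continuousOn_fst fun z hz => sphere_subset_closedBall hz.1))
    (fun ζ hζ => (hH_hol ζ hζ).sub_const (f ζ))
    (fun ζ hζ => sub_eq_zero.2 (hH_cen ζ hζ)) (show 0 < δ / 4 by positivity)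
  let P : ℂ × ℂ → EuclideanSpace ℂ (Fin n) := fun z => (z.1 ^ m)⁻¹ • z.2 • Q z
  have hAcpt : IsCompact ((D \ ball (0 : ℂ) (1 / 2)) ×ˢ D) := (hDcpt.diff isOpen_ball).prod hDcpt
  have hPc : ContinuousOn P ((D \ ball (0 : ℂ) (1 / 2)) ×ˢ D) := by
    have hinv : ContinuousOn (fun z : ℂ × ℂ => (z.1 ^ m)⁻¹) ((D \ ball (0 : ℂ) (1 / 2)) ×ˢ D) :=
      ContinuousOn.inv₀ (by fun_prop) fun z hz =>
        pow_ne_zero m fun h0 => hz.1.2 (by simp [h0])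
    have hQc' : ContinuousOn Q ((D \ ball (0 : ℂ) (1 / 2)) ×ˢ D) :=
      hQc.mono fun z hz => ⟨trivial, hz.2⟩
    exact hinv.smul (continuousOn_snd.smul hQc')
  obtain ⟨τ₂, hτ₂, hunif_P⟩ := Metric.uniformContinuousOn_iff.1
    (hAcpt.uniformContinuousOn_of_continuous hPc) (δ / 4) (by positivity)
  obtain ⟨ρ, hρr, hρ2, hρ1, hρτ₁, hρτ₂⟩ : ∃ ρ : ℝ, r ≤ ρ ∧ 1 / 2 ≤ ρ ∧ ρ < 1 ∧
      1 - ρ < τ₁ / 2 ∧ 1 - ρ < τ₂ := by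
    obtain ⟨ρ, hρ, hρ1⟩ := exists_between
      (show max (max r (1 / 2)) (max (1 - τ₁ / 2) (1 - τ₂)) < 1 by
        simp only [max_lt_iff]; refine ⟨⟨hr1, by norm_num⟩, by linarith, by linarith⟩)
    simp only [max_lt_iff] at hρ
    exact ⟨ρ, hρ.1.1.le, hρ.1.2.le, hρ1, by linarith [hρ.2.1], by linarith [hρ.2.2]⟩
  obtain ⟨R, hRr, hR1, hRτ⟩ : ∃ R : ℝ, r < R ∧ R < 1 ∧ 1 - R < τ₁ / 2 := by
    obtain ⟨R, hR, hR1⟩ := exists_between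
      (show max r (1 - τ₁ / 2) < 1 by simp only [max_lt_iff]; exact ⟨hr1, by linarith⟩)
    simp only [max_lt_iff] at hR
    exact ⟨R, hR.1, hR1, by linarith [hR.2]⟩
  have hR0 : 0 < R := hr0.trans hRr
  obtain ⟨B, hB⟩ := (hDcpt.prod hDcpt).exists_bound_of_continuousOn
    (hQc.mono (Set.prod_mono_left (Set.subset_univ D)))
  have hB0 : 0 ≤ B := (norm_nonneg _).trans (hB (0, 0) (by simp [D]))
  obtain ⟨k, hk2, hkB⟩ : ∃ k : ℕ, 2 ≤ k ∧ ρ ^ k * B < δ / 2 := by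
    have hlim : Filter.Tendsto (fun k : ℕ => ρ ^ k * B) Filter.atTop (nhds 0) := by
      simpa using (tendsto_pow_atTop_nhds_zero_of_lt_one (by linarith) hρ1).mul_const B
    exact ((Filter.eventually_ge_atTop 2).and (hlim.eventually_lt_const (half_pos hδ))).exists
  let u : ℂ → EuclideanSpace ℂ (Fin n) := fun ζ => Q (ζ, ζ ^ (m + k))
  let g : ℂ → EuclideanSpace ℂ (Fin n) := fun ζ => f (R * ζ) + ζ ^ k • u ζ
  have hmk : m + k ≠ 0 := by omega
  have hpow : ∀ ζ ∈ D, ζ ^ (m + k) ∈ D := fun ζ hζ => by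
    simp only [D, mem_closedBall_zero_iff, norm_pow] at hζ ⊢
    exact pow_le_one₀ (norm_nonneg _) hζ
  have hRnorm : ∀ ζ : ℂ, ‖(R : ℂ) * ζ‖ ≤ ‖ζ‖ := fun ζ => by
    rw [norm_mul, Complex.norm_real, Real.norm_of_nonneg hR0.le]
    exact mul_le_of_le_one_left (norm_nonneg _) hR1.le
  have hRD : ∀ ζ ∈ D, (R : ℂ) * ζ ∈ D := fun ζ hζ =>
    mem_closedBall_zero_iff.2 ((hRnorm ζ).trans (mem_closedBall_zero_iff.1 hζ))
  have hRdist : ∀ ζ ∈ D, dist ((R : ℂ) * ζ) ζ < τ₁ / 2 := fun ζ hζ => by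
    have hζ1 : ‖ζ‖ ≤ 1 := mem_closedBall_zero_iff.1 hζ
    rw [dist_comm, dist_eq_norm, show ζ - R * ζ = ((1 - R : ℝ) : ℂ) * ζ by push_cast; ring, norm_mul,
      Complex.norm_real, Real.norm_of_nonneg (by linarith)]
    nlinarith [norm_nonneg ζ]
  have hfdiff : ∀ ζ ∈ D, DifferentiableAt ℂ f ζ := fun ζ hζ =>
    hf_hol.differentiableAt (hW.mem_nhds (hWD hζ))
  have huc : ContinuousOn u D :=
    hQc.comp (f := fun ζ : ℂ => (ζ, ζ ^ (m + k))) (by fun_prop) fun ζ hζ => ⟨trivial, hpow ζ hζ⟩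
  have hud : DifferentiableOn ℂ u (ball 0 1) :=
    hQd.comp (f := fun ζ : ℂ => (ζ, ζ ^ (m + k))) (by fun_prop) fun ζ hζ => ⟨trivial, by
      simp only [mem_ball_zero_iff, norm_pow] at hζ ⊢
      exact pow_lt_one₀ (norm_nonneg _) hζ hmk⟩
  -- Away from the unit circle, `g` is close to `f`.
  have hinner : ∀ ζ, ‖ζ‖ ≤ ρ → dist (g ζ) (f ζ) < δ := fun ζ hζ => by
    have hζD : ζ ∈ D := mem_closedBall_zero_iff.2 (hζ.trans hρ1.le)
    have h1 : dist (f (R * ζ)) (f ζ) < δ / 4 :=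
      hunif_f _ (hRD ζ hζD) _ hζD ((hRdist ζ hζD).trans (by linarith))
    have h2 : ‖ζ ^ k • u ζ‖ < δ / 2 := by
      rw [norm_smul, norm_pow]
      refine lt_of_le_of_lt ?_ hkB
      exact mul_le_mul (pow_le_pow_left₀ (norm_nonneg _) hζ k) (hB _ ⟨hζD, hpow ζ hζD⟩)
        (norm_nonneg _) (by positivity)
    have h3 : dist (g ζ) (f (R * ζ)) < δ / 2 := by simpa [g, dist_eq_norm] using h2
    linarith [dist_triangle (g ζ) (f (R * ζ)) (f ζ)]
  -- Near the unit circle, `g` is close to the radial extension of `H ζ (ζ ^ (m + k))`.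
  have houter : ∀ ζ ∈ D, ρ < ‖ζ‖ →
      dist (g ζ) (H (ζ / ‖ζ‖) (ζ ^ (m + k))) < δ ∧ ζ / ‖ζ‖ ∈ sphere (0 : ℂ) 1 := fun ζ hζ hρζ => by
    have hζ1 : ‖ζ‖ ≤ 1 := mem_closedBall_zero_iff.1 hζ
    have hζpos : 0 < ‖ζ‖ := by linarith
    have hζ0 : ζ ≠ 0 := norm_pos_iff.1 hζpos
    set ω : ℂ := ζ / ‖ζ‖ with hω_def
    have hω : ‖ω‖ = 1 := by simp [hω_def, hζpos.ne']
    have hωS : ω ∈ sphere (0 : ℂ) 1 := mem_sphere_zero_iff_norm.2 hω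
    have hωD : ω ∈ D := sphere_subset_closedBall hωS
    have hdist : dist ζ ω ≤ 1 - ρ := by
      have : ω - ζ = ((1 - ‖ζ‖ : ℝ) : ℂ) * ω := by
        have : (‖ζ‖ : ℂ) ≠ 0 := by exact_mod_cast hζpos.ne'
        rw [hω_def]
        push_cast
        field_simp
      rw [dist_comm, dist_eq_norm, this, norm_mul, hω, Complex.norm_real,
        Real.norm_of_nonneg (by linarith)]
      linarith
    have h1 : dist (f (R * ζ)) (f ω) < δ / 4 := by
      refine hunif_f _ (hRD ζ hζ) _ hωD ?_
      linarith [dist_triangle ((R : ℂ) * ζ) ζ ω, hRdist ζ hζ]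
    have h2 : dist (P (ζ, ζ ^ (m + k))) (P (ω, ζ ^ (m + k))) < δ / 4 := by
      refine hunif_P _ ⟨⟨hζ, ?_⟩, hpow ζ hζ⟩ _ ⟨⟨hωD, ?_⟩, hpow ζ hζ⟩ ?_
      · simp only [mem_ball_zero_iff, not_lt]; linarith
      · simp only [mem_ball_zero_iff, hω]; norm_num
      · simpa [Prod.dist_eq, hτ₂] using hdist.trans_lt hρτ₂
    have h3 : dist (P (ω, ζ ^ (m + k))) (H ω (ζ ^ (m + k)) - f ω) < δ / 4 := by
      rw [dist_eq_norm]
      exact hQ ω hωS _ (hpow ζ hζ)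
    have hg : g ζ = f (R * ζ) + P (ζ, ζ ^ (m + k)) := by
      simp only [g, P, u, smul_smul]
      congr 2
      rw [pow_add]
      field_simp
    refine ⟨?_, hωS⟩
    calc dist (g ζ) (H ω (ζ ^ (m + k)))
        = dist (f (R * ζ) + P (ζ, ζ ^ (m + k))) (f ω + (H ω (ζ ^ (m + k)) - f ω)) := by
          rw [hg, add_sub_cancel]
      _ ≤ dist (f (R * ζ)) (f ω) + dist (P (ζ, ζ ^ (m + k))) (H ω (ζ ^ (m + k)) - f ω) :=
          dist_add_add_le _ _ _ _
      _ < δ := by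
          linarith [dist_triangle (P (ζ, ζ ^ (m + k))) (P (ω, ζ ^ (m + k)))
            (H ω (ζ ^ (m + k)) - f ω)]
  have houter_mem : ∀ ζ ∈ D, ρ < ‖ζ‖ → g ζ ∈ X \ K := fun ζ hζ hρζ => by
    obtain ⟨hd, hS⟩ := houter ζ hζ hρζ
    exact hthick₁ (mem_thickening_iff.2
      ⟨_, ⟨(ζ / ‖ζ‖, ζ ^ (m + k)), ⟨hS, hpow ζ hζ⟩, rfl⟩, hd.trans_le hδle₁⟩)
  have hgderiv : HasDerivAt g (R • deriv f 0) 0 := by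
    have h0D : (0 : ℂ) ∈ D := mem_closedBall_self zero_le_one
    have h1 : HasDerivAt (fun ζ : ℂ => f (R * ζ)) ((R : ℂ) • deriv f 0) 0 := by
      have hf0 : HasDerivAt f (deriv f 0) ((R : ℂ) * 0) := by
        simpa using (hfdiff 0 h0D).hasDerivAt
      exact hf0.scomp (0 : ℂ) (by simpa using (hasDerivAt_id (0 : ℂ)).const_mul (R : ℂ))
    have h2 := (hasDerivAt_pow k (0 : ℂ)).smul
      (hud.differentiableAt (ball_mem_nhds 0 one_pos)).hasDerivAt
    have h3 := h1.add h2
    have hk0 : k ≠ 0 := by omega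
    have hk1 : k - 1 ≠ 0 := by omega
    simp only [zero_pow hk0, zero_pow hk1, mul_zero, zero_smul, add_zero, Complex.coe_smul] at h3
    exact h3
  refine ⟨g, R, ?_, ?_, fun ζ hζ => ?_, fun ζ hζ => ?_, fun ζ hζ => ?_, ?_, ?_, hRr, hR1,
    hgderiv.deriv⟩
  · have h1 : ContinuousOn (fun ζ : ℂ => f (R * ζ)) D :=
      hfc.comp (f := fun ζ : ℂ => (R : ℂ) * ζ) (by fun_prop) hRD
    exact h1.add ((continuous_pow k).continuousOn.smul huc)
  · have h1 : DifferentiableOn ℂ (fun ζ : ℂ => f (R * ζ)) (ball 0 1) := fun ζ hζ =>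
      ((hfdiff _ (hRD ζ (ball_subset_closedBall hζ))).comp (f := fun ζ : ℂ => (R : ℂ) * ζ) ζ
        (by fun_prop)).differentiableWithinAt
    exact h1.add ((differentiable_pow k).differentiableOn.smul hud)
  · rcases le_or_gt ‖ζ‖ ρ with hζρ | hζρ
    · exact hthick₂ (mem_thickening_iff.2 ⟨_, ⟨ζ, hζ, rfl⟩, (hinner ζ hζρ).trans_le hδle₂⟩)
    · exact (houter_mem ζ hζ hζρ).1
  · have hn1 : ‖ζ‖ = 1 := mem_sphere_zero_iff_norm.1 hζ
    have hd := (houter ζ (sphere_subset_closedBall hζ) (by linarith)).1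
    simp only [hn1, Complex.ofReal_one, div_one] at hd
    have hmem : H ζ (ζ ^ (m + k)) ∈ H ζ '' sphere (0 : ℂ) 1 := ⟨ζ ^ (m + k), by simp [hn1], rfl⟩
    exact (infDist_le_dist_of_mem hmem).trans_lt (hd.trans_le hδε)
  · exact (hinner ζ ((mem_closedBall_zero_iff.1 hζ).trans hρr)).trans_le hδε
  · refine Set.eq_empty_iff_forall_notMem.2 ?_
    rintro _ ⟨⟨ζ, hζ, rfl⟩, hgK⟩
    rcases le_or_gt ‖ζ‖ ρ with hζρ | hζρ
    · exact (hthick₃ (mem_thickening_iff.2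
        ⟨_, ⟨ζ, hζ, rfl⟩, (hinner ζ hζρ).trans_le hδle₃⟩)).2 hgK
    · exact (houter_mem ζ hζ.1 hζρ).2 hgK
  · simp [g, show k ≠ 0 by omega]
end
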